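/- arXiv:1206.2233 — 10 statements merged into one kernel-verified Lean document; each statement's English description precedes it below -/
import Mathlib

section
/- Let M be a finitely generated FI-module over ℂ. Then there exist an integer N ≥ 0 and an exact sequence of FI-modules ⋯ → P_2 → P_1 → P_0 → M → 0 in which each P_i is a finitely generated projective object of the category of FI-modules that is generated in degrees ≤ N + i, i.e. P_i has a finite generating set consisting of elements m_j ∈ P_i(S_j) with |S_j| ≤ N + i. (In particular, every finitely generated FI-module has finite Castelnuovo–Mumford regularity: only finitely many linear strands of its minimal projective resolution are nonzero.) -/
open CategoryTheory

structure FIObj where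
  α : Type
  fin : Fintype α

instance (S : FIObj) : Fintype S.α := S.fin

def FIObj.of (α : Type) [Fintype α] : FIObj := ⟨α, inferInstance⟩

instance : Category FIObj where
  Hom S T := {f : S.α → T.α // Function.Injective f}
  id S := ⟨id, Function.injective_id⟩
  comp f g := ⟨g.1 ∘ f.1, g.2.comp f.2⟩

/-- FI-modules over ℂ: functors from FI to ℂ-vector spaces. -/
abbrev FIMod := FIObj ⥤ ModuleCat.{0} ℂ

/-- A sub-FI-module. -/
structure FISub (M : FIMod) where
  carrier : ∀ S : FIObj, Submodule ℂ (M.obj S)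
  map_mem : ∀ {S T : FIObj} (f : S ⟶ T) (x : M.obj S), x ∈ carrier S → M.map f x ∈ carrier T

/-- A finitely generated FI-module. -/
def FIMod.FG (M : FIMod) : Prop :=
  ∃ (k : ℕ) (S : Fin k → FIObj) (m : ∀ i, M.obj (S i)),
    ∀ N : FISub M, (∀ i, m i ∈ N.carrier (S i)) → ∀ T, N.carrier T = ⊤
/-- Finite generation by generators lying in sets of cardinality at most `b`. -/
def FIMod.FGBound (M : FIMod) (b : ℕ) : Prop :=
  ∃ (k : ℕ) (S : Fin k → FIObj) (m : ∀ i, M.obj (S i)),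
    (∀ i, Fintype.card (S i).α ≤ b) ∧
    ∀ N : FISub M, (∀ i, m i ∈ N.carrier (S i)) → ∀ T, N.carrier T = ⊤

/-!
For a finite subset `V` of a linearly ordered set, the values of `M` at the subsets of `V` form a
Koszul complex, placed in degree `p` on the subsets of cardinality `p`; `M` has regularity at most
`c` if all these complexes are exact in degrees above `c`. This bounds the generation degree of `M`
by `c`, and free modules generated in degrees `≤ c` have the property, so the kernel of a free cover
of `M` generated in degrees `≤ c` has regularity at most `c + 1`, and the resolution can be built
step by step.

That some `c` exists is proved by induction on the generation degree. If `M` is torsion-free, it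
embeds into its shift `S ↦ M (S ⊔ {∗})`, the cokernel (the derivative of `M`) is generated in lower
degrees, and the Koszul complex on `V ⊔ {v}` is a mapping cone which reduces exactness for `M` to
exactness for the derivative. In general, finite regularity of `M / torsion` bounds the degrees in
which the torsion submodule is generated, so that the latter vanishes in large degrees.
-/

/-! ### Koszul complexes -/

namespace FIObj

theorem hom_ext {S T : FIObj} {f g : S ⟶ T} (h : ∀ a, f.1 a = g.1 a) : f = g :=
  Subtype.ext (funext h)

theorem isIso_of_bijective {S T : FIObj} (f : S ⟶ T) (hf : Function.Bijective f.1) : IsIso f := by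
  let e := Equiv.ofBijective f.1 hf
  exact ⟨⟨e.symm, e.symm.injective⟩, hom_ext e.symm_apply_apply, hom_ext e.apply_symm_apply⟩

instance (S T : FIObj) : Finite (S ⟶ T) :=
  inferInstanceAs (Finite {f : S.α → T.α // Function.Injective f})

section Inclusion

variable {A : Type} {R S T : Finset A}

/-- The morphism of FI given by an inclusion of finite subsets of a fixed type. -/
def inclusion (h : R ⊆ S) : FIObj.of R ⟶ FIObj.of S :=
  ⟨Set.inclusion h, Set.inclusion_injective h⟩

theorem inclusion_comp_inclusion (h : R ⊆ S) (h' : S ⊆ T) :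
    inclusion h ≫ inclusion h' = inclusion (h.trans h') :=
  rfl

end Inclusion

end FIObj

namespace FIMod

theorem map_bijective_of_bijective (M : FIMod) {S T : FIObj} (f : S ⟶ T)
    (hf : Function.Bijective f.1) : Function.Bijective (M.map f) :=
  have := FIObj.isIso_of_bijective f hf
  ConcreteCategory.bijective_of_isIso (M.map f)

section Cochain

variable {M N : FIMod} {A : Type}

/-- The cochains of the Koszul complex of `M` on the finite subsets of `A`, in all degrees at once:
the component of a cochain in degree `p` is its restriction to the subsets of cardinality `p`. -/
abbrev KoszulCochain (M : FIMod) (A : Type) : Type :=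
  ∀ S : Finset A, M.obj (FIObj.of S)

theorem map_inclusion_congr {R R' S : Finset A} (x : M.KoszulCochain A) (hR : R = R')
    (h : R ⊆ S) (h' : R' ⊆ S) :
    M.map (FIObj.inclusion h) (x R) = M.map (FIObj.inclusion h') (x R') := by
  subst hR; rfl

theorem map_inclusion_comp {R S T : Finset A} (h : R ⊆ S) (h' : S ⊆ T) (z : M.obj (FIObj.of R)) :
    M.map (FIObj.inclusion h') (M.map (FIObj.inclusion h) z) =
      M.map (FIObj.inclusion (h.trans h')) z := by
  rw [← Functor.map_comp_apply, FIObj.inclusion_comp_inclusion]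

/-- The map on cochains induced by a morphism of FI-modules. -/
def mapCochain (u : M ⟶ N) (x : M.KoszulCochain A) : N.KoszulCochain A :=
  fun S ↦ u.app _ (x S)

theorem exists_mapCochain_eq {v : M ⟶ N} (hv : ∀ S, Function.Surjective (v.app S))
    (z : N.KoszulCochain A) :
    ∃ y : M.KoszulCochain A, mapCochain v y = z :=
  ⟨fun S ↦ (hv _ (z S)).choose, funext fun S ↦ (hv _ (z S)).choose_spec⟩

end Cochain

section Koszul

variable {A : Type} [LinearOrder A]

/-- The sign `(-1) ^ #{s ∈ S | s < t}` with which deleting `t` from `S` enters the Koszul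
differential. -/
noncomputable def koszulSign (t : A) (S : Finset A) : ℂ :=
  ∏ s ∈ S, if s < t then -1 else 1

theorem koszulSign_mul_self (t : A) (S : Finset A) : koszulSign t S * koszulSign t S = 1 := by
  rw [koszulSign, ← Finset.prod_mul_distrib]
  exact Finset.prod_eq_one fun s _ ↦ by split_ifs <;> simp

theorem koszulSign_insert {s : A} {S : Finset A} (hs : s ∉ S) (t : A) :
    koszulSign t (insert s S) = (if s < t then -1 else 1) * koszulSign t S :=
  Finset.prod_insert hs

theorem koszulSign_insert_of_le {s t : A} {S : Finset A} (hs : s ∉ S) (hst : t ≤ s) :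
    koszulSign t (insert s S) = koszulSign t S := by
  rw [koszulSign_insert hs, if_neg hst.not_gt, one_mul]

theorem koszulSign_erase {s : A} {S : Finset A} (hs : s ∈ S) (t : A) :
    koszulSign t S = (if s < t then -1 else 1) * koszulSign t (S.erase s) :=
  (Finset.mul_prod_erase S _ hs).symm

theorem koszulSign_mul_koszulSign_erase {s t : A} {S : Finset A} (hs : s ∈ S) (ht : t ∈ S)
    (hst : s ≠ t) :
    koszulSign t S * koszulSign s (S.erase t) = -(koszulSign s S * koszulSign t (S.erase s)) := by
  rw [koszulSign_erase hs t, koszulSign_erase ht s]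
  rcases hst.lt_or_gt with h | h <;> rw [if_pos h, if_neg h.not_gt] <;> ring

/-- The Koszul differential of `M`: the value at `S` is the alternating sum, over `t ∈ S`, of the
values at `S \ {t}` pushed forward to `S`. -/
noncomputable def koszulD (M : FIMod) : M.KoszulCochain A →ₗ[ℂ] M.KoszulCochain A :=
  LinearMap.pi fun S ↦ ∑ t ∈ S, koszulSign t S •
    (M.map (FIObj.inclusion (S.erase_subset t))).hom ∘ₗ LinearMap.proj (S.erase t)

/-- Exactness in degree `p` of the Koszul complex of `M` on the subsets of `V`. The cohomology in
degree `p` is the part of the FI-homology of `M` in homological degree `#V - p` supported on `V`.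
Only the values of `x` in degree `p` and of `y` in degree `p - 1` matter, so no support condition is
imposed. -/
def KoszulExactAt (M : FIMod) (V : Finset A) (p : ℕ) : Prop :=
  ∀ x : M.KoszulCochain A, (∀ S ⊆ V, S.card = p + 1 → M.koszulD x S = 0) →
    ∃ y : M.KoszulCochain A, ∀ S ⊆ V, S.card = p → M.koszulD y S = x S

variable {M N : FIMod}

theorem koszulD_apply (x : M.KoszulCochain A) (S : Finset A) :
    M.koszulD x S = ∑ t ∈ S, koszulSign t S •
      M.map (FIObj.inclusion (S.erase_subset t)) (x (S.erase t)) := by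
  simp [koszulD]

theorem koszulD_congr {x y : M.KoszulCochain A} {S : Finset A}
    (h : ∀ t ∈ S, x (S.erase t) = y (S.erase t)) : M.koszulD x S = M.koszulD y S := by
  simp only [koszulD_apply]
  exact Finset.sum_congr rfl fun t ht ↦ by rw [h t ht]

theorem koszulD_koszulD (x : M.KoszulCochain A) : M.koszulD (M.koszulD x) = 0 := by
  funext S
  let term : (_ : A) × A → M.obj (FIObj.of S) := fun q ↦
    (koszulSign q.1 S * koszulSign q.2 (S.erase q.1)) •
      M.map (FIObj.inclusion (((S.erase q.1).erase_subset q.2).trans (S.erase_subset q.1)))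
        (x ((S.erase q.1).erase q.2))
  have expand : M.koszulD (M.koszulD x) S = ∑ q ∈ S.sigma fun t ↦ S.erase t, term q := by
    simp only [koszulD_apply, map_sum, map_smul, Finset.smul_sum, smul_smul, map_inclusion_comp,
      Finset.sum_sigma, term]
  rw [expand]
  refine Finset.sum_involution (fun q _ ↦ ⟨q.2, q.1⟩) ?_ ?_ ?_ (fun _ _ ↦ rfl)
  · rintro ⟨t, s⟩ hq
    obtain ⟨ht, hst, hs⟩ : t ∈ S ∧ s ≠ t ∧ s ∈ S := by simpa using hq
    dsimp only [term]
    rw [koszulSign_mul_koszulSign_erase hs ht hst, neg_smul,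
      map_inclusion_congr x Finset.erase_right_comm _
        (((S.erase_subset s).trans' ((S.erase s).erase_subset t))), neg_add_cancel]
  · rintro ⟨t, s⟩ hq - heq
    obtain ⟨-, hst, -⟩ : t ∈ S ∧ s ≠ t ∧ s ∈ S := by simpa using hq
    exact hst (congrArg Sigma.fst heq)
  · rintro ⟨t, s⟩ hq
    obtain ⟨ht, hst, hs⟩ : t ∈ S ∧ s ≠ t ∧ s ∈ S := by simpa using hq
    simpa using ⟨hs, hst.symm, ht⟩

theorem koszulD_mapCochain (u : M ⟶ N) (x : M.KoszulCochain A) :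
    N.koszulD (mapCochain u x) = mapCochain u (M.koszulD x) := by
  funext S
  simp only [mapCochain, koszulD_apply, map_sum, map_smul, NatTrans.naturality_apply]

end Koszul

section ShortExact

variable {K M Q : FIMod} {u : K ⟶ M} {v : M ⟶ Q} {A : Type} [LinearOrder A] {V : Finset A}
  {p : ℕ}

theorem exists_mapCochain_eq_on (huv : ∀ S, Function.Exact (u.app S) (v.app S))
    (x : M.KoszulCochain A) (hx : ∀ S ⊆ V, S.card = p → mapCochain v x S = 0) :
    ∃ a : K.KoszulCochain A, ∀ S ⊆ V, S.card = p → mapCochain u a S = x S := by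
  have lift : ∀ S : Finset A, ∃ a : K.obj (FIObj.of S),
      S ⊆ V → S.card = p → u.app _ a = x S := fun S ↦ by
    by_cases hS : S ⊆ V ∧ S.card = p
    · obtain ⟨a, ha⟩ := (huv _ _).mp (hx S hS.1 hS.2)
      exact ⟨a, fun _ _ ↦ ha⟩
    · exact ⟨0, fun h h' ↦ absurd ⟨h, h'⟩ hS⟩
  choose a ha using lift
  exact ⟨a, ha⟩

theorem koszulD_eq_on {x y : M.KoszulCochain A}
    (h : ∀ S ⊆ V, S.card = p → x S = y S) {S : Finset A} (hS : S ⊆ V) (hp : S.card = p + 1) :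
    M.koszulD x S = M.koszulD y S :=
  koszulD_congr fun t ht ↦ h _ ((S.erase_subset t).trans hS) (by
    rw [Finset.card_erase_of_mem ht, hp, Nat.add_sub_cancel])

theorem KoszulExactAt.of_extension (hu : ∀ S, Function.Injective (u.app S))
    (huv : ∀ S, Function.Exact (u.app S) (v.app S)) (hv : ∀ S, Function.Surjective (v.app S))
    (hK : K.KoszulExactAt V p) (hQ : Q.KoszulExactAt V p) : M.KoszulExactAt V p := by
  intro x hx
  obtain ⟨z, hz⟩ := hQ (mapCochain v x) fun S hS hp ↦ by
    rw [koszulD_mapCochain, mapCochain, hx S hS hp, map_zero]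
  obtain ⟨y, rfl⟩ := exists_mapCochain_eq hv z
  obtain ⟨a, ha⟩ := exists_mapCochain_eq_on (u := u) huv (x - M.koszulD y) fun S hS hp ↦ by
    have := hz S hS hp
    rw [koszulD_mapCochain] at this
    simp_all [mapCochain]
  obtain ⟨b, hb⟩ := hK a fun S hS hp ↦ hu _ <| by
    have : M.koszulD (mapCochain u a) S = 0 := by
      rw [koszulD_eq_on ha hS hp, map_sub, koszulD_koszulD, sub_zero, hx S hS hp]
    rwa [koszulD_mapCochain, mapCochain, ← map_zero (u.app _).hom] at this
  refine ⟨y + mapCochain u b, fun S hS hp ↦ ?_⟩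
  have hS' := ha S hS hp
  rw [map_add, koszulD_mapCochain, Pi.add_apply, mapCochain, hb S hS hp]
  rw [mapCochain] at hS'
  rw [hS', Pi.sub_apply, add_sub_cancel]

theorem KoszulExactAt.of_kernel (hu : ∀ S, Function.Injective (u.app S))
    (huv : ∀ S, Function.Exact (u.app S) (v.app S)) (hv : ∀ S, Function.Surjective (v.app S))
    (hM : M.KoszulExactAt V (p + 1)) (hQ : Q.KoszulExactAt V p) : K.KoszulExactAt V (p + 1) := by
  intro x hx
  obtain ⟨y, hy⟩ := hM (mapCochain u x) fun S hS hp ↦ by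
    rw [koszulD_mapCochain, mapCochain, hx S hS hp, map_zero]
  obtain ⟨z, hz⟩ := hQ (mapCochain v y) fun S hS hp ↦ by
    rw [koszulD_mapCochain, mapCochain, hy S hS hp]
    exact (huv _).apply_apply_eq_zero (x S)
  obtain ⟨w, rfl⟩ := exists_mapCochain_eq hv z
  obtain ⟨a, ha⟩ := exists_mapCochain_eq_on (u := u) huv (y - M.koszulD w) fun S hS hp ↦ by
    have := hz S hS hp
    rw [koszulD_mapCochain] at this
    simp_all [mapCochain]
  refine ⟨a, fun S hS hp ↦ hu _ ?_⟩
  calc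
    mapCochain u (K.koszulD a) S = M.koszulD (y - M.koszulD w) S := by
      rw [← koszulD_mapCochain, koszulD_eq_on ha hS hp]
    _ = mapCochain u x S := by
      rw [map_sub, koszulD_koszulD, sub_zero, hy S hS hp]

end ShortExact

end FIMod

/-! ### Submodules and quotients -/

namespace FISub

section SubQuotient

variable {M : FIMod} (N : FISub M)

/-- A sub-FI-module as an FI-module. -/
def toFIMod : FIMod where
  obj S := ModuleCat.of ℂ (N.carrier S)
  map f := ModuleCat.ofHom ((M.map f).hom.restrict (N.map_mem f))
  map_id S := by ext x; simp [LinearMap.restrict]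
  map_comp f g := by ext x; simp [LinearMap.restrict]

/-- The inclusion of a sub-FI-module. -/
def ι : N.toFIMod ⟶ M where
  app S := ModuleCat.ofHom (N.carrier S).subtype
  naturality _ _ _ := rfl

/-- The quotient of an FI-module by a sub-FI-module. -/
def quotient : FIMod where
  obj S := ModuleCat.of ℂ (M.obj S ⧸ N.carrier S)
  map f := ModuleCat.ofHom ((N.carrier _).mapQ (N.carrier _) (M.map f).hom (N.map_mem f))
  map_id S := by ext x; simp
  map_comp f g := by ext x; simp

/-- The projection onto the quotient by a sub-FI-module. -/
def π : M ⟶ N.quotient where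
  app S := ModuleCat.ofHom (N.carrier S).mkQ
  naturality _ _ _ := rfl

theorem ι_app_injective (S : FIObj) : Function.Injective (N.ι.app S) :=
  Subtype.val_injective

theorem π_app_surjective (S : FIObj) : Function.Surjective (N.π.app S) :=
  Submodule.mkQ_surjective _

theorem π_app_eq_zero_iff {S : FIObj} {x : M.obj S} : N.π.app S x = 0 ↔ x ∈ N.carrier S :=
  Submodule.Quotient.mk_eq_zero _

theorem exact_ι_π (S : FIObj) : Function.Exact (N.ι.app S) (N.π.app S) :=
  fun _ ↦ N.π_app_eq_zero_iff.trans ⟨fun hx ↦ ⟨⟨_, hx⟩, rfl⟩, by rintro ⟨y, rfl⟩; exact y.2⟩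

end SubQuotient

section KerRange

variable {M N : FIMod} (u : M ⟶ N)

/-- The kernel of a morphism of FI-modules. -/
def ker : FISub M where
  carrier S := LinearMap.ker (u.app S).hom
  map_mem f x hx := by
    rw [LinearMap.mem_ker] at hx ⊢
    rw [NatTrans.naturality_apply, hx, map_zero]

/-- The range of a morphism of FI-modules. -/
def range : FISub N where
  carrier S := LinearMap.range (u.app S).hom
  map_mem := by
    rintro S T f _ ⟨x, rfl⟩
    exact ⟨M.map f x, NatTrans.naturality_apply u f x⟩

theorem exact_ker_ι (S : FIObj) : Function.Exact ((ker u).ι.app S) (u.app S) :=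
  fun x ↦ ⟨fun hx ↦ ⟨⟨x, hx⟩, rfl⟩, by rintro ⟨y, rfl⟩; exact y.2⟩

theorem exact_range_π (S : FIObj) : Function.Exact (u.app S) ((range u).π.app S) :=
  fun _ ↦ (range u).π_app_eq_zero_iff

end KerRange

end FISub

/-! ### Shift and derivative -/

namespace FIObj

/-- The endofunctor of FI adjoining one point to a finite set. -/
def option : FIObj ⥤ FIObj where
  obj S := FIObj.of (Option S.α)
  map f := ⟨Option.map f.1, Option.map_injective f.2⟩
  map_id _ := hom_ext fun a ↦ by cases a <;> rfl
  map_comp _ _ := hom_ext fun a ↦ by cases a <;> rfl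

/-- The natural injection of a finite set into the set with one more point. -/
def toOption : 𝟭 FIObj ⟶ option where
  app S := ⟨some, Option.some_injective S.α⟩

variable {A : Type} [DecidableEq A] {v : A} {S T : Finset A}

/-- The morphism `S ∪ {v} ⟶ Option S` that fixes `S` and sends `v ∉ S` to the new point. For
`v ∈ S` it is the natural injection, which is not bijective. -/
def insertToOption (v : A) (S : Finset A) :
    FIObj.of ↥(insert v S) ⟶ option.obj (FIObj.of S) where
  val a := if h : a.1 ∈ S then some ⟨a.1, h⟩ else none
  property := by
    rintro ⟨a, ha⟩ ⟨b, hb⟩ hab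
    dsimp only at hab
    split_ifs at hab with ha' <;> grind

theorem insertToOption_bijective (hv : v ∉ S) : Function.Bijective (insertToOption v S).1 := by
  refine ⟨(insertToOption v S).2, fun o ↦ ?_⟩
  cases o with
  | none => exact ⟨⟨v, S.mem_insert_self v⟩, dif_neg hv⟩
  | some a => exact ⟨⟨a.1, Finset.mem_insert_of_mem a.2⟩, dif_pos a.2⟩

theorem inclusion_comp_insertToOption (v : A) (S : Finset A) :
    inclusion (S.subset_insert v) ≫ insertToOption v S = toOption.app (FIObj.of S) :=
  hom_ext fun a ↦ dif_pos a.2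

theorem inclusion_insert_comp_insertToOption (hST : S ⊆ T) (hv : v ∉ T) :
    inclusion (Finset.insert_subset_insert v hST) ≫ insertToOption v T =
      insertToOption v S ≫ option.map (inclusion hST) := by
  refine hom_ext ?_
  rintro ⟨a, ha⟩
  change (if h : a ∈ T then some (⟨a, h⟩ : T) else none) =
    Option.map (Set.inclusion hST) (if h : a ∈ S then some ⟨a, h⟩ else none)
  rcases Finset.mem_insert.mp ha with rfl | haS
  · rw [dif_neg hv, dif_neg (mt (@hST a) hv), Option.map_none]
  · rw [dif_pos (hST haS), dif_pos haS]
    rfl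

end FIObj

namespace FIMod

/-- The shift `S ↦ M (S ⊔ {*})` of an FI-module. -/
def shift (M : FIMod) : FIMod :=
  FIObj.option ⋙ M

/-- The natural map from an FI-module to its shift. -/
def toShift (M : FIMod) : M ⟶ M.shift :=
  Functor.whiskerRight FIObj.toOption M

/-- The derivative of an FI-module: the cokernel of the natural map to its shift. -/
def derivative (M : FIMod) : FIMod :=
  (FISub.range M.toShift).quotient

section Link

variable {M : FIMod} {A : Type} [DecidableEq A] {v : A} {S T : Finset A}

theorem toShift_app_eq_map_insertToOption (v : A) (z : M.obj (FIObj.of S)) :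
    M.toShift.app _ z =
      M.map (FIObj.insertToOption v S) (M.map (FIObj.inclusion (S.subset_insert v)) z) := by
  rw [← Functor.map_comp_apply, FIObj.inclusion_comp_insertToOption]
  rfl

theorem map_inclusion_insert_injective (hM : ∀ S, Function.Injective (M.toShift.app S)) (v : A)
    (S : Finset A) : Function.Injective (M.map (FIObj.inclusion (S.subset_insert v))) :=
  fun z w h ↦ hM _ <| by rw [toShift_app_eq_map_insertToOption v z, h,
    toShift_app_eq_map_insertToOption v w]

/-- The map `M (S ∪ {v}) → M.derivative S` that regards `v` as the point adjoined to `S`. -/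
def toLink (M : FIMod) (v : A) (S : Finset A) :
    M.obj (FIObj.of ↥(insert v S)) →ₗ[ℂ] M.derivative.obj (FIObj.of S) :=
  ((FISub.range M.toShift).π.app _).hom ∘ₗ (M.map (FIObj.insertToOption v S)).hom

theorem toLink_surjective (hv : v ∉ S) : Function.Surjective (M.toLink v S) :=
  ((FISub.range M.toShift).π_app_surjective _).comp
    (M.map_bijective_of_bijective _ (FIObj.insertToOption_bijective hv)).2

theorem toLink_map_inclusion (v : A) (z : M.obj (FIObj.of S)) :
    M.toLink v S (M.map (FIObj.inclusion (S.subset_insert v)) z) = 0 :=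
  (FISub.range M.toShift).π_app_eq_zero_iff.mpr ⟨z, toShift_app_eq_map_insertToOption v z⟩

theorem exists_map_inclusion_eq_of_toLink_eq_zero (hv : v ∉ S)
    {z : M.obj (FIObj.of ↥(insert v S))} (hz : M.toLink v S z = 0) :
    ∃ w, M.map (FIObj.inclusion (S.subset_insert v)) w = z := by
  obtain ⟨w, hw⟩ := (FISub.range M.toShift).π_app_eq_zero_iff.mp hz
  refine ⟨w, (M.map_bijective_of_bijective _ (FIObj.insertToOption_bijective hv)).1 ?_⟩
  exact (toShift_app_eq_map_insertToOption v w).symm.trans hw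

theorem toLink_map_inclusion_insert (hST : S ⊆ T) (hv : v ∉ T)
    (z : M.obj (FIObj.of ↥(insert v S))) :
    M.toLink v T (M.map (FIObj.inclusion (Finset.insert_subset_insert v hST)) z) =
      M.derivative.map (FIObj.inclusion hST) (M.toLink v S z) := by
  have hmap : M.map (FIObj.insertToOption v T)
      (M.map (FIObj.inclusion (Finset.insert_subset_insert v hST)) z) =
      M.shift.map (FIObj.inclusion hST) (M.map (FIObj.insertToOption v S) z) := by
    rw [← Functor.map_comp_apply, FIObj.inclusion_insert_comp_insertToOption hST hv,
      Functor.map_comp_apply]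
    rfl
  exact (congrArg _ hmap).trans
    (NatTrans.naturality_apply (FISub.range M.toShift).π (FIObj.inclusion hST) _)

/-- The cochain of the derivative of `M` obtained by restricting a cochain of `M` to the subsets
that contain `v`. -/
def linkCochain (v : A) (x : M.KoszulCochain A) : M.derivative.KoszulCochain A :=
  fun S ↦ M.toLink v S (x (insert v S))

theorem exists_linkCochain_eq (v : A) (w : M.derivative.KoszulCochain A) :
    ∃ y : M.KoszulCochain A, ∀ S, v ∉ S → linkCochain v y S = w S := by
  have lift (R : Finset A) : ∃ m : M.obj (FIObj.of R), ∀ y : M.KoszulCochain A, y R = m →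
      ∀ S, v ∉ S → insert v S = R → linkCochain v y S = w S := by
    by_cases hR : ∃ S, v ∉ S ∧ insert v S = R
    · obtain ⟨S, hv, rfl⟩ := hR
      obtain ⟨m, hm⟩ := toLink_surjective hv (w S)
      refine ⟨m, fun y hy S' hv' hS' ↦ ?_⟩
      obtain rfl : S' = S := by rw [← Finset.erase_insert hv', hS', Finset.erase_insert hv]
      rw [linkCochain, hy, hm]
    · exact ⟨0, fun y _ S hv hS ↦ absurd ⟨S, hv, hS⟩ hR⟩
  choose y hy using lift
  exact ⟨y, fun S hv ↦ hy _ y rfl S hv rfl⟩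

end Link

section Cone

variable {M : FIMod} {A : Type} [LinearOrder A] {v : A} {S V : Finset A} {p : ℕ}

theorem koszulD_insert (hS : ∀ s ∈ S, s < v) (x : M.KoszulCochain A) :
    M.koszulD x (insert v S) =
      koszulSign v (insert v S) • M.map (FIObj.inclusion (S.subset_insert v)) (x S) +
      ∑ t ∈ S, koszulSign t S • M.map
        (FIObj.inclusion (Finset.insert_subset_insert v (S.erase_subset t)))
          (x (insert v (S.erase t))) := by
  have hv : v ∉ S := fun h ↦ (hS v h).false
  rw [koszulD_apply, Finset.sum_insert hv]
  congr 1
  · rw [map_inclusion_congr x (Finset.erase_insert hv)]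
  · refine Finset.sum_congr rfl fun t ht ↦ ?_
    rw [koszulSign_insert_of_le hv (hS t ht).le,
      map_inclusion_congr x (Finset.erase_insert_of_ne (hS t ht).ne')]

theorem koszulD_linkCochain (hS : ∀ s ∈ S, s < v) (x : M.KoszulCochain A) :
    M.derivative.koszulD (linkCochain v x) S = linkCochain v (M.koszulD x) S := by
  have hv : v ∉ S := fun h ↦ (hS v h).false
  rw [linkCochain, koszulD_insert hS, map_add, map_smul, toLink_map_inclusion, smul_zero, zero_add,
    koszulD_apply, map_sum]
  refine Finset.sum_congr rfl fun t _ ↦ ?_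
  rw [map_smul, toLink_map_inclusion_insert (S.erase_subset t) hv]
  rfl

theorem exists_koszulD_insert_eq (hV : ∀ s ∈ V, s < v) {x : M.KoszulCochain A}
    (hx : ∀ S ⊆ V, S.card = p → linkCochain v x S = 0) :
    ∃ y, ∀ S ⊆ V, S.card = p → M.koszulD y (insert v S) = x (insert v S) := by
  have hv : v ∉ V := fun h ↦ (hV v h).false
  have lift (S : Finset A) : ∃ z : M.obj (FIObj.of S), (v ∈ S → z = 0) ∧
      (S ⊆ V → S.card = p → M.map (FIObj.inclusion (S.subset_insert v)) z =
        koszulSign v (insert v S) • x (insert v S)) := by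
    by_cases hS : S ⊆ V ∧ S.card = p
    · have hvS : v ∉ S := fun h ↦ hv (hS.1 h)
      obtain ⟨z, hz⟩ := exists_map_inclusion_eq_of_toLink_eq_zero hvS (hx S hS.1 hS.2)
      exact ⟨koszulSign v (insert v S) • z, fun h ↦ absurd h hvS, fun _ _ ↦ by rw [map_smul, hz]⟩
    · exact ⟨0, fun _ ↦ rfl, fun h h' ↦ absurd ⟨h, h'⟩ hS⟩
  choose y hy₀ hy using lift
  refine ⟨y, fun S hS hp ↦ ?_⟩
  rw [koszulD_insert (fun s hs ↦ hV s (hS hs)), hy S hS hp, smul_smul, koszulSign_mul_self,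
    one_smul, Finset.sum_eq_zero, add_zero]
  intro t _
  rw [hy₀ _ (Finset.mem_insert_self _ _), map_zero, smul_zero]

theorem eq_zero_of_koszulD_insert_eq_zero (hM : ∀ S, Function.Injective (M.toShift.app S))
    (hS : ∀ s ∈ S, s < v) {x : M.KoszulCochain A}
    (hx : ∀ t ∈ S, x (insert v (S.erase t)) = 0) (hdx : M.koszulD x (insert v S) = 0) :
    x S = 0 := by
  rw [koszulD_insert hS, Finset.sum_eq_zero fun t ht ↦ by rw [hx t ht, map_zero, smul_zero],
    add_zero] at hdx
  have hsign : koszulSign v (insert v S) ≠ 0 :=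
    left_ne_zero_of_mul_eq_one (koszulSign_mul_self v _)
  refine map_inclusion_insert_injective hM v S ?_
  rw [(smul_eq_zero_iff_right hsign).mp hdx, map_zero]

/- The complex of `M` on `V ∪ {v}` is the cone of the map `M ⟶ M.shift` on the complexes on `V`;
as that map is injective, the cone is quasi-isomorphic to the complex of its cokernel. -/
theorem KoszulExactAt.of_derivative (hM : ∀ S, Function.Injective (M.toShift.app S))
    (hV : ∀ s ∈ V, s < v) (hD : M.derivative.KoszulExactAt V p) :
    M.KoszulExactAt (insert v V) (p + 1) := by
  have hv : v ∉ V := fun h ↦ (hV v h).false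
  have insert_mem {S : Finset A} {q : ℕ} (hS : S ⊆ V) (hq : S.card = q) :
      insert v S ⊆ insert v V ∧ (insert v S).card = q + 1 :=
    ⟨Finset.insert_subset_insert v hS, by rw [Finset.card_insert_of_notMem fun h ↦ hv (hS h), hq]⟩
  intro x hx
  obtain ⟨w, hw⟩ := hD (linkCochain v x) fun S hS hp ↦ by
    obtain ⟨hS', hp'⟩ := insert_mem hS hp
    rw [koszulD_linkCochain fun s hs ↦ hV s (hS hs), linkCochain, hx _ hS' hp', map_zero]
  obtain ⟨y, hy⟩ := exists_linkCochain_eq v w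
  obtain ⟨y', hy'⟩ := exists_koszulD_insert_eq (x := x - M.koszulD y) hV fun S hS hp ↦ by
    have hyS : linkCochain v (M.koszulD y) S = linkCochain v x S := by
      rw [← koszulD_linkCochain fun s hs ↦ hV s (hS hs), ← hw S hS hp]
      exact koszulD_congr fun t _ ↦ hy _ fun h ↦ hv (hS (Finset.mem_of_mem_erase h))
    rw [linkCochain, Pi.sub_apply, map_sub, sub_eq_zero]
    exact hyS.symm
  have eq_insert : ∀ S ⊆ V, S.card = p → (x - M.koszulD (y + y')) (insert v S) = 0 :=
    fun S hS hp ↦ by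
      rw [map_add, ← sub_sub, Pi.sub_apply, hy' S hS hp, sub_self]
  refine ⟨y + y', fun S hS hp ↦ (sub_eq_zero.mp ?_).symm⟩
  change (x - M.koszulD (y + y')) S = 0
  by_cases hvS : v ∈ S
  · rw [← Finset.insert_erase hvS]
    exact eq_insert _ (Finset.subset_insert_iff.mp hS) (by
      rw [Finset.card_erase_of_mem hvS, hp, Nat.add_sub_cancel])
  · have hSV : S ⊆ V := (Finset.subset_insert_iff_of_notMem hvS).mp hS
    refine eq_zero_of_koszulD_insert_eq_zero hM (fun s hs ↦ hV s (hSV hs)) (fun t ht ↦ ?_) ?_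
    · exact eq_insert _ ((S.erase_subset t).trans hSV) (by
        rw [Finset.card_erase_of_mem ht, hp, Nat.add_sub_cancel])
    · obtain ⟨hS', hp'⟩ := insert_mem hSV hp
      rw [map_sub, koszulD_koszulD, sub_zero, hx _ hS' hp']

end Cone

end FIMod

/-! ### Generation degree -/

namespace FIObj

theorem card_of_coe {A : Type} (S : Finset A) : Fintype.card (FIObj.of S).α = S.card :=
  Fintype.card_coe S

theorem exists_bijective_of_card_eq {S T : FIObj} (h : Fintype.card S.α = Fintype.card T.α) :
    ∃ f : S ⟶ T, Function.Bijective f.1 :=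
  ⟨⟨_, (Fintype.equivOfCardEq h).injective⟩, (Fintype.equivOfCardEq h).bijective⟩

theorem exists_comp_inclusion_erase_eq {A : Type} [DecidableEq A] {S : FIObj} {V : Finset A}
    (f : S ⟶ FIObj.of V) (h : Fintype.card S.α < V.card) :
    ∃ t ∈ V, ∃ g : S ⟶ FIObj.of ↥(V.erase t), g ≫ inclusion (V.erase_subset t) = f := by
  obtain ⟨t, ht⟩ : ∃ t : V, ∀ s, f.1 s ≠ t := by
    by_contra! hf
    exact (Fintype.card_le_of_surjective f.1 hf).not_gt (by rwa [card_of_coe])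
  refine ⟨t, t.2, ⟨fun s ↦ ⟨(f.1 s).1, Finset.mem_erase.mpr ⟨?_, (f.1 s).2⟩⟩, ?_⟩, rfl⟩
  · exact fun h ↦ ht s (Subtype.ext h)
  · exact fun s s' h ↦ f.2 (Subtype.ext (congrArg (fun a ↦ a.1) h))

theorem exists_comp_toOption_eq {S T : FIObj} (f : S ⟶ option.obj T) (h : ∀ s, f.1 s ≠ none) :
    ∃ g : S ⟶ T, g ≫ toOption.app T = f := by
  choose g hg using fun s ↦ Option.ne_none_iff_exists.mp (h s)
  exact ⟨⟨g, fun s s' hs ↦ f.2 (by rw [← hg, ← hg, hs])⟩, hom_ext hg⟩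

theorem exists_comp_option_map_eq {S T : FIObj} (f : S ⟶ option.obj T) {s₀ : S.α}
    (h : f.1 s₀ = none) :
    ∃ (R : FIObj) (e : S ⟶ option.obj R) (g : R ⟶ T),
      Fintype.card R.α < Fintype.card S.α ∧ e ≫ option.map g = f := by
  classical
  let ofNe : FIObj.of {s : S.α // s ≠ s₀} ⟶ S := ⟨Subtype.val, Subtype.val_injective⟩
  obtain ⟨g, hg⟩ := exists_comp_toOption_eq (ofNe ≫ f) fun s hs ↦ s.2 (f.2 (hs.trans h.symm))
  let e := Equiv.optionSubtypeNe s₀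
  refine ⟨FIObj.of {s : S.α // s ≠ s₀}, ⟨e.symm, e.symm.injective⟩, g,
    Fintype.card_subtype_lt (x := s₀) (by simp), hom_ext fun s ↦ ?_⟩
  obtain ⟨o, rfl⟩ := e.surjective s
  refine (congrArg (Option.map g.1) (e.symm_apply_apply o)).trans ?_
  cases o with
  | none => exact h.symm
  | some s => exact congrFun (congrArg Subtype.val hg) s

theorem exists_toOption_comp_eq {S T : FIObj} (f : S ⟶ T)
    (h : Fintype.card S.α < Fintype.card T.α) :
    ∃ g : option.obj S ⟶ T, toOption.app S ≫ g = f := by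
  obtain ⟨t, ht⟩ : ∃ t, ∀ s, f.1 s ≠ t := by
    by_contra! hf
    exact (Fintype.card_le_of_surjective f.1 hf).not_gt h
  refine ⟨⟨fun o ↦ o.elim t f.1, ?_⟩, rfl⟩
  rintro (_ | s) (_ | s') hs
  · rfl
  · exact absurd hs.symm (ht s')
  · exact absurd hs (ht s)
  · exact congrArg some (f.2 hs)

end FIObj

namespace FIMod

section Generation

variable {M N : FIMod} {k : ℕ}

/-- An FI-module is generated in degrees `< k` if every `M T` is the sum of the images of the
`M S` with `#S < k`. -/
def GeneratedBelow (M : FIMod) (k : ℕ) : Prop :=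
  ∀ (T : FIObj) (Q : Submodule ℂ (M.obj T)),
    (∀ (S : FIObj) (f : S ⟶ T) (x : M.obj S), Fintype.card S.α < k → M.map f x ∈ Q) → Q = ⊤

theorem GeneratedBelow.of_surjective (hM : M.GeneratedBelow k) (u : M ⟶ N)
    (hu : ∀ S, Function.Surjective (u.app S)) : N.GeneratedBelow k := by
  intro T Q hQ
  have hcomap : Q.comap (u.app T).hom = ⊤ := hM T _ fun S f x hS ↦ by
    rw [Submodule.mem_comap, NatTrans.naturality_apply]
    exact hQ S f _ hS
  exact Submodule.comap_injective_of_surjective (hu T) (hcomap.trans (Submodule.comap_top _).symm)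

theorem GeneratedBelow.derivative (hM : M.GeneratedBelow (k + 1)) :
    M.derivative.GeneratedBelow k := by
  intro T Q hQ
  let π := (FISub.range M.toShift).π
  have hcomap : Q.comap (π.app T).hom = ⊤ := hM (FIObj.option.obj T) _ fun S f x hS ↦ by
    change π.app T (M.map f x) ∈ Q
    by_cases hf : ∀ s, f.1 s ≠ none
    · obtain ⟨g, rfl⟩ := FIObj.exists_comp_toOption_eq f hf
      have hzero : π.app T (M.toShift.app T (M.map g x)) = 0 :=
        (FISub.exact_range_π M.toShift T).apply_apply_eq_zero _
      rw [Functor.map_comp_apply]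
      exact (congrArg (· ∈ Q) hzero).mpr Q.zero_mem
    · push Not at hf
      obtain ⟨s₀, hs₀⟩ := hf
      obtain ⟨R, e, g, hR, rfl⟩ := FIObj.exists_comp_option_map_eq f hs₀
      rw [Functor.map_comp_apply]
      exact hQ R g (π.app R (M.map e x)) (by omega)
  exact Submodule.comap_injective_of_surjective ((FISub.range M.toShift).π_app_surjective T)
    (hcomap.trans (Submodule.comap_top _).symm)

theorem exists_koszulD_eq_map_inclusion_erase {A : Type} [LinearOrder A] {V : Finset A} {t : A}
    (ht : t ∈ V) (z : M.obj (FIObj.of ↥(V.erase t))) :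
    ∃ y : M.KoszulCochain A,
      M.koszulD y V = M.map (FIObj.inclusion (V.erase_subset t)) z := by
  refine ⟨Pi.single (V.erase t) (koszulSign t V • z), ?_⟩
  rw [koszulD_apply, Finset.sum_eq_single_of_mem t ht]
  · rw [Pi.single_eq_same, map_smul, smul_smul, koszulSign_mul_self, one_smul]
  · intro s hs hst
    have hne : V.erase s ≠ V.erase t := fun h ↦ hst (Finset.erase_injOn V hs ht h)
    rw [Pi.single_eq_of_ne hne, map_zero, smul_zero]

theorem GeneratedBelow.koszulExactAt (hM : M.GeneratedBelow k) {A : Type} [LinearOrder A]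
    {V : Finset A} (hV : k ≤ V.card) : M.KoszulExactAt V V.card := by
  have range_eq_top : LinearMap.range (LinearMap.proj V ∘ₗ M.koszulD (A := A)) = ⊤ :=
    hM _ _ fun S f z hS ↦ by
      obtain ⟨t, ht, g, rfl⟩ := FIObj.exists_comp_inclusion_erase_eq f (hS.trans_le hV)
      rw [Functor.map_comp_apply]
      exact exists_koszulD_eq_map_inclusion_erase ht (M.map g z)
  intro x _
  obtain ⟨y, hy⟩ := LinearMap.range_eq_top.mp range_eq_top (x V)
  refine ⟨y, fun S hS hcard ↦ ?_⟩
  obtain rfl := Finset.eq_of_subset_of_card_le hS hcard.ge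
  exact hy

theorem exists_koszulD_eq {A : Type} [LinearOrder A] {V : Finset A}
    (hV : M.KoszulExactAt V V.card) (z : M.obj (FIObj.of V)) :
    ∃ y : M.KoszulCochain A, M.koszulD y V = z := by
  obtain ⟨y, hy⟩ := hV (Pi.single V z) fun S hS hcard ↦
    absurd (Finset.card_le_card hS) (by omega)
  exact ⟨y, (hy V subset_rfl rfl).trans (Pi.single_eq_same _ _)⟩

theorem generatedBelow_of_koszulExactAt
    (h : ∀ V : Finset ℕ, k ≤ V.card → M.KoszulExactAt V V.card) : M.GeneratedBelow k := by
  intro T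
  induction hn : Fintype.card T.α using Nat.strong_induction_on generalizing T with
  | _ n ih =>
    intro Q hQ
    by_cases hnk : n < k
    · exact eq_top_iff.mpr fun z _ ↦ by
        simpa only [Functor.map_id_apply] using hQ T (𝟙 T) z (hn ▸ hnk)
    let V := Finset.range n
    obtain ⟨e, he⟩ := FIObj.exists_bijective_of_card_eq (S := FIObj.of V) (T := T) (by
      rw [FIObj.card_of_coe, Finset.card_range, hn])
    refine eq_top_iff.mpr fun z _ ↦ ?_
    obtain ⟨z, rfl⟩ := (M.map_bijective_of_bijective e he).2 z
    obtain ⟨y, rfl⟩ := exists_koszulD_eq (h V (by rwa [Finset.card_range, ← not_lt])) z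
    rw [koszulD_apply, map_sum]
    refine Q.sum_mem fun t ht ↦ ?_
    rw [map_smul, ← Functor.map_comp_apply]
    have hcard : Fintype.card (FIObj.of ↥(V.erase t)).α < n := by
      rw [FIObj.card_of_coe, ← Finset.card_range n]
      exact Finset.card_erase_lt_of_mem ht
    have hcomap := ih _ hcard (FIObj.of ↥(V.erase t)) rfl
      (Q.comap (M.map (FIObj.inclusion (V.erase_subset t) ≫ e)).hom) fun S f x hS ↦ by
        rw [Submodule.mem_comap, ← ModuleCat.comp_apply, ← Functor.map_comp]
        exact hQ S _ x hS
    exact Q.smul_mem _ (Submodule.eq_top_iff'.mp hcomap (y (V.erase t)))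

end Generation

/-! ### Torsion and regularity -/

section Torsion

/-- An element of an FI-module is torsion if every map to a large enough set kills it. -/
def IsTorsionElement {M : FIMod} {S : FIObj} (x : M.obj S) : Prop :=
  ∃ n : ℕ, ∀ (T : FIObj) (f : S ⟶ T), n ≤ Fintype.card T.α → M.map f x = 0

/-- An FI-module is torsion if all of its elements are. -/
def IsTorsion (M : FIMod) : Prop :=
  ∀ (S : FIObj) (x : M.obj S), IsTorsionElement x

/-- The sub-FI-module of torsion elements. -/
def torsion (M : FIMod) : FISub M where
  carrier S :=
    { carrier := {x | IsTorsionElement x}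
      zero_mem' := ⟨0, fun _ _ _ ↦ map_zero _⟩
      add_mem' := by
        rintro x y ⟨m, hm⟩ ⟨n, hn⟩
        refine ⟨max m n, fun T f hT ↦ ?_⟩
        rw [map_add, hm T f (le_of_max_le_left hT), hn T f (le_of_max_le_right hT), add_zero]
      smul_mem' := by
        rintro c x ⟨n, hn⟩
        exact ⟨n, fun T f hT ↦ by rw [map_smul, hn T f hT, smul_zero]⟩ }
  map_mem f x := by
    rintro ⟨n, hn⟩
    exact ⟨n, fun T g hT ↦ by rw [← Functor.map_comp_apply, hn T _ hT]⟩

theorem isTorsion_torsion (M : FIMod) : M.torsion.toFIMod.IsTorsion := by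
  rintro S ⟨x, n, hn⟩
  exact ⟨n, fun T f hT ↦ Subtype.ext (hn T f hT)⟩

theorem toShift_quotient_torsion_injective (M : FIMod) (S : FIObj) :
    Function.Injective (M.torsion.quotient.toShift.app S) := by
  rw [injective_iff_map_eq_zero]
  intro z hz
  obtain ⟨x, rfl⟩ := M.torsion.π_app_surjective S z
  obtain ⟨n, hn⟩ : M.toShift.app S x ∈ M.torsion.carrier (FIObj.option.obj S) :=
    M.torsion.π_app_eq_zero_iff.mp hz
  refine M.torsion.π_app_eq_zero_iff.mpr ⟨max n (Fintype.card S.α + 1), fun T f hT ↦ ?_⟩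
  obtain ⟨g, rfl⟩ := FIObj.exists_toOption_comp_eq f (le_of_max_le_right hT)
  rw [Functor.map_comp_apply]
  exact hn T g (le_of_max_le_left hT)

/-- An FI-module with finite-dimensional values. -/
def PointwiseFinite (M : FIMod) : Prop :=
  ∀ S, Module.Finite ℂ (M.obj S)

variable {M N : FIMod} {k : ℕ}

theorem PointwiseFinite.of_injective (hN : N.PointwiseFinite) (u : M ⟶ N)
    (hu : ∀ S, Function.Injective (u.app S)) : M.PointwiseFinite := fun S ↦
  have := hN S
  Module.Finite.of_injective (u.app S).hom (hu S)

theorem PointwiseFinite.of_surjective (hM : M.PointwiseFinite) (u : M ⟶ N)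
    (hu : ∀ S, Function.Surjective (u.app S)) : N.PointwiseFinite := fun S ↦
  have := hM S
  Module.Finite.of_surjective (u.app S).hom (hu S)

theorem PointwiseFinite.derivative (hM : M.PointwiseFinite) : M.derivative.PointwiseFinite :=
  PointwiseFinite.of_surjective (M := M.shift) (fun S ↦ hM (FIObj.option.obj S))
    (FISub.range M.toShift).π (FISub.range M.toShift).π_app_surjective

theorem IsTorsion.exists_forall_map_eq_zero (hM : M.IsTorsion) (S : FIObj)
    [Module.Finite ℂ (M.obj S)] :
    ∃ n : ℕ, ∀ (x : M.obj S) (T : FIObj) (f : S ⟶ T), n ≤ Fintype.card T.α → M.map f x = 0 := by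
  obtain ⟨s, hs⟩ := Module.Finite.fg_top (R := ℂ) (M := M.obj S)
  choose n hn using hM S
  refine ⟨s.sup n, fun x T f hT ↦ ?_⟩
  have ker_eq_top : LinearMap.ker (M.map f).hom = ⊤ := by
    rw [eq_top_iff, ← hs, Submodule.span_le]
    exact fun y hy ↦ hn y T f ((Finset.le_sup hy).trans hT)
  exact LinearMap.congr_fun (LinearMap.ker_eq_top.mp ker_eq_top) x

theorem IsTorsion.exists_forall_subsingleton (hM : M.IsTorsion) (hfin : M.PointwiseFinite)
    (hgen : M.GeneratedBelow k) :
    ∃ n : ℕ, ∀ T : FIObj, n ≤ Fintype.card T.α → Subsingleton (M.obj T) := by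
  choose n hn using fun r : ℕ ↦
    have := hfin (FIObj.of (Fin r))
    hM.exists_forall_map_eq_zero (FIObj.of (Fin r))
  refine ⟨(Finset.range k).sup n, fun T hT ↦ ?_⟩
  refine (Submodule.subsingleton_iff ℂ).mp (subsingleton_of_bot_eq_top ?_)
  refine hgen T ⊥ fun S f x hS ↦ (Submodule.mem_bot ℂ).mpr ?_
  obtain ⟨e, he⟩ := FIObj.exists_bijective_of_card_eq
    (S := FIObj.of (Fin (Fintype.card S.α))) (T := S) (Fintype.card_fin _)
  obtain ⟨y, rfl⟩ := (M.map_bijective_of_bijective e he).2 x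
  rw [← Functor.map_comp_apply]
  exact hn _ y T _ ((Finset.le_sup (Finset.mem_range.mpr hS)).trans hT)

end Torsion

section Regularity

variable {M : FIMod} {c k : ℕ}

/-- The regularity of `M` is at most `c`: the FI-homology of `M` in homological degree `i` vanishes
on sets with more than `c + i` elements. As that homology is functorial in bijections, finite
subsets of `ℕ` suffice. -/
def RegularityLE (M : FIMod) (c : ℕ) : Prop :=
  ∀ (V : Finset ℕ) (p : ℕ), c < p → M.KoszulExactAt V p

theorem koszulExactAt_of_card_lt {A : Type} [LinearOrder A] {V : Finset A} {p : ℕ}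
    (h : V.card < p) : M.KoszulExactAt V p :=
  fun _ _ ↦ ⟨0, fun _ hS hp ↦ absurd (Finset.card_le_card hS) (by omega)⟩

theorem regularityLE_of_subsingleton
    (h : ∀ T : FIObj, c ≤ Fintype.card T.α → Subsingleton (M.obj T)) : M.RegularityLE c := by
  refine fun V p hp x _ ↦ ⟨0, fun S _ hS ↦ ?_⟩
  have := h (FIObj.of S) (by rw [FIObj.card_of_coe]; omega)
  exact Subsingleton.elim _ _

theorem RegularityLE.of_derivative (hM : ∀ S, Function.Injective (M.toShift.app S))
    (hD : M.derivative.RegularityLE c) : M.RegularityLE (c + 1) := by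
  intro V p hp
  obtain ⟨p, rfl⟩ : ∃ q, p = q + 1 := ⟨p - 1, by omega⟩
  obtain rfl | hV := V.eq_empty_or_nonempty
  · exact koszulExactAt_of_card_lt (by simp)
  · rw [← Finset.insert_erase (V.max'_mem hV)]
    exact .of_derivative hM (fun s hs ↦ V.lt_max'_of_mem_erase_max' hV hs) (hD _ p (by omega))

theorem RegularityLE.generatedBelow (hM : M.RegularityLE c) : M.GeneratedBelow (c + 1) :=
  generatedBelow_of_koszulExactAt fun V hV ↦ hM V _ hV

/- This takes the place of noetherianity of `M`. -/
theorem GeneratedBelow.torsion (hgen : M.GeneratedBelow k)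
    (hreg : M.torsion.quotient.RegularityLE c) :
    M.torsion.toFIMod.GeneratedBelow (max k (c + 2)) := by
  refine generatedBelow_of_koszulExactAt fun V hV ↦ ?_
  obtain ⟨p, hp⟩ : ∃ p, V.card = p + 1 := ⟨V.card - 1, by omega⟩
  have hM := hgen.koszulExactAt (le_of_max_le_left hV)
  rw [hp] at hM ⊢
  exact .of_kernel M.torsion.ι_app_injective M.torsion.exact_ι_π M.torsion.π_app_surjective
    hM (hreg V p (by omega))

theorem exists_regularityLE (hfin : M.PointwiseFinite) (hgen : M.GeneratedBelow k) :
    ∃ c, M.RegularityLE c := by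
  induction k generalizing M with
  | zero =>
    refine ⟨0, regularityLE_of_subsingleton fun T _ ↦ ?_⟩
    refine (Submodule.subsingleton_iff ℂ).mp (subsingleton_of_bot_eq_top ?_)
    exact hgen T ⊥ fun S _ _ hS ↦ absurd hS (Nat.not_lt_zero _)
  | succ k ih =>
    let F := M.torsion.quotient
    have hF : ∃ c, F.RegularityLE c := by
      obtain ⟨c, hc⟩ := ih (M := F.derivative)
        (hfin.of_surjective M.torsion.π M.torsion.π_app_surjective).derivative
        (hgen.of_surjective M.torsion.π M.torsion.π_app_surjective).derivative
      exact ⟨c + 1, hc.of_derivative M.toShift_quotient_torsion_injective⟩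
    obtain ⟨c, hc⟩ := hF
    obtain ⟨n, hn⟩ := M.isTorsion_torsion.exists_forall_subsingleton
      (hfin.of_injective M.torsion.ι M.torsion.ι_app_injective) (hgen.torsion hc)
    refine ⟨max c n, fun V p hp ↦ ?_⟩
    exact .of_extension M.torsion.ι_app_injective M.torsion.exact_ι_π M.torsion.π_app_surjective
      (regularityLE_of_subsingleton hn V p (by omega)) (hc V p (by omega))

end Regularity

end FIMod

/-! ### Generators and free modules -/

namespace FISub

variable {M : FIMod} {ι : Type} {S : ι → FIObj}

/-- The sub-FI-module generated by a family of elements. -/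
def span (m : ∀ i, M.obj (S i)) : FISub M where
  carrier T := Submodule.span ℂ (Set.range fun q : Σ i, S i ⟶ T ↦ M.map q.2 (m q.1))
  map_mem {T U} f x hx := by
    refine (Submodule.span_le (p := (Submodule.span ℂ _).comap (M.map f).hom)).mpr ?_ hx
    rintro _ ⟨⟨i, g⟩, rfl⟩
    exact Submodule.subset_span ⟨⟨i, g ≫ f⟩, Functor.map_comp_apply M g f (m i)⟩

theorem map_mem_span (m : ∀ i, M.obj (S i)) {i : ι} {T : FIObj} (f : S i ⟶ T) :
    M.map f (m i) ∈ (span m).carrier T :=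
  Submodule.subset_span ⟨⟨i, f⟩, rfl⟩

theorem mem_span (m : ∀ i, M.obj (S i)) (i : ι) : m i ∈ (span m).carrier (S i) := by
  simpa only [Functor.map_id_apply] using map_mem_span m (𝟙 (S i))

theorem span_carrier_le {m : ∀ i, M.obj (S i)} {T : FIObj} {Q : Submodule ℂ (M.obj T)}
    (h : ∀ i (f : S i ⟶ T), M.map f (m i) ∈ Q) : (span m).carrier T ≤ Q :=
  Submodule.span_le.mpr (by rintro _ ⟨⟨i, f⟩, rfl⟩; exact h i f)

end FISub

namespace FIMod

section Generators

variable {M : FIMod} {ι : Type} {S : ι → FIObj} {m : ∀ i, M.obj (S i)} {b k : ℕ}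

/-- A family of elements of an FI-module is generating if the sub-FI-module it spans is
everything. -/
def Generates (m : ∀ i, M.obj (S i)) : Prop :=
  ∀ T, (FISub.span m).carrier T = ⊤

theorem Generates.eq_top (hm : Generates m) {T : FIObj} {Q : Submodule ℂ (M.obj T)}
    (h : ∀ i (f : S i ⟶ T), M.map f (m i) ∈ Q) : Q = ⊤ :=
  top_le_iff.mp (hm T ▸ FISub.span_carrier_le h)

theorem Generates.pointwiseFinite [Finite ι] (hm : Generates m) : M.PointwiseFinite := fun T ↦
  Module.Finite.of_fg_top (hm T ▸ Submodule.fg_span (Set.finite_range _))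

theorem Generates.generatedBelow (hm : Generates m) (h : ∀ i, Fintype.card (S i).α < k) :
    M.GeneratedBelow k :=
  fun _ _ hQ ↦ hm.eq_top fun i f ↦ hQ (S i) f (m i) (h i)

theorem Generates.fgBound [Finite ι] (hm : Generates m) (h : ∀ i, Fintype.card (S i).α ≤ b) :
    M.FGBound b := by
  let e := (Finite.equivFin ι).symm
  refine ⟨Nat.card ι, S ∘ e, fun j ↦ m (e j), fun j ↦ h (e j), fun N hN T ↦ hm.eq_top ?_⟩
  intro i f
  obtain ⟨j, rfl⟩ := e.surjective i
  exact N.map_mem f _ (hN j)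

theorem FG.exists_generatedBelow (hM : M.FG) : M.PointwiseFinite ∧ ∃ k, M.GeneratedBelow k := by
  obtain ⟨r, S, m, hm⟩ := hM
  have hgen : Generates m := hm (FISub.span m) (FISub.mem_span m)
  exact ⟨hgen.pointwiseFinite, _, hgen.generatedBelow fun i ↦ Nat.lt_succ_of_le <|
    Finset.le_sup (f := fun i ↦ Fintype.card (S i).α) (Finset.mem_univ i)⟩

theorem GeneratedBelow.exists_generates (hgen : M.GeneratedBelow (b + 1))
    (hfin : M.PointwiseFinite) :
    ∃ (ι : Type) (_ : Finite ι) (S : ι → FIObj) (m : ∀ i, M.obj (S i)),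
      (∀ i, Fintype.card (S i).α ≤ b) ∧ Generates m := by
  choose s hs using fun r : Fin (b + 1) ↦ (hfin (FIObj.of (Fin r))).fg_top
  refine ⟨Σ r, s r, inferInstance, fun q ↦ FIObj.of (Fin q.1), fun q ↦ q.2.1, fun q ↦ ?_,
    fun T ↦ hgen T _ fun R f x hR ↦ ?_⟩
  · exact (Fintype.card_fin q.1).trans_le (Nat.le_of_lt_succ q.1.2)
  · let r : Fin (b + 1) := ⟨Fintype.card R.α, hR⟩
    obtain ⟨e, he⟩ := FIObj.exists_bijective_of_card_eq (S := FIObj.of (Fin r)) (T := R)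
      (Fintype.card_fin _)
    obtain ⟨y, rfl⟩ := (M.map_bijective_of_bijective e he).2 x
    rw [← Functor.map_comp_apply]
    have span_le : Submodule.span ℂ (s r) ≤
        Submodule.comap (M.map (e ≫ f)).hom ((FISub.span fun q : Σ r, s r ↦ q.2.1).carrier T) :=
      Submodule.span_le.mpr fun z hz ↦ FISub.map_mem_span
        (S := fun q : Σ r, s r ↦ FIObj.of (Fin q.1)) (fun q ↦ q.2.1) (i := ⟨r, z, hz⟩) (e ≫ f)
    exact span_le (hs r ▸ Submodule.mem_top)

end Generators

section Free

variable {ι : Type} (S : ι → FIObj)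

/-- The free FI-module on generators indexed by `ι`, the `i`-th one in degree `S i`. -/
noncomputable def free : FIMod where
  obj T := ModuleCat.of ℂ ((Σ i, S i ⟶ T) →₀ ℂ)
  map f := ModuleCat.ofHom (Finsupp.lmapDomain ℂ ℂ (Sigma.map id fun _ g ↦ g ≫ f))
  map_id T := by ext q; simp [Sigma.map]
  map_comp f g := by ext q; simp [Sigma.map]

/-- The `i`-th generator of a free FI-module. -/
noncomputable def freeGen (i : ι) : (free S).obj (S i) :=
  Finsupp.single (⟨i, 𝟙 (S i)⟩ : Σ j, S j ⟶ S i) (1 : ℂ)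

variable {S}

theorem free_map_freeGen {i : ι} {T : FIObj} (f : S i ⟶ T) :
    (free S).map f (freeGen S i) = Finsupp.single (⟨i, f⟩ : Σ j, S j ⟶ T) (1 : ℂ) :=
  Finsupp.mapDomain_single

theorem generates_freeGen : Generates (freeGen S) := by
  intro T
  have span_single := (Finsupp.basisSingleOne (R := ℂ) (ι := Σ i, S i ⟶ T)).span_eq
  rw [Finsupp.coe_basisSingleOne] at span_single
  refine top_le_iff.mp (span_single.ge.trans (Submodule.span_le.mpr ?_))
  rintro _ ⟨⟨i, f⟩, rfl⟩
  exact (congrArg (· ∈ (FISub.span (freeGen S)).carrier T) (free_map_freeGen f)).mp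
    (FISub.map_mem_span (freeGen S) f)

variable {M : FIMod}

/-- The morphism from a free FI-module with prescribed values on the generators. -/
noncomputable def freeDesc (m : ∀ i, M.obj (S i)) : free S ⟶ M where
  app T := ModuleCat.ofHom (Finsupp.linearCombination ℂ fun q : Σ i, S i ⟶ T ↦ M.map q.2 (m q.1))
  naturality T U f := by
    refine ModuleCat.hom_ext (Finsupp.lhom_ext' fun q ↦ LinearMap.ext_ring ?_)
    simp [free, Sigma.map]

theorem freeDesc_app_freeGen (m : ∀ i, M.obj (S i)) (i : ι) :
    (freeDesc m).app (S i) (freeGen S i) = m i := by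
  refine (Finsupp.linearCombination_single ℂ _ _).trans ?_
  rw [one_smul, Functor.map_id_apply]

theorem freeDesc_app_surjective {m : ∀ i, M.obj (S i)} (hm : Generates m) (T : FIObj) :
    Function.Surjective ((freeDesc m).app T) :=
  LinearMap.range_eq_top.mp (hm.eq_top fun i f ↦ ⟨(free S).map f (freeGen S i), by
    rw [← freeDesc_app_freeGen m i, ← NatTrans.naturality_apply]⟩)

theorem free_hom_ext {u v : free S ⟶ M}
    (h : ∀ i, u.app (S i) (freeGen S i) = v.app (S i) (freeGen S i)) : u = v := by
  refine NatTrans.ext (funext fun T ↦ ModuleCat.hom_ext (LinearMap.eqLocus_eq_top.mp ?_))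
  refine generates_freeGen.eq_top fun i f ↦ ?_
  change u.app T ((free S).map f _) = v.app T ((free S).map f _)
  rw [NatTrans.naturality_apply, NatTrans.naturality_apply, h]

instance projective_free : Projective (free S) where
  factors {E X} f e _ := by
    have he (T : FIObj) : Function.Surjective (e.app T) :=
      (ModuleCat.epi_iff_surjective (e.app T)).mp inferInstance
    choose l hl using fun i ↦ he _ (f.app _ (freeGen S i))
    exact ⟨freeDesc l, free_hom_ext fun i ↦ by
      rw [NatTrans.comp_app, ModuleCat.comp_apply, freeDesc_app_freeGen, hl]⟩

end Free

/-! ### Regularity of free modules -/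

section Contraction

variable {A : Type} [LinearOrder A]

/-- The contraction with a point `c` of a scalar-valued function on finite subsets. -/
noncomputable def koszulContraction (c : A) (z : Finset A → ℂ) (R : Finset A) : ℂ :=
  if c ∈ R then 0 else koszulSign c (insert c R) * z (insert c R)

theorem koszulSign_mul_koszulSign_insert_erase {c t : A} {S : Finset A} (hc : c ∉ S) (ht : t ∈ S) :
    koszulSign t S * koszulSign c (insert c (S.erase t)) =
      -(koszulSign c (insert c S) * koszulSign t (insert c S)) := by
  have hne : c ≠ t := fun h ↦ hc (h ▸ ht)
  have hswap := koszulSign_mul_koszulSign_erase (S.mem_insert_self c)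
    (Finset.mem_insert_of_mem ht) hne
  rw [Finset.erase_insert hc, Finset.erase_insert_of_ne hne] at hswap
  linear_combination (koszulSign t (insert c S) * koszulSign t S) * hswap -
    (koszulSign t S * koszulSign c (insert c (S.erase t))) * koszulSign_mul_self t (insert c S) -
    (koszulSign c (insert c S) * koszulSign t (insert c S)) * koszulSign_mul_self t S

theorem sum_koszulSign_mul_koszulContraction {c : A} {z : Finset A → ℂ} {S : Finset A}
    (hz : c ∉ S → ∑ t ∈ insert c S, koszulSign t (insert c S) * z ((insert c S).erase t) = 0) :
    ∑ t ∈ S, koszulSign t S * koszulContraction c z (S.erase t) = z S := by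
  by_cases hc : c ∈ S
  · rw [Finset.sum_eq_single_of_mem c hc, koszulContraction, if_neg (S.notMem_erase c),
      Finset.insert_erase hc, ← mul_assoc, koszulSign_mul_self, one_mul]
    intro t _ htc
    rw [koszulContraction, if_pos (Finset.mem_erase.mpr ⟨htc.symm, hc⟩), mul_zero]
  · have hterm : ∀ t ∈ S, koszulSign t S * koszulContraction c z (S.erase t) =
        -koszulSign c (insert c S) *
          (koszulSign t (insert c S) * z ((insert c S).erase t)) := fun t ht ↦ by
      have hne : c ≠ t := fun h ↦ hc (h ▸ ht)
      rw [koszulContraction, if_neg fun h ↦ hc (Finset.mem_of_mem_erase h), ← mul_assoc,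
        koszulSign_mul_koszulSign_insert_erase hc ht,
        Finset.erase_insert_of_ne hne]
      ring
    have hcocycle := hz hc
    rw [Finset.sum_insert hc, Finset.erase_insert hc] at hcocycle
    rw [Finset.sum_congr rfl hterm, ← Finset.mul_sum]
    linear_combination -koszulSign c (insert c S) * hcocycle +
      z S * koszulSign_mul_self c (insert c S)

end Contraction

section FreeRegularity

variable {ι : Type} {S : ι → FIObj} {A : Type} {R T : Finset A}

/-- Composition with the inclusion of `R` into `A`, on the index set of the basis of a free
FI-module at `R`. -/
def freeIndex (S : ι → FIObj) (R : Finset A) (q : Σ i, S i ⟶ FIObj.of R) : Σ i, (S i).α ↪ A :=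
  ⟨q.1, Subtype.val ∘ q.2.1, Subtype.val_injective.comp q.2.2⟩

theorem freeIndex_injective (R : Finset A) : Function.Injective (freeIndex S R) := by
  rintro ⟨i, f⟩ ⟨j, g⟩ h
  obtain ⟨rfl, h⟩ := Sigma.mk.inj_iff.mp h
  exact congrArg (Sigma.mk i) <| FIObj.hom_ext fun a ↦ Subtype.ext <|
    DFunLike.congr_fun (eq_of_heq h) a

theorem mem_range_freeIndex {q : Σ i, (S i).α ↪ A} :
    q ∈ Set.range (freeIndex S R) ↔ ∀ a, q.2 a ∈ R := by
  constructor
  · rintro ⟨⟨i, f⟩, rfl⟩ a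
    exact (f.1 a).2
  · exact fun h ↦ ⟨⟨q.1, fun a ↦ ⟨q.2 a, h a⟩, fun a b hab ↦ q.2.2 (congrArg Subtype.val hab)⟩, rfl⟩

/-- The coordinates of an element of a free FI-module at a finite subset of `A`, indexed by the
injections of the `S i` into `A`, so that they do not change when the subset is enlarged. -/
noncomputable def freeCoord (S : ι → FIObj) (R : Finset A) :
    (free S).obj (FIObj.of R) →ₗ[ℂ] ((Σ i, (S i).α ↪ A) →₀ ℂ) :=
  Finsupp.lmapDomain ℂ ℂ (freeIndex S R)

theorem freeCoord_injective (R : Finset A) : Function.Injective (freeCoord S R) :=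
  Finsupp.mapDomain_injective (freeIndex_injective R)

theorem freeCoord_map_inclusion (h : R ⊆ T) (z : (free S).obj (FIObj.of R)) :
    freeCoord S T ((free S).map (FIObj.inclusion h) z) = freeCoord S R z :=
  (Finsupp.mapDomain_comp (f := fun q : Σ i, S i ⟶ FIObj.of R ↦
    (⟨q.1, q.2 ≫ FIObj.inclusion h⟩ : Σ i, S i ⟶ FIObj.of T)) (g := freeIndex S T)).symm

theorem mem_of_freeCoord_ne_zero {z : (free S).obj (FIObj.of R)} {q : Σ i, (S i).α ↪ A}
    (hq : freeCoord S R z q ≠ 0) : ∀ a, q.2 a ∈ R :=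
  mem_range_freeIndex.mp <| not_imp_comm.mp (Finsupp.mapDomain_of_notMem_range _ _) hq

theorem exists_freeCoord_eq [Finite ι] {w : (Σ i, (S i).α ↪ A) → ℂ}
    (hw : ∀ q, w q ≠ 0 → ∀ a, q.2 a ∈ R) :
    ∃ z : (free S).obj (FIObj.of R), ∀ q, freeCoord S R z q = w q := by
  refine ⟨Finsupp.equivFunOnFinite.symm (w ∘ freeIndex S R), fun q ↦ ?_⟩
  by_cases hq : q ∈ Set.range (freeIndex S R)
  · obtain ⟨q, rfl⟩ := hq
    exact Finsupp.mapDomain_apply (freeIndex_injective R) _ q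
  · exact (Finsupp.mapDomain_of_notMem_range _ _ hq).trans
      (not_ne_iff.mp fun hwq ↦ hq (mem_range_freeIndex.mpr (hw q hwq))).symm

theorem freeCoord_koszulD [LinearOrder A] (x : (free S).KoszulCochain A) (R : Finset A)
    (q : Σ i, (S i).α ↪ A) :
    freeCoord S R ((free S).koszulD x R) q =
      ∑ t ∈ R, koszulSign t R * freeCoord S (R.erase t) (x (R.erase t)) q := by
  simp only [koszulD_apply, map_sum, map_smul, freeCoord_map_inclusion, Finsupp.finsetSum_apply,
    Finsupp.smul_apply, smul_eq_mul]

/- The coordinate at `g : S i → A` is contracted by any point of `V` outside the image of `g`. -/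
theorem koszulExactAt_free [Finite ι] [LinearOrder A] {p : ℕ}
    (hS : ∀ i, Fintype.card (S i).α < p) (V : Finset A) : (free S).KoszulExactAt V p := by
  obtain hV | hV := lt_or_ge V.card p
  · exact koszulExactAt_of_card_lt hV
  have hc (q : Σ i, (S i).α ↪ A) : ∃ c ∈ V, ∀ a, q.2 a ≠ c := by
    obtain ⟨c, hcV, hc⟩ := Finset.exists_mem_notMem_of_card_lt_card (t := V)
      ((Finset.card_image_le (s := Finset.univ) (f := q.2)).trans_lt ((hS q.1).trans_le hV))
    exact ⟨c, hcV, fun a ha ↦ hc (ha ▸ Finset.mem_image_of_mem _ (Finset.mem_univ a))⟩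
  choose c hcV hc using hc
  intro x hx
  have lift (R : Finset A) : ∃ y : (free S).obj (FIObj.of R), ∀ q, freeCoord S R y q =
      koszulContraction (c q) (fun R ↦ freeCoord S R (x R) q) R := by
    refine exists_freeCoord_eq fun q hq a ↦ ?_
    rw [koszulContraction, ne_eq, ite_eq_left_iff, not_forall] at hq
    obtain ⟨-, hq⟩ := hq
    exact (Finset.mem_insert.mp (mem_of_freeCoord_ne_zero (right_ne_zero_of_mul hq) a)).resolve_left
      (hc q a)
  choose y hy using lift
  refine ⟨y, fun R hR hp ↦ freeCoord_injective R (Finsupp.ext fun q ↦ ?_)⟩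
  rw [freeCoord_koszulD, Finset.sum_congr rfl fun t _ ↦ by rw [hy]]
  refine sum_koszulSign_mul_koszulContraction fun hcR ↦ ?_
  rw [← freeCoord_koszulD, hx _ (Finset.insert_subset (hcV q) hR)
    (by rw [Finset.card_insert_of_notMem hcR, hp]), map_zero, Finsupp.zero_apply]

end FreeRegularity

/-! ### Resolutions -/

theorem RegularityLE.exists_syzygy {M : FIMod} {c : ℕ} (hreg : M.RegularityLE c)
    (hfin : M.PointwiseFinite) :
    ∃ (P : FIMod) (ε : P ⟶ M), (Projective P ∧ P.FGBound c) ∧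
      (∀ S, Function.Surjective (ε.app S)) ∧
      (FISub.ker ε).toFIMod.PointwiseFinite ∧ (FISub.ker ε).toFIMod.RegularityLE (c + 1) := by
  obtain ⟨ι, _, S, m, hS, hm⟩ := hreg.generatedBelow.exists_generates hfin
  refine ⟨free S, freeDesc m, ⟨inferInstance, generates_freeGen.fgBound hS⟩,
    freeDesc_app_surjective hm, ?_, ?_⟩
  · exact generates_freeGen.pointwiseFinite.of_injective _ (FISub.ker (freeDesc m)).ι_app_injective
  · intro V p hp
    obtain ⟨p, rfl⟩ : ∃ q, p = q + 1 := ⟨p - 1, by omega⟩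
    exact .of_kernel (FISub.ker (freeDesc m)).ι_app_injective (FISub.exact_ker_ι (freeDesc m))
      (freeDesc_app_surjective hm) (koszulExactAt_free (fun i ↦ by have := hS i; omega) V)
      (hreg V p (by omega))

theorem exists_resolution {Φ Ψ : ℕ → FIMod → Prop}
    (hcover : ∀ i M, Φ i M → ∃ (P : FIMod) (ε : P ⟶ M), Ψ i P ∧
      (∀ S, Function.Surjective (ε.app S)) ∧ Φ (i + 1) (FISub.ker ε).toFIMod)
    {M : FIMod} (hM : Φ 0 M) :
    ∃ (P : ℕ → FIMod) (d : ∀ i, P (i + 1) ⟶ P i) (ε : P 0 ⟶ M),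
      (∀ i, Ψ i (P i)) ∧ (∀ S, Function.Surjective (ε.app S)) ∧
      (∀ S, LinearMap.range ((d 0).app S).hom = LinearMap.ker (ε.app S).hom) ∧
      ∀ i S, LinearMap.range ((d (i + 1)).app S).hom = LinearMap.ker ((d i).app S).hom := by
  choose P ε hP hsurj hker using hcover
  let K (i : ℕ) : {K : FIMod // Φ i K} := Nat.rec ⟨M, hM⟩
    (fun i K ↦ ⟨(FISub.ker (ε i K.1 K.2)).toFIMod, hker i K.1 K.2⟩) i
  let η (i : ℕ) : P i (K i).1 (K i).2 ⟶ (K i).1 := ε i (K i).1 (K i).2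
  let d (i : ℕ) : P (i + 1) (K (i + 1)).1 (K (i + 1)).2 ⟶ P i (K i).1 (K i).2 :=
    η (i + 1) ≫ (FISub.ker (η i)).ι
  have range_d (i : ℕ) (S : FIObj) :
      LinearMap.range ((d i).app S).hom = LinearMap.ker ((η i).app S).hom :=
    (LinearMap.range_comp_of_range_eq_top _ (LinearMap.range_eq_top.mpr (hsurj _ _ _ S))).trans
      (LinearMap.exact_iff.mp (FISub.exact_ker_ι (η i) S)).symm
  have ker_d (i : ℕ) (S : FIObj) :
      LinearMap.ker ((d i).app S).hom = LinearMap.ker ((η (i + 1)).app S).hom :=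
    LinearMap.ker_comp_of_ker_eq_bot _ (LinearMap.ker_eq_bot.mpr (FISub.ι_app_injective _ S))
  exact ⟨fun i ↦ P i (K i).1 (K i).2, d, η 0, fun i ↦ hP _ _ _, hsurj _ _ _, range_d 0,
    fun i S ↦ (range_d (i + 1) S).trans (ker_d i S).symm⟩

end FIMod

/-- Every finitely generated FI-module has a projective resolution
`⋯ → P_1 → P_0 → M → 0` in which each `P_i` is a finitely generated projective object
generated in degrees ≤ N + i; in particular finitely generated FI-modules have finite
Castelnuovo–Mumford regularity. -/
theorem fg_FIMod_finite_regularity (M : FIMod) (hM : FIMod.FG M) :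
    ∃ (N : ℕ) (P : ℕ → FIMod) (d : ∀ i, P (i + 1) ⟶ P i) (ε : P 0 ⟶ M),
      (∀ i, Projective (P i)) ∧
      (∀ i, FIMod.FGBound (P i) (N + i)) ∧
      (∀ S : FIObj, Function.Surjective (ε.app S)) ∧
      (∀ S : FIObj, LinearMap.range ((d 0).app S).hom = LinearMap.ker (ε.app S).hom) ∧
      (∀ (i : ℕ) (S : FIObj),
        LinearMap.range ((d (i + 1)).app S).hom = LinearMap.ker ((d i).app S).hom) := by
  obtain ⟨hfin, k, hgen⟩ := hM.exists_generatedBelow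
  obtain ⟨N, hreg⟩ := FIMod.exists_regularityLE hfin hgen
  obtain ⟨P, d, ε, hP, hexact⟩ := FIMod.exists_resolution
    (Φ := fun i K ↦ K.PointwiseFinite ∧ K.RegularityLE (N + i))
    (Ψ := fun i P ↦ Projective P ∧ P.FGBound (N + i))
    (fun i K hK ↦ hK.2.exists_syzygy hK.1) ⟨hfin, hreg⟩
  exact ⟨N, P, d, ε, fun i ↦ (hP i).1, fun i ↦ (hP i).2, hexact⟩
end

section
/- Let 𝒜 and ℬ be abelian categories with enough injectives, and suppose that the full subcategory of injective objects of 𝒜 is equivalent to the full subcategory of injective objects of ℬ. Then 𝒜 and ℬ are equivalent categories. -/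
open CategoryTheory

universe v₁ v₂ u₁ u₂

/-!
By enough injectives, every object of an abelian category is the kernel of a morphism between
injective objects. By injectivity, a morphism between two such kernels extends to a morphism of
arrows, and two morphisms of arrows `φ, ψ : f ⟶ g` induce the same morphism between the kernels
iff `φ.left - ψ.left` factors through `f`. The category is thus the quotient of the category of
arrows between injective objects by a relation which only involves the additive structure of the
full subcategory of injective objects, and an equivalence preserves that structure because it
preserves biproducts.
-/

open Limits

noncomputable section

section Category

variable {C D : Type*} [Category* C] [Category* D]

/-- A full and essentially surjective functor `F : C ⥤ D` exhibits `D` as the quotient of `C` by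
the relation of having the same image under `F`. The relation is a parameter `r` rather than
`F.homRel`, so that functors with distinct targets can be compared. -/
def quotientEquivalence {r : HomRel C} (F : C ⥤ D) [F.Full] [F.EssSurj]
    (hF : ∀ {X Y : C} (f g : X ⟶ Y), F.map f = F.map g ↔ r f g) :
    CategoryTheory.Quotient r ≌ D :=
  have homRel_eq : F.homRel = r := by
    funext X Y f g
    exact propext (hF f g)
  homRel_eq ▸ (CategoryTheory.Quotient.lift F.homRel F (fun _ _ _ _ h ↦ h)).asEquivalence

instance mapArrow_full (F : C ⥤ D) [F.Full] [F.Faithful] : F.mapArrow.Full where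
  map_surjective {f g} φ := by
    obtain ⟨l, hl⟩ := F.map_surjective φ.left
    obtain ⟨r, hr⟩ := F.map_surjective φ.right
    have comm : l ≫ g.hom = f.hom ≫ r := F.map_injective (by
      rw [F.map_comp, F.map_comp, hl, hr]
      exact φ.w)
    exact ⟨Arrow.homMk l r comm, Arrow.hom_ext _ _ hl hr⟩

instance mono_ker_ι_app [HasZeroMorphisms C] [HasKernels C] (f : Arrow C) :
    Mono ((ker.ι C).app f) :=
  inferInstanceAs (Mono (kernel.ι f.hom))

end Category

section Preadditive

variable {C D : Type*} [Category* C] [Category* D] [Preadditive C] [Preadditive D]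

/-- The degree zero half of the homotopy relation between morphisms of arrows, an arrow being viewed
as a two-term complex: the difference of the left components factors through the source arrow. -/
def homotopicOnLeft : HomRel (Arrow C) :=
  fun f g φ ψ ↦ ∃ h : f.right ⟶ g.left, f.hom ≫ h = φ.left - ψ.left

lemma homotopicOnLeft_mapArrow_map_iff (F : C ⥤ D) [F.Full] [F.Faithful] [F.Additive]
    {f g : Arrow C} (φ ψ : f ⟶ g) :
    homotopicOnLeft (F.mapArrow.map φ) (F.mapArrow.map ψ) ↔ homotopicOnLeft φ ψ := by
  have map_eq_iff (h : f.right ⟶ g.left) :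
      F.map f.hom ≫ F.map h = F.map φ.left - F.map ψ.left ↔ f.hom ≫ h = φ.left - ψ.left := by
    rw [← F.map_comp, ← F.map_sub, F.map_injective.eq_iff]
  exact F.map_surjective.exists.trans (exists_congr map_eq_iff)

end Preadditive

section Abelian

variable {A : Type*} [Category* A] [Abelian A]

lemma exists_comp_eq_iff_kernel_ι_comp_eq_zero {X Y J : A} [Injective J] (f : X ⟶ Y) (g : X ⟶ J) :
    (∃ h : Y ⟶ J, f ≫ h = g) ↔ kernel.ι f ≫ g = 0 := by
  constructor
  · rintro ⟨h, rfl⟩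
    rw [kernel.condition_assoc, zero_comp]
  · intro hg
    exact ⟨_, (ShortComplex.exact_kernel f).comp_descToInjective g hg⟩

lemma ker_map_eq_iff_homotopicOnLeft {f g : Arrow A} [Injective g.left] (φ ψ : f ⟶ g) :
    (ker A).map φ = (ker A).map ψ ↔ homotopicOnLeft φ ψ := by
  rw [homotopicOnLeft, exists_comp_eq_iff_kernel_ι_comp_eq_zero, Preadditive.comp_sub, sub_eq_zero,
    ← cancel_mono ((ker.ι A).app g), NatTrans.naturality, NatTrans.naturality]
  rfl

lemma ker_map_surjective (f g : Arrow A) [Injective g.left] [Injective g.right] :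
    Function.Surjective ((ker A).map : (f ⟶ g) → _) := by
  intro (u : kernel f.hom ⟶ kernel g.hom)
  obtain ⟨l, hl⟩ := Injective.factors (u ≫ kernel.ι g.hom) (kernel.ι f.hom)
  have comp_eq_zero : kernel.ι f.hom ≫ l ≫ g.hom = 0 := by
    rw [reassoc_of% hl, kernel.condition, comp_zero]
  obtain ⟨r, hr⟩ := (exists_comp_eq_iff_kernel_ι_comp_eq_zero f.hom (l ≫ g.hom)).2 comp_eq_zero
  exact ⟨Arrow.homMk l r hr.symm,
    (cancel_mono ((ker.ι A).app g)).1 (((ker.ι A).naturality _).trans hl)⟩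

/-- A copresentation `0 ⟶ X ⟶ I ⟶ J` exhibits `X` as a kernel, where `I ⟶ J` is obtained by
embedding the cokernel of `X ⟶ I` into `J`. -/
def kernelCokernelπCompIso {X I J : A} (i : X ⟶ I) [Mono i] (j : cokernel i ⟶ J) [Mono j] :
    kernel (cokernel.π i ≫ j) ≅ X :=
  kernelCompMono (cokernel.π i) j ≪≫ (limit.isLimit _).conePointUniqueUpToIso
    (Abelian.monoIsKernelOfCokernel _ (cokernelIsCokernel i))

variable (A) in
/-- The functor taking a morphism between injective objects of `A` to its kernel in `A`. -/
def injectiveKer : Arrow (InjectiveObject A) ⥤ A :=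
  (InjectiveObject.ι A).mapArrow ⋙ ker A

lemma injectiveKer_map_eq_iff {f g : Arrow (InjectiveObject A)} (φ ψ : f ⟶ g) :
    (injectiveKer A).map φ = (injectiveKer A).map ψ ↔ homotopicOnLeft φ ψ :=
  have : Injective ((InjectiveObject.ι A).mapArrow.obj g).left := g.left.property
  (ker_map_eq_iff_homotopicOnLeft _ _).trans
    (homotopicOnLeft_mapArrow_map_iff (InjectiveObject.ι A) φ ψ)

instance injectiveKer_full : (injectiveKer A).Full where
  map_surjective {f g} := by
    have : Injective ((InjectiveObject.ι A).mapArrow.obj g).left := g.left.property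
    have : Injective ((InjectiveObject.ι A).mapArrow.obj g).right := g.right.property
    exact (ker_map_surjective _ _).comp (InjectiveObject.ι A).mapArrow.map_surjective

instance injectiveKer_essSurj [EnoughInjectives A] : (injectiveKer A).EssSurj where
  mem_essImage X := by
    let I : InjectiveObject A := ⟨Injective.under X, inferInstance⟩
    let J : InjectiveObject A := ⟨Injective.under (cokernel (Injective.ι X)), inferInstance⟩
    let d : I ⟶ J := ObjectProperty.homMk (cokernel.π (Injective.ι X) ≫ Injective.ι _)
    exact ⟨Arrow.mk d, ⟨kernelCokernelπCompIso (Injective.ι X) (Injective.ι _)⟩⟩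

end Abelian

end

/-- If two abelian categories with enough injectives have equivalent
full subcategories of injective objects, then the categories themselves are equivalent. -/
theorem equivalence_of_injectives_lifts
    {A : Type u₁} [Category.{v₁} A] {B : Type u₂} [Category.{v₂} B]
    [Abelian A] [Abelian B] [EnoughInjectives A] [EnoughInjectives B]
    (e : ObjectProperty.FullSubcategory (fun X : A => Injective X) ≌
      ObjectProperty.FullSubcategory (fun X : B => Injective X)) :
    Nonempty (A ≌ B) := by
  let E : InjectiveObject A ≌ InjectiveObject B := e
  have : E.functor.Additive := Functor.additive_of_preserves_binary_products _
  have map_eq_iff {f g : Arrow (InjectiveObject A)} (φ ψ : f ⟶ g) :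
      (E.functor.mapArrow ⋙ injectiveKer B).map φ = (E.functor.mapArrow ⋙ injectiveKer B).map ψ ↔
        homotopicOnLeft φ ψ :=
    (injectiveKer_map_eq_iff _ _).trans (homotopicOnLeft_mapArrow_map_iff E.functor φ ψ)
  exact ⟨(quotientEquivalence (injectiveKer A) injectiveKer_map_eq_iff).symm.trans
    (quotientEquivalence (E.functor.mapArrow ⋙ injectiveKer B) map_eq_iff)⟩
end

section
/- Let R = ℂ[x_1, x_2, x_3, …] be the polynomial ring in countably infinitely many variables over ℂ, and let 𝔪 be the ideal generated by all the variables. Then for every i ≥ 0 the i-th local cohomology module H^i_𝔪(R) is zero; in particular the infinite polynomial ring has infinite depth. -/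
/-!
If `r` is `M`-regular and some power of `r` kills `N`, then `Ext^n(N, M)` vanishes as soon as
`Ext^(n-1)(N, M/rM)` does: the long exact sequence makes `r` injective on `Ext^n(N, M)`, where it
is also nilpotent. Hence an `M`-regular sequence of length greater than `n` inside `J` forces
`Ext^n(R/J^d, M) = 0` for every `d`. In a polynomial ring in infinitely many variables, any number
of distinct variables form a regular sequence, so this applies in every degree.
-/

open CategoryTheory Limits Opposite RingTheory.Sequence

universe u v w

section Ext

variable {R : Type u} [CommRing R] [Small.{v} R]

lemma isSMulRegular_ext_zero {M : ModuleCat.{v} R} {r : R} (hr : IsSMulRegular M r)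
    (N : ModuleCat.{v} R) : IsSMulRegular (Abelian.Ext N M 0) r := by
  have := hr.smulShortComplex_shortExact.mono_f
  exact (Abelian.Ext.postcomp_smul_id_mono_iff r 0).mp
    (Abelian.Ext.mono_postcomp_mk₀_of_mono N (M.smulShortComplex r).f)

lemma isSMulRegular_ext_succ {M N : ModuleCat.{v} R} {r : R} (hr : IsSMulRegular M r) {n : ℕ}
    (hn : Subsingleton (Abelian.Ext N (ModuleCat.of R (QuotSMulTop r M)) n)) :
    IsSMulRegular (Abelian.Ext N M (n + 1)) r := by
  have exact_at := Abelian.Ext.covariant_sequence_exact₁' N hr.smulShortComplex_shortExact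
    n (n + 1) rfl
  exact (Abelian.Ext.postcomp_smul_id_mono_iff r (n + 1)).mp <| exact_at.mono_g <|
    (AddCommGrpCat.isZero_of_iff_subsingleton.mpr hn).eq_zero_of_src _

lemma subsingleton_ext_of_isSMulRegular {M N : ModuleCat.{v} R} {r : R}
    (hr : r ∈ (Module.annihilator R N).radical) {n : ℕ}
    (hreg : IsSMulRegular (Abelian.Ext N M n) r) : Subsingleton (Abelian.Ext N M n) := by
  obtain ⟨k, hk⟩ := hr
  have mono_pow_smul := (Abelian.Ext.postcomp_smul_id_mono_iff (r ^ k) n).mpr (hreg.pow k)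
  exact AddCommGrpCat.subsingleton_of_isZero <| IsZero.of_mono_eq_zero _ <|
    Abelian.Ext.postcomp_smul_id_eq_zero_of_mem_annihilator hk n

theorem subsingleton_ext_of_isWeaklyRegular {M N : ModuleCat.{v} R} {rs : List R}
    (hM : IsWeaklyRegular M rs) (hN : ∀ r ∈ rs, r ∈ (Module.annihilator R N).radical)
    {n : ℕ} (hn : n < rs.length) : Subsingleton (Abelian.Ext N M n) := by
  induction rs generalizing M n with
  | nil => simp at hn
  | cons r rs ih =>
    obtain ⟨hr, hrs⟩ := (isWeaklyRegular_cons_iff M r rs).mp hM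
    obtain ⟨hNr, hNrs⟩ := List.forall_mem_cons.mp hN
    apply subsingleton_ext_of_isSMulRegular hNr
    cases n with
    | zero => exact isSMulRegular_ext_zero hr N
    | succ n =>
      exact isSMulRegular_ext_succ hr <|
        ih (M := ModuleCat.of R (QuotSMulTop r M)) hrs hNrs (Nat.lt_of_succ_lt_succ hn)

end Ext

section DerivedExt

variable {C : Type u} [Category.{v} C] [Abelian C]

lemma exists_d_comp_eq_of_d_comp_eq_zero_of_subsingleton_ext [HasExt.{w} C] {X Y : C}
    (P : ProjectiveResolution X) {n : ℕ} (hn : Subsingleton (Abelian.Ext X Y (n + 1)))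
    {f : P.complex.X (n + 1) ⟶ Y} (hf : P.complex.d (n + 2) (n + 1) ≫ f = 0) :
    ∃ g : P.complex.X n ⟶ Y, P.complex.d (n + 1) n ≫ g = f :=
  (P.extMk_eq_zero_iff f (n + 2) rfl hf n rfl).mp (hn.elim _ _)

lemma eq_zero_of_d_comp_eq_zero_of_subsingleton_hom {X Y : C} (P : ProjectiveResolution X)
    (hXY : Subsingleton (X ⟶ Y)) {f : P.complex.X 0 ⟶ Y} (hf : P.complex.d 1 0 ≫ f = 0) :
    f = 0 := by
  have desc_eq_zero : P.exact₀.desc f hf = 0 := hXY.elim _ _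
  rw [← P.exact₀.g_desc f hf, desc_eq_zero, comp_zero]

theorem isZero_Ext_of_subsingleton_ext {R : Type*} [Ring R] [Linear R C] [EnoughProjectives C]
    [HasExt.{w} C] {X Y : C} {n : ℕ} (hn : Subsingleton (Abelian.Ext X Y n)) :
    IsZero (((Ext R C n).obj (op X)).obj Y) := by
  let P := projectiveResolution X
  refine IsZero.of_iso ?_ (P.isoExt n Y)
  rw [← HomologicalComplex.exactAt_iff_isZero_homology]
  cases n with
  | zero =>
    rw [HomologicalComplex.exactAt_iff' _ 0 0 1 (by simp) (by simp),
      ShortComplex.moduleCat_exact_iff]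
    intro (f : P.complex.X 0 ⟶ Y) hf
    have hXY : Subsingleton (X ⟶ Y) := Abelian.Ext.addEquiv₀.symm.subsingleton
    exact ⟨0, by rw [eq_zero_of_d_comp_eq_zero_of_subsingleton_hom P hXY hf, map_zero]; rfl⟩
  | succ n =>
    rw [HomologicalComplex.exactAt_iff' _ n (n + 1) (n + 2) (by simp) (by simp),
      ShortComplex.moduleCat_exact_iff]
    intro (f : P.complex.X (n + 1) ⟶ Y) hf
    exact exists_d_comp_eq_of_d_comp_eq_zero_of_subsingleton_ext P hn hf

end DerivedExt

section LocalCohomology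

variable {R : Type u} [CommRing R]

lemma isZero_localCohomology_obj_of_isZero_Ext {J : Ideal R} {M : ModuleCat.{u} R} {i : ℕ}
    (h : ∀ d : ℕ, IsZero (((Ext R (ModuleCat.{u} R) i).obj
      (op (ModuleCat.of R (R ⧸ J ^ d)))).obj M)) :
    IsZero ((localCohomology J i).obj M) := by
  let D := localCohomology.diagram (localCohomology.idealPowersDiagram J) i
  have hD : IsZero (D ⋙ (evaluation _ _).obj M) := Functor.isZero _ fun t ↦ h t.unop.unop
  exact IsColimit.isZero_pt
    (isColimitOfPreserves ((evaluation _ _).obj M) (colimit.isColimit D)) hD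

theorem isZero_localCohomology_obj_of_isWeaklyRegular {J : Ideal R} {M : ModuleCat.{u} R}
    {rs : List R} (hM : IsWeaklyRegular M rs) (hJ : ∀ r ∈ rs, r ∈ J) {i : ℕ}
    (hi : i < rs.length) : IsZero ((localCohomology J i).obj M) := by
  refine isZero_localCohomology_obj_of_isZero_Ext fun d ↦ isZero_Ext_of_subsingleton_ext <|
    subsingleton_ext_of_isWeaklyRegular hM (fun r hr ↦ ⟨d, ?_⟩) hi
  rw [Ideal.annihilator_quotient]
  exact Ideal.pow_mem_pow (hJ r hr) d

end LocalCohomology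

section MvPolynomial

variable {σ : Type u} {k : Type v}

lemma mem_span_X_image_of_X_mul_mem [CommSemiring k] {s : Set σ} {j : σ} (hj : j ∉ s)
    {p : MvPolynomial σ k} (hp : MvPolynomial.X j * p ∈ Ideal.span (MvPolynomial.X '' s)) :
    p ∈ Ideal.span (MvPolynomial.X '' s) := by
  rw [MvPolynomial.mem_ideal_span_X_image] at hp ⊢
  intro m hm
  obtain ⟨l, hl, hml⟩ := hp (Finsupp.single j 1 + m) (by
    rwa [MvPolynomial.mem_support_iff, MvPolynomial.coeff_X_mul, ← MvPolynomial.mem_support_iff])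
  have hjl : j ≠ l := fun h ↦ hj (h ▸ hl)
  exact ⟨l, hl, by simpa [Finsupp.single_eq_of_ne' hjl] using hml⟩

theorem isWeaklyRegular_map_X [CommRing k] {l : List σ} (hl : l.Nodup) :
    IsWeaklyRegular (MvPolynomial σ k) (l.map (MvPolynomial.X (R := k))) := by
  induction l using List.reverseRecOn with
  | nil => exact .nil _ _
  | append_singleton l j ih =>
    obtain ⟨hj, hl⟩ : j ∉ l ∧ l.Nodup :=
      List.nodup_cons.mp ((List.perm_append_singleton j l).nodup_iff.mp hl)
    have ofList_eq : Ideal.ofList (l.map MvPolynomial.X) =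
        Ideal.span (MvPolynomial.X (R := k) '' {a | a ∈ l}) := by
      simp [Ideal.ofList, Set.image]
    rw [List.map_append, List.map_singleton, isWeaklyRegular_append_iff,
      isWeaklyRegular_singleton_iff, isSMulRegular_quotient_iff_mem_of_smul_mem,
      smul_eq_mul, Ideal.mul_top, ofList_eq]
    exact ⟨ih hl, fun _ ↦ mem_span_X_image_of_X_mul_mem (s := {a | a ∈ l}) hj⟩

end MvPolynomial

theorem localCohomology_of_infinite_polynomial_ring_vanishes_general {σ : Type u} [Infinite σ]
    {k : Type v} [CommRing k] (i : ℕ) :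
    Subsingleton
      ((localCohomology
          (Ideal.span (Set.range (MvPolynomial.X : σ → MvPolynomial σ k))) i).obj
        (ModuleCat.of (MvPolynomial σ k) (MvPolynomial σ k))) := by
  obtain ⟨s, hs⟩ := Infinite.exists_subset_card_eq σ (i + 1)
  rw [← ModuleCat.isZero_iff_subsingleton]
  refine isZero_localCohomology_obj_of_isWeaklyRegular
    (isWeaklyRegular_map_X s.nodup_toList) (fun r hr ↦ ?_) (by simp [hs])
  obtain ⟨j, -, rfl⟩ := List.mem_map.mp hr
  exact Ideal.subset_span ⟨j, rfl⟩

/-- Let R = ℂ[x_1, x_2, x_3, …] be the polynomial ring in countably many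
variables and 𝔪 the ideal generated by all the variables.  Then every local cohomology
module H^i_𝔪(R) (defined as colim_d Ext^i(R/𝔪^d, R)) vanishes; in particular R has
infinite depth. -/
theorem localCohomology_of_infinite_polynomial_ring_vanishes (i : ℕ) :
    Subsingleton
      ((localCohomology
          (Ideal.span (Set.range (MvPolynomial.X : ℕ → MvPolynomial ℕ ℂ))) i).obj
        (ModuleCat.of (MvPolynomial ℕ ℂ) (MvPolynomial ℕ ℂ))) := by
  exact localCohomology_of_infinite_polynomial_ring_vanishes_general i
end

section
/- Let ν ⊆ λ be partitions. Then Σ_μ (−1)^{|μ|−|ν|} = δ_{λ,ν}, where the sum runs over all partitions μ with ν ⊆ μ ⊆ λ such that λ/μ is a horizontal strip and μ/ν is a vertical strip, and δ_{λ,ν} equals 1 if λ = ν and 0 otherwise. -/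
/-- `λ/μ` is a horizontal strip: `μ ⊆ λ` and `λ_{i+1} ≤ μ_i` for all i
(rows are 0-indexed, so `rowLen i` is the (i+1)-st part). -/
def YoungDiagram.IsHStrip (lam μ : YoungDiagram) : Prop :=
  μ ≤ lam ∧ ∀ i : ℕ, lam.rowLen (i + 1) ≤ μ.rowLen i

/-- `λ/μ` is a vertical strip: `μ ⊆ λ` and `λ_i − μ_i ≤ 1` for all i. -/
def YoungDiagram.IsVStrip (lam μ : YoungDiagram) : Prop :=
  μ ≤ lam ∧ ∀ i : ℕ, lam.rowLen i ≤ μ.rowLen i + 1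

/-!
If `lam ≠ ν`, let `c` be a cell of `lam / ν` of least content `j - i`. The cell below `c` is not in
`lam` and the cell to the left of `c`, if there is one, is in `ν`, since otherwise `lam / ν` would
have a cell of smaller content. Consequently adding or removing `c` maps every summation index `μ`
to another one. This is an involution that changes `|μ|` by one, so the terms cancel in pairs.
-/

open scoped symmDiff

theorem neg_one_pow_sub_of_le {R : Type*} [Monoid R] [HasDistribNeg R] {m n : ℕ} (h : n ≤ m) :
    (-1 : R) ^ (m - n) = (-1) ^ m * (-1) ^ n := by
  rw [← pow_add]
  exact neg_one_pow_congr (by rw [Nat.even_sub h, Nat.even_add])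

section Toggle

theorem isLowerSet_symmDiff_singleton {α : Type*} [PartialOrder α] {s : Set α} {c : α}
    (hs : IsLowerSet s) (hlt : ∀ a < c, a ∈ s) (hgt : ∀ a, c < a → a ∉ s) :
    IsLowerSet (s ∆ {c}) := by
  intro a b hba ha
  rcases eq_or_ne b c with rfl | hbc
  · rcases hba.eq_or_lt with rfl | hba
    · exact ha
    · rcases ha with ⟨has, -⟩ | ⟨rfl, -⟩
      · exact absurd has (hgt a hba)
      · exact absurd hba (lt_irrefl _)
  · refine Or.inl ⟨?_, hbc⟩
    rcases ha with ⟨has, -⟩ | ⟨rfl, -⟩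
    · exact hs hba has
    · exact hlt b (lt_of_le_of_ne hba hbc)

theorem neg_one_pow_card_symmDiff_singleton {α R : Type*} [DecidableEq α] [Monoid R]
    [HasDistribNeg R] (s : Finset α) (c : α) : (-1 : R) ^ (s ∆ {c}).card = -(-1) ^ s.card := by
  by_cases hc : c ∈ s
  · have herase : s ∆ {c} = s.erase c := by grind [Finset.mem_symmDiff]
    rw [herase, ← Finset.card_erase_add_one hc, pow_succ, mul_neg_one, neg_neg]
  · have hinsert : s ∆ {c} = insert c s := by grind [Finset.mem_symmDiff]
    rw [hinsert, Finset.card_insert_of_notMem hc, pow_succ, mul_neg_one]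

/-- The cell `c` is an inner or an outer corner of `μ`: removing it from `μ` if it is there, and
adding it otherwise, leaves a Young diagram. -/
structure IsToggleable (μ : YoungDiagram) (c : ℕ × ℕ) : Prop where
  mem_of_lt : ∀ a < c, a ∈ μ
  notMem_of_gt : ∀ a, c < a → a ∉ μ

/-- The Young diagram obtained from `μ` by removing the cell `c` if it is in `μ` and adding it
otherwise. -/
def toggle (μ : YoungDiagram) (c : ℕ × ℕ) (h : IsToggleable μ c) : YoungDiagram where
  cells := μ.cells ∆ {c}
  isLowerSet := by
    rw [Finset.coe_symmDiff, Finset.coe_singleton]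
    exact isLowerSet_symmDiff_singleton μ.isLowerSet h.mem_of_lt h.notMem_of_gt

variable {μ : YoungDiagram} {c : ℕ × ℕ} (h : IsToggleable μ c)

theorem mem_toggle {a : ℕ × ℕ} :
    a ∈ toggle μ c h ↔ a ∈ μ ∧ a ≠ c ∨ a = c ∧ a ∉ μ := by
  rw [← YoungDiagram.mem_cells, toggle, Finset.mem_symmDiff, Finset.mem_singleton,
    YoungDiagram.mem_cells]

theorem mem_toggle_of_ne {a : ℕ × ℕ} (hac : a ≠ c) : a ∈ toggle μ c h ↔ a ∈ μ := by
  simp [mem_toggle, hac]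

theorem toggle_ne : toggle μ c h ≠ μ := by
  intro hfix
  have hmem := mem_toggle h (a := c)
  rw [hfix] at hmem
  tauto

theorem toggle_toggle (h' : IsToggleable (toggle μ c h) c) : toggle (toggle μ c h) c h' = μ :=
  YoungDiagram.ext (symmDiff_symmDiff_cancel_right _ _)

theorem neg_one_pow_card_toggle {R : Type*} [Monoid R] [HasDistribNeg R] :
    (-1 : R) ^ (toggle μ c h).card = -(-1) ^ μ.card :=
  neg_one_pow_card_symmDiff_singleton μ.cells c

end Toggle

section Strips

variable {lam μ : YoungDiagram}

theorem isHStrip_iff_mem :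
    lam.IsHStrip μ ↔ μ ≤ lam ∧ ∀ i j, (i + 1, j) ∈ lam → (i, j) ∈ μ := by
  simp only [YoungDiagram.IsHStrip, YoungDiagram.mem_iff_lt_rowLen, forall_lt_iff_le]

theorem isVStrip_iff_mem :
    lam.IsVStrip μ ↔ μ ≤ lam ∧ ∀ i j, (i, j + 1) ∈ lam → (i, j) ∈ μ := by
  simp only [YoungDiagram.IsVStrip, YoungDiagram.mem_iff_lt_rowLen, ← Nat.lt_sub_iff_add_lt,
    forall_lt_iff_le, Nat.sub_le_iff_le_add]

theorem isHStrip_refl (lam : YoungDiagram) : lam.IsHStrip lam :=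
  ⟨le_rfl, fun i => lam.rowLen_anti i (i + 1) i.le_succ⟩

theorem isVStrip_refl (lam : YoungDiagram) : lam.IsVStrip lam :=
  ⟨le_rfl, fun _ => Nat.le_succ _⟩

/-- The index set of the alternating sum: the diagrams `μ` such that `lam / μ` is a horizontal strip
and `μ / ν` is a vertical strip. -/
def stripInterpolants (lam ν : YoungDiagram) : Set YoungDiagram :=
  {μ | lam.IsHStrip μ ∧ μ.IsVStrip ν}

theorem finite_stripInterpolants (lam ν : YoungDiagram) : (stripInterpolants lam ν).Finite := by
  refine Set.Finite.of_injOn (f := YoungDiagram.cells) (t := lam.cells.powerset) ?_ ?_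
    (Finset.finite_toSet _)
  · exact fun μ hμ => Finset.mem_powerset.2 (YoungDiagram.cells_subset_iff.2 hμ.1.1)
  · exact fun _ _ _ _ => YoungDiagram.ext

theorem stripInterpolants_self (lam : YoungDiagram) : stripInterpolants lam lam = {lam} := by
  refine Set.eq_singleton_iff_unique_mem.2 ⟨⟨isHStrip_refl lam, isVStrip_refl lam⟩, ?_⟩
  exact fun μ hμ => le_antisymm hμ.1.1 hμ.2.1

theorem finsum_neg_one_pow_card_sub {R : Type*} [Ring R] (lam ν : YoungDiagram) :
    ∑ᶠ μ ∈ stripInterpolants lam ν, (-1 : R) ^ (μ.card - ν.card) =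
      (∑ᶠ μ ∈ stripInterpolants lam ν, (-1) ^ μ.card) * (-1) ^ ν.card := by
  rw [finsum_mem_mul' _ _ (finite_stripInterpolants lam ν)]
  refine finsum_mem_congr rfl fun μ hμ => neg_one_pow_sub_of_le ?_
  exact Finset.card_le_card (YoungDiagram.cells_subset_iff.2 hμ.2.1)

end Strips

section Involution

/-- The cell `c` of the skew shape `lam / ν` has no cell of `lam / ν` directly below it or directly
to its left. The left neighbour is `(c.1, j)` with `j + 1 = c.2`, so that nothing is asked of `c` in
the first column. Toggling such a cell is the sign-reversing involution on `stripInterpolants`. -/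
structure IsSouthwestCorner (lam ν : YoungDiagram) (c : ℕ × ℕ) : Prop where
  mem : c ∈ lam
  notMem : c ∉ ν
  below_notMem : (c.1 + 1, c.2) ∉ lam
  left_mem : ∀ j, j + 1 = c.2 → (c.1, j) ∈ ν

variable {lam μ ν : YoungDiagram} {c : ℕ × ℕ}

theorem exists_isSouthwestCorner (hle : ν ≤ lam) (hne : lam ≠ ν) :
    ∃ c, IsSouthwestCorner lam ν c := by
  have hskew : (lam.cells \ ν.cells).Nonempty :=
    Finset.sdiff_nonempty.2 fun hsub => hne (le_antisymm hsub hle)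
  obtain ⟨⟨i, j⟩, hc, hmin⟩ :=
    Finset.exists_min_image (lam.cells \ ν.cells) (fun a => (a.2 : ℤ) - a.1) hskew
  simp only [Finset.mem_sdiff, YoungDiagram.mem_cells] at hc hmin
  refine ⟨(i, j), hc.1, hc.2, fun hbelow => ?_, ?_⟩
  · have hbelow_notMem : (i + 1, j) ∉ ν := fun h => hc.2 (ν.up_left_mem i.le_succ le_rfl h)
    have := hmin _ ⟨hbelow, hbelow_notMem⟩
    lia
  · rintro j rfl
    by_contra hleft
    have := hmin _ ⟨lam.up_left_mem le_rfl j.le_succ hc.1, hleft⟩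
    lia

theorem IsSouthwestCorner.isToggleable (hc : IsSouthwestCorner lam ν c)
    (hμ : μ ∈ stripInterpolants lam ν) : IsToggleable μ c := by
  obtain ⟨hμlam, hH⟩ := isHStrip_iff_mem.1 hμ.1
  obtain ⟨hνμ, hV⟩ := isVStrip_iff_mem.1 hμ.2
  obtain ⟨i, j⟩ := c
  constructor
  · rintro ⟨r, s⟩ hlt
    rcases Prod.lt_iff.1 hlt with ⟨hr, hs⟩ | ⟨hr, hs⟩
    · exact hH r s (lam.up_left_mem hr hs hc.mem)
    · obtain ⟨k, rfl⟩ := Nat.exists_eq_add_one_of_ne_zero (Nat.ne_zero_of_lt hs)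
      exact hνμ (ν.up_left_mem hr (Nat.le_of_lt_succ hs) (hc.left_mem k rfl))
  · rintro ⟨r, s⟩ hgt hmem
    rcases Prod.lt_iff.1 hgt with ⟨hr, hs⟩ | ⟨hr, hs⟩
    · exact hc.below_notMem (lam.up_left_mem hr hs (hμlam hmem))
    · exact hc.notMem (hV i j (μ.up_left_mem hr hs hmem))

theorem IsSouthwestCorner.toggle_mem_stripInterpolants (hc : IsSouthwestCorner lam ν c)
    (hμ : μ ∈ stripInterpolants lam ν) (h : IsToggleable μ c) :
    toggle μ c h ∈ stripInterpolants lam ν := by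
  obtain ⟨hμlam, hH⟩ := isHStrip_iff_mem.1 hμ.1
  obtain ⟨hνμ, hV⟩ := isVStrip_iff_mem.1 hμ.2
  refine ⟨isHStrip_iff_mem.2 ⟨fun a ha => ?_, fun i j hij => ?_⟩,
    isVStrip_iff_mem.2 ⟨fun a ha => ?_, fun i j hij => ?_⟩⟩
  · rcases (mem_toggle h).1 ha with ⟨haμ, -⟩ | ⟨rfl, -⟩
    · exact hμlam haμ
    · exact hc.mem
  · refine (mem_toggle_of_ne h ?_).2 (hH i j hij)
    rintro rfl
    exact hc.below_notMem hij
  · exact (mem_toggle_of_ne h (ne_of_mem_of_not_mem ha hc.notMem)).2 (hνμ ha)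
  · rcases (mem_toggle h).1 hij with ⟨hijμ, -⟩ | ⟨rfl, -⟩
    · exact hV i j hijμ
    · exact hc.left_mem j rfl

theorem IsSouthwestCorner.finsum_neg_one_pow_card_eq_zero (hc : IsSouthwestCorner lam ν c)
    {R : Type*} [Ring R] : ∑ᶠ μ ∈ stripInterpolants lam ν, (-1 : R) ^ μ.card = 0 := by
  have hfin := finite_stripInterpolants lam ν
  have htoggle : ∀ μ ∈ hfin.toFinset, IsToggleable μ c := fun μ hμ =>
    hc.isToggleable (hfin.mem_toFinset.1 hμ)
  rw [finsum_mem_eq_finite_toFinset_sum _ hfin]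
  refine Finset.sum_involution (fun μ hμ => toggle μ c (htoggle μ hμ)) ?_ ?_ ?_ ?_
  · intro μ hμ
    rw [neg_one_pow_card_toggle, add_neg_cancel]
  · exact fun μ hμ _ => toggle_ne _
  · exact fun μ hμ => hfin.mem_toFinset.2
      (hc.toggle_mem_stripInterpolants (hfin.mem_toFinset.1 hμ) (htoggle μ hμ))
  · exact fun μ hμ => toggle_toggle _ _

end Involution

open Classical in
/-- For partitions ν ⊆ λ,
`Σ_μ (−1)^{|μ|−|ν|} = δ_{λ,ν}`, the sum over all partitions μ with ν ⊆ μ ⊆ λ such that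
λ/μ is a horizontal strip and μ/ν is a vertical strip.  (Partitions are encoded as Young
diagrams; the sum is a `finsum`, the summation set being finite.) -/
theorem hstrip_vstrip_alternating_sum (lam ν : YoungDiagram) (h : ν ≤ lam) :
    (∑ᶠ (μ : YoungDiagram) (_ : lam.IsHStrip μ ∧ μ.IsVStrip ν),
        ((-1 : ℤ)) ^ (μ.card - ν.card)) =
      if lam = ν then 1 else 0 := by
  change ∑ᶠ μ ∈ stripInterpolants lam ν, (-1 : ℤ) ^ (μ.card - ν.card) = _
  split_ifs with heq
  · rw [heq, stripInterpolants_self, finsum_mem_singleton, Nat.sub_self, pow_zero]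
  · obtain ⟨c, hc⟩ := exists_isSouthwestCorner h heq
    rw [finsum_neg_one_pow_card_sub, hc.finsum_neg_one_pow_card_eq_zero, zero_mul]
end

section
/- Let ≤ be the horizontal-strip relation on partitions. Suppose α assigns to every chain ν ≤ μ ≤ λ of partitions an element α(ν,μ,λ) ∈ ℂ^× satisfying the 2-cocycle condition α(ν,μ,λ)·α(ρ,ν,λ) = α(ρ,μ,λ)·α(ρ,ν,μ) for every chain ρ ≤ ν ≤ μ ≤ λ. Then α is a coboundary: there is a function β assigning to every pair μ ≤ λ an element β(μ,λ) ∈ ℂ^× such that α(ν,μ,λ) = β(μ,λ)·β(ν,λ)^{−1}·β(ν,μ) for every chain ν ≤ μ ≤ λ. (Equivalently, the second cohomology of the nerve of the set of partitions with the horizontal-strip relation, with coefficients in ℂ^×, is trivial.) -/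
/-- The horizontal-strip relation on partitions: `μ ≤ λ` iff `μ ⊆ λ` and λ/μ is a
horizontal strip. -/
def YoungDiagram.hsLE (μ lam : YoungDiagram) : Prop := lam.IsHStrip μ

/-!
Let `r` remove the first row of a partition. If `μ ≤ λ`, then `r μ ≤ r λ` and `r λ ≤ μ`, so a
chain `ν ≤ μ ≤ λ` produces the three chains `r λ ≤ ν ≤ μ ≤ λ`, `r μ ≤ r λ ≤ ν ≤ μ` and
`r ν ≤ r μ ≤ r λ ≤ ν`: the prism decomposition of a homotopy between the identity and `r` on the
nerve. Hence every 2-cocycle is cohomologous to its pullback along `r`. Every partition is emptied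
by finitely many iterations of `r`, so multiplying up the successive homotopies leaves a constant
cocycle, which is a coboundary.
-/

open Filter Function

section RelationNerve

variable {X G : Type*} [CommGroup G]

/-- Multiplicative 2-cocycles on the nerve of a relation `R`, whose simplices are the tuples with
`R` holding between every earlier and every later entry. Cochains are total functions; only their
values on simplices matter. -/
def IsTwoCocycle (R : X → X → Prop) (a : X → X → X → G) : Prop :=
  ∀ w x y z, R w x → R w y → R w z → R x y → R x z → R y z →
    a x y z * a w x z = a w y z * a w x y

/-- The multiplicative coboundary of a 1-cochain. -/
def twoCoboundary (b : X → X → G) (x y z : X) : G :=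
  b y z * (b x z)⁻¹ * b x y

/-- Endomorphisms `r` of a relation that also satisfy `R (r y) x` whenever `R x y`; these are the
maps to which the identity is joined by a prism homotopy on the nerve. Nothing is asked about
`R (r x) y`, which fails for the removal of first rows of partitions. -/
structure IsInterlacing (R : X → X → Prop) (r : X → X) : Prop where
  map_rel : ∀ {x y}, R x y → R (r x) (r y)
  map_rel_left : ∀ {x y}, R x y → R (r y) x

/-- The 1-cochain by which the prism homotopy from the identity to `r` changes a 2-cocycle `a`: the
square on `r x, x, r y, y` is cut along its diagonal from `r y` to `x`. -/
def prismCochain (r : X → X) (a : X → X → X → G) (x y : X) : G :=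
  a (r y) x y * (a (r x) (r y) x)⁻¹

theorem twoCoboundary_const (c : G) (x y z : X) : twoCoboundary (fun _ _ ↦ c) x y z = c := by
  simp [twoCoboundary]

theorem twoCoboundary_mul (b c : X → X → G) (x y z : X) :
    twoCoboundary (fun x y ↦ b x y * c x y) x y z =
      twoCoboundary b x y z * twoCoboundary c x y z := by
  simp only [twoCoboundary, mul_inv]
  ac_rfl

theorem twoCoboundary_prod {ι : Type*} (s : Finset ι) (b : ι → X → X → G) (x y z : X) :
    twoCoboundary (fun x y ↦ ∏ i ∈ s, b i x y) x y z = ∏ i ∈ s, twoCoboundary (b i) x y z := by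
  simp only [twoCoboundary, Finset.prod_mul_distrib, Finset.prod_inv_distrib]

theorem prismCochain_of_isFixedPt {r : X → X} {p : X} (hp : IsFixedPt r p)
    (a : X → X → X → G) : prismCochain r a p p = 1 := by
  simp [prismCochain, hp.eq]

variable {R : X → X → Prop} {r : X → X} {a : X → X → X → G} {x y z : X}

theorem IsInterlacing.iterate_rel (hr : IsInterlacing R r) (hxy : R x y) (n : ℕ) :
    R (r^[n] x) (r^[n] y) := by
  induction n with
  | zero => exact hxy
  | succ n ih => simpa only [iterate_succ_apply'] using hr.map_rel ih

theorem IsTwoCocycle.eq_twoCoboundary_prismCochain_mul [Std.Refl R] (ha : IsTwoCocycle R a)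
    (hr : IsInterlacing R r) (hxy : R x y) (hxz : R x z) (hyz : R y z) :
    a x y z = twoCoboundary (prismCochain r a) x y z * a (r x) (r y) (r z) := by
  have map_rel_self (w : X) : R (r w) w := hr.map_rel_left (refl w)
  have top := eq_mul_inv_of_mul_eq <| ha (r z) x y z (hr.map_rel_left hxz) (hr.map_rel_left hyz)
    (map_rel_self z) hxy hxz hyz
  have middle := eq_mul_inv_of_mul_eq <| ha (r y) (r z) x y (hr.map_rel hyz) (hr.map_rel_left hxy)
    (map_rel_self y) (hr.map_rel_left hxz) (hr.map_rel_left hyz) hxy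
  have bottom := eq_mul_inv_of_mul_eq <| ha (r x) (r y) (r z) x (hr.map_rel hxy) (hr.map_rel hxz)
    (map_rel_self x) (hr.map_rel hyz) (hr.map_rel_left hxy) (hr.map_rel_left hxz)
  rw [top, middle, bottom]
  simp only [twoCoboundary, prismCochain, mul_inv, inv_inv]
  ac_rfl

theorem IsTwoCocycle.eq_prod_twoCoboundary_prismCochain_mul [Std.Refl R] (ha : IsTwoCocycle R a)
    (hr : IsInterlacing R r) (hxy : R x y) (hxz : R x z) (hyz : R y z) (N : ℕ) :
    a x y z =
      (∏ n ∈ Finset.range N, twoCoboundary (prismCochain r a) (r^[n] x) (r^[n] y) (r^[n] z)) *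
        a (r^[N] x) (r^[N] y) (r^[N] z) := by
  induction N with
  | zero => simp
  | succ N ih =>
    have homotopy := ha.eq_twoCoboundary_prismCochain_mul hr (hr.iterate_rel hxy N)
      (hr.iterate_rel hxz N) (hr.iterate_rel hyz N)
    simp only [Finset.prod_range_succ, iterate_succ_apply', mul_assoc, ← homotopy]
    exact ih

theorem isFixedPt_of_eventually_iterate_eq {p : X} (h : ∀ᶠ n in atTop, r^[n] x = p) :
    IsFixedPt r p := by
  obtain ⟨n, hn, hn_succ⟩ := (h.and ((tendsto_add_atTop_nat 1).eventually h)).exists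
  rwa [iterate_succ_apply', hn] at hn_succ

theorem finprod_prismCochain_iterate {p : X} {N : ℕ} (hp : IsFixedPt r p)
    (hx : ∀ n ≥ N, r^[n] x = p) (hy : ∀ n ≥ N, r^[n] y = p) (a : X → X → X → G) :
    ∏ᶠ n, prismCochain r a (r^[n] x) (r^[n] y) =
      ∏ n ∈ Finset.range N, prismCochain r a (r^[n] x) (r^[n] y) := by
  refine finprod_eq_prod_of_mulSupport_subset _ fun n hn ↦ ?_
  rw [Finset.coe_range, Set.mem_Iio]
  contrapose! hn
  rw [notMem_mulSupport, hx n hn, hy n hn, prismCochain_of_isFixedPt hp]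

theorem IsTwoCocycle.exists_eq_twoCoboundary [Std.Refl R] (ha : IsTwoCocycle R a)
    (hr : IsInterlacing R r) {p : X} (hrp : ∀ x, ∀ᶠ n in atTop, r^[n] x = p) :
    ∃ b : X → X → G, ∀ x y z, R x y → R x z → R y z → a x y z = twoCoboundary b x y z := by
  have hp : IsFixedPt r p := isFixedPt_of_eventually_iterate_eq (hrp p)
  refine ⟨fun x y ↦ (∏ᶠ n, prismCochain r a (r^[n] x) (r^[n] y)) * a p p p,
    fun x y z hxy hxz hyz ↦ ?_⟩
  obtain ⟨N, hN⟩ := eventually_atTop.1 ((hrp x).and ((hrp y).and (hrp z)))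
  have hx : ∀ n ≥ N, r^[n] x = p := fun n hn ↦ (hN n hn).1
  have hy : ∀ n ≥ N, r^[n] y = p := fun n hn ↦ (hN n hn).2.1
  have hz : ∀ n ≥ N, r^[n] z = p := fun n hn ↦ (hN n hn).2.2
  calc
    a x y z = (∏ n ∈ Finset.range N,
        twoCoboundary (fun x y ↦ prismCochain r a (r^[n] x) (r^[n] y)) x y z) * a p p p := by
      rw [ha.eq_prod_twoCoboundary_prismCochain_mul hr hxy hxz hyz N, hx N le_rfl, hy N le_rfl,
        hz N le_rfl]
      rfl
    _ = twoCoboundary (fun x y ↦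
        (∏ n ∈ Finset.range N, prismCochain r a (r^[n] x) (r^[n] y)) * a p p p) x y z := by
      rw [twoCoboundary_mul, twoCoboundary_prod, twoCoboundary_const]
    _ = _ := by
      simp only [twoCoboundary, finprod_prismCochain_iterate hp hx hy,
        finprod_prismCochain_iterate hp hx hz, finprod_prismCochain_iterate hp hy hz]

end RelationNerve

section FirstRow

open YoungDiagram

theorem youngDiagram_le_iff_rowLen_le {μ lam : YoungDiagram} :
    μ ≤ lam ↔ ∀ i, μ.rowLen i ≤ lam.rowLen i := by
  simp only [← forall_lt_iff_le, ← mem_iff_lt_rowLen]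
  exact Prod.forall

/-- The partition `(λ₂, λ₃, …)` obtained from `λ` by deleting its first row. -/
noncomputable def removeFirstRow (lam : YoungDiagram) : YoungDiagram where
  cells := lam.cells.preimage (Prod.map Nat.succ id)
    (Nat.succ_injective.prodMap injective_id).injOn
  isLowerSet := fun c d hdc hc ↦ by
    rw [Finset.mem_coe, Finset.mem_preimage] at hc ⊢
    exact lam.isLowerSet (Prod.mk_le_mk.2 ⟨Nat.succ_le_succ hdc.1, hdc.2⟩) hc

theorem mem_removeFirstRow {lam : YoungDiagram} {i j : ℕ} :
    (i, j) ∈ removeFirstRow lam ↔ (i + 1, j) ∈ lam :=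
  Finset.mem_preimage (hf := (Nat.succ_injective.prodMap injective_id).injOn)

theorem rowLen_removeFirstRow (lam : YoungDiagram) (i : ℕ) :
    (removeFirstRow lam).rowLen i = lam.rowLen (i + 1) :=
  eq_of_forall_lt_iff fun j ↦ by
    rw [← mem_iff_lt_rowLen, ← mem_iff_lt_rowLen, mem_removeFirstRow]

theorem mem_iterate_removeFirstRow {lam : YoungDiagram} {n i j : ℕ} :
    (i, j) ∈ removeFirstRow^[n] lam ↔ (i + n, j) ∈ lam := by
  induction n generalizing i with
  | zero => rfl
  | succ n ih => rw [iterate_succ_apply', mem_removeFirstRow, ih, Nat.add_right_comm, Nat.add_assoc]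

theorem iterate_removeFirstRow_eq_bot {lam : YoungDiagram} {n : ℕ} (hn : lam.colLen 0 ≤ n) :
    removeFirstRow^[n] lam = ⊥ := by
  refine eq_bot_iff.2 fun ⟨i, j⟩ hij ↦ absurd ?_ hn.not_gt
  have row_lt : i + n < lam.colLen j :=
    mem_iff_lt_colLen.1 (mem_iterate_removeFirstRow.1 hij)
  calc
    n ≤ i + n := Nat.le_add_left n i
    _ < lam.colLen j := row_lt
    _ ≤ lam.colLen 0 := lam.colLen_anti 0 j j.zero_le

theorem eventually_iterate_removeFirstRow_eq_bot (lam : YoungDiagram) :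
    ∀ᶠ n in atTop, removeFirstRow^[n] lam = ⊥ :=
  (eventually_ge_atTop (lam.colLen 0)).mono fun _ ↦ iterate_removeFirstRow_eq_bot

theorem hsLE_iff_rowLen_le {μ lam : YoungDiagram} :
    μ.hsLE lam ↔
      (∀ i, μ.rowLen i ≤ lam.rowLen i) ∧ ∀ i, lam.rowLen (i + 1) ≤ μ.rowLen i :=
  and_congr_left' youngDiagram_le_iff_rowLen_le

instance instReflHsLE : Std.Refl YoungDiagram.hsLE where
  refl lam := ⟨le_rfl, fun i ↦ lam.rowLen_anti i (i + 1) i.le_succ⟩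

theorem isInterlacing_removeFirstRow : IsInterlacing YoungDiagram.hsLE removeFirstRow where
  map_rel h := by
    rw [hsLE_iff_rowLen_le] at h ⊢
    simp only [rowLen_removeFirstRow]
    exact ⟨fun i ↦ h.1 (i + 1), fun i ↦ h.2 (i + 1)⟩
  map_rel_left h := by
    rw [hsLE_iff_rowLen_le] at h ⊢
    simp only [rowLen_removeFirstRow]
    exact ⟨h.2, fun i ↦ h.1 (i + 1)⟩

end FirstRow

theorem hstrip_nerve_H2_trivial_general {G : Type*} [CommGroup G]
    (a : YoungDiagram → YoungDiagram → YoungDiagram → G)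
    (hcoc : ∀ ρ ν μ lam : YoungDiagram,
      ρ.hsLE ν → ρ.hsLE μ → ρ.hsLE lam → ν.hsLE μ → ν.hsLE lam → μ.hsLE lam →
        a ν μ lam * a ρ ν lam = a ρ μ lam * a ρ ν μ) :
    ∃ b : YoungDiagram → YoungDiagram → G,
      ∀ ν μ lam : YoungDiagram, ν.hsLE μ → ν.hsLE lam → μ.hsLE lam →
        a ν μ lam = b μ lam * (b ν lam)⁻¹ * b ν μ :=
  IsTwoCocycle.exists_eq_twoCoboundary hcoc isInterlacing_removeFirstRow
    eventually_iterate_removeFirstRow_eq_bot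

/-- Every 2-cocycle on the nerve of the set of partitions with the
horizontal-strip relation, with values in ℂ^×, is a coboundary: H² of the nerve is
trivial. -/
theorem hstrip_nerve_H2_trivial
    (a : YoungDiagram → YoungDiagram → YoungDiagram → ℂˣ)
    (hcoc : ∀ ρ ν μ lam : YoungDiagram,
      ρ.hsLE ν → ρ.hsLE μ → ρ.hsLE lam → ν.hsLE μ → ν.hsLE lam → μ.hsLE lam →
        a ν μ lam * a ρ ν lam = a ρ μ lam * a ρ ν μ) :
    ∃ b : YoungDiagram → YoungDiagram → ℂˣ,
      ∀ ν μ lam : YoungDiagram, ν.hsLE μ → ν.hsLE lam → μ.hsLE lam →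
        a ν μ lam = b μ lam * (b ν lam)⁻¹ * b ν μ :=
  hstrip_nerve_H2_trivial_general a hcoc
end

section
/- Fix a partition λ and let P be the set of partitions μ such that λ/μ is a vertical strip. Call a quadruple (μ, μ′, μ″, ν) of partitions a square if μ′ ≠ μ″, each of μ′ and μ″ is obtained from μ by removing a single box, ν is obtained from each of μ′ and μ″ by removing a single box, and μ/ν is a horizontal strip (of size 2). Then there exists a choice of signs s(μ, μ′) ∈ {±1}, one for each pair μ, μ′ ∈ P with μ′ obtained from μ by removing a single box, such that s(μ′,ν)·s(μ,μ′) = − s(μ″,ν)·s(μ,μ″) for every square (μ, μ′, μ″, ν) all of whose members lie in P. -/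
/-- `μ'` is obtained from `μ` by removing a single box. -/
def YoungDiagram.CoveredBy (μ μ' : YoungDiagram) : Prop :=
  μ' ≤ μ ∧ μ.card = μ'.card + 1

/-!
The signs are those of the simplicial boundary map: order the boxes linearly and let the removal of
a box `b` from `μ` have sign `(-1) ^ #{c ∈ μ | c < b}`. Both sides of a square remove the same two
boxes `b < c`, in opposite orders. Removing `c` first does not change the number of boxes below `b`,
while removing `b` first lowers the number of boxes below `c` by one, so the two products of signs
are opposite. Hence these signs work for all squares of the Young lattice at once.
-/

open Finset

section RemovalSign

variable {α : Type*} [LinearOrder α] {A B C D : Finset α} {b c : α}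

/-- The number of elements of `A` strictly below `b`, where `b` need not lie in `A`. -/
def numBelow (A : Finset α) (b : α) : ℕ := #{c ∈ A | c < b}

/-- The sign of passing from `A` to `B`. It is meant for `B = A.erase b`, where it is the incidence
number `(-1) ^ numBelow A b` of the simplicial boundary map; summing over `A \ B` makes it a total
function of the two sets. -/
def removalSign (A B : Finset α) : ℤ := (-1) ^ ∑ b ∈ A \ B, numBelow A b

lemma numBelow_erase_of_le (h : b ≤ c) : numBelow (A.erase c) b = numBelow A b := by
  rw [numBelow, filter_erase, erase_eq_of_notMem (by simp [h]), numBelow]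

lemma numBelow_erase_add_one (hc : c ∈ A) (h : c < b) :
    numBelow (A.erase c) b + 1 = numBelow A b := by
  rw [numBelow, filter_erase, card_erase_add_one (mem_filter.2 ⟨hc, h⟩), numBelow]

lemma removalSign_eq_or (A B : Finset α) : removalSign A B = 1 ∨ removalSign A B = -1 :=
  neg_one_pow_eq_or ℤ _

lemma removalSign_erase (hb : b ∈ A) : removalSign A (A.erase b) = (-1) ^ numBelow A b := by
  rw [removalSign, sdiff_erase_self hb, sum_singleton]

lemma removalSign_erase_erase_anticomm (hb : b ∈ A) (hc : c ∈ A) (hbc : b ≠ c) :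
    removalSign (A.erase b) ((A.erase b).erase c) * removalSign A (A.erase b) =
      -(removalSign (A.erase c) ((A.erase c).erase b) * removalSign A (A.erase c)) := by
  wlog hlt : b < c generalizing b c
  · rw [this hc hb hbc.symm (hbc.lt_or_gt.resolve_left hlt), neg_neg]
  rw [removalSign_erase hb, removalSign_erase hc,
    removalSign_erase (mem_erase.2 ⟨hbc.symm, hc⟩), removalSign_erase (mem_erase.2 ⟨hbc, hb⟩),
    numBelow_erase_of_le hlt.le, ← numBelow_erase_add_one hb hlt]
  ring

theorem removalSign_anticomm_of_covBy (hBA : B ⋖ A) (hCA : C ⋖ A) (hDB : D ⋖ B) (hDC : D ⋖ C)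
    (hBC : B ≠ C) :
    removalSign B D * removalSign A B = -(removalSign C D * removalSign A C) := by
  have hD : B ∩ C = D := hDB.wcovBy.inf_eq hDC.wcovBy hBC
  obtain ⟨b, hb, rfl⟩ := hBA.exists_finset_erase
  obtain ⟨c, hc, rfl⟩ := hCA.exists_finset_erase
  have hbc : b ≠ c := fun h => hBC (congrArg A.erase h)
  have hDb : D = (A.erase b).erase c := by
    rw [← hD, inter_erase, inter_eq_left.2 (erase_subset b A)]
  have hDc : D = (A.erase c).erase b := hDb.trans erase_right_comm
  simpa only [← hDb, ← hDc] using removalSign_erase_erase_anticomm hb hc hbc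

end RemovalSign

/-- The boxes of a Young diagram, ordered lexicographically: row by row from the top, and from left
to right within a row. The sign construction works for any linear order on the boxes. -/
def lexCells (μ : YoungDiagram) : Finset (ℕ ×ₗ ℕ) := μ.cells.map toLex.toEmbedding

lemma lexCells_injective : Function.Injective lexCells :=
  fun _ _ h => YoungDiagram.ext (map_injective _ h)

lemma lexCells_covBy_lexCells {μ μ' : YoungDiagram} (h : μ.CoveredBy μ') :
    lexCells μ' ⋖ lexCells μ := by
  obtain ⟨hle, hcard⟩ := h
  have hsub : lexCells μ' ⊆ lexCells μ := map_subset_map.2 (YoungDiagram.cells_subset_iff.2 hle)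
  have hcard' : #(lexCells μ) = #(lexCells μ') + 1 := by simpa only [lexCells, card_map] using hcard
  refine covBy_iff_card_sdiff_eq_one.2 ⟨hsub, ?_⟩
  rw [card_sdiff_of_subset hsub, hcard', Nat.add_sub_cancel_left]

theorem vstrip_square_signs_general :
    ∃ s : YoungDiagram → YoungDiagram → ℤ,
      (∀ μ μ' : YoungDiagram, s μ μ' = 1 ∨ s μ μ' = -1) ∧
      (∀ μ μ' μ'' ν : YoungDiagram, μ' ≠ μ'' → μ.CoveredBy μ' → μ.CoveredBy μ'' →
        μ'.CoveredBy ν → μ''.CoveredBy ν →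
        s μ' ν * s μ μ' = -(s μ'' ν * s μ μ'')) :=
  ⟨fun μ μ' => removalSign (lexCells μ) (lexCells μ'), fun _ _ => removalSign_eq_or _ _,
    fun _ _ _ _ hne h' h'' hν' hν'' =>
      removalSign_anticomm_of_covBy (lexCells_covBy_lexCells h') (lexCells_covBy_lexCells h'')
        (lexCells_covBy_lexCells hν') (lexCells_covBy_lexCells hν'') (lexCells_injective.ne hne)⟩

/-- Fix a partition λ and let P be the set of partitions μ with λ/μ a
vertical strip.  There is a choice of signs s(μ,μ') for single-box removals within P such
that `s(μ',ν)·s(μ,μ') = − s(μ″,ν)·s(μ,μ″)` for every square (μ, μ', μ″, ν) inside P. -/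
theorem vstrip_square_signs (lam : YoungDiagram) :
    ∃ s : YoungDiagram → YoungDiagram → ℤ,
      (∀ μ μ' : YoungDiagram, lam.IsVStrip μ → lam.IsVStrip μ' → μ.CoveredBy μ' →
        s μ μ' = 1 ∨ s μ μ' = -1) ∧
      (∀ μ μ' μ'' ν : YoungDiagram,
        lam.IsVStrip μ → lam.IsVStrip μ' → lam.IsVStrip μ'' → lam.IsVStrip ν →
        μ' ≠ μ'' → μ.CoveredBy μ' → μ.CoveredBy μ'' →
        μ'.CoveredBy ν → μ''.CoveredBy ν → μ.IsHStrip ν →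
        s μ' ν * s μ μ' = -(s μ'' ν * s μ μ'')) := by
  obtain ⟨s, hsign, hsquare⟩ := vstrip_square_signs_general
  exact ⟨s, fun μ μ' _ _ _ => hsign μ μ', fun μ μ' μ'' ν _ _ _ _ hne h' h'' hν' hν'' _ =>
    hsquare μ μ' μ'' ν hne h' h'' hν' hν''⟩
end

section
/- Let ≤ be the horizontal-strip relation on partitions: μ ≤ λ iff μ ⊆ λ and λ/μ is a horizontal strip. If f is a bijection from the set of all partitions to itself such that μ ≤ λ if and only if f(μ) ≤ f(λ), then f is the identity. In other words, the set of partitions equipped with the horizontal-strip relation has no nontrivial automorphisms. -/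
/-!
An automorphism fixes `⊥`, the only partition with no other partition below it. The partitions
above `⊥` are those with at most one row; the relation orders them by size like `ℕ`, which is rigid.
The rest is an induction on the number of rows: a partition `lam` with at most `k + 1 ≥ 2` rows
is determined by the partitions with at most `k` rows below it. Indeed, removing the first row
leaves the smallest partition below `lam` and thereby pins down all the rows but the first, while
removing row `k + 1` instead gives a partition below `lam` that still shows the first row.
-/

namespace HorizontalStrip

open YoungDiagram

variable {lam μ : YoungDiagram} {k : ℕ}

theorem ext_rowLen (h : ∀ i, lam.rowLen i = μ.rowLen i) : lam = μ := by
  ext ⟨i, j⟩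
  rw [mem_cells, mem_cells, mem_iff_lt_rowLen, mem_iff_lt_rowLen, h]

theorem le_iff_rowLen_le : μ ≤ lam ↔ ∀ i, μ.rowLen i ≤ lam.rowLen i := by
  refine ⟨fun h i ↦ le_of_forall_lt fun j hj ↦ ?_, fun h ⟨i, j⟩ hij ↦ ?_⟩
  · exact mem_iff_lt_rowLen.mp (h (mem_iff_lt_rowLen.mpr hj))
  · exact mem_iff_lt_rowLen.mpr ((mem_iff_lt_rowLen.mp hij).trans_le (h i))

theorem hsLE_iff_rowLen_le :
    μ.hsLE lam ↔
      (∀ i, μ.rowLen i ≤ lam.rowLen i) ∧ ∀ i, lam.rowLen (i + 1) ≤ μ.rowLen i :=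
  and_congr_left' le_iff_rowLen_le

theorem rowLen_eq_zero_of_le {i j : ℕ} (hij : i ≤ j) (h : lam.rowLen i = 0) : lam.rowLen j = 0 :=
  Nat.eq_zero_of_le_zero (h ▸ lam.rowLen_anti i j hij)

theorem rowLen_colLen_zero (lam : YoungDiagram) : lam.rowLen (lam.colLen 0) = 0 := by
  by_contra h
  have hmem : (lam.colLen 0, 0) ∈ lam := mem_iff_lt_rowLen.mpr (Nat.pos_of_ne_zero h)
  exact lt_irrefl _ (mem_iff_lt_colLen.mp hmem)

theorem rowLen_bot (i : ℕ) : (⊥ : YoungDiagram).rowLen i = 0 := by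
  by_contra h
  exact notMem_bot (i, 0) (mem_iff_lt_rowLen.mpr (Nat.pos_of_ne_zero h))

/-- The partition with the parts `row 0, …, row (n - 1)`. -/
def ofAntitone (row : ℕ → ℕ) (hrow : Antitone row) (n : ℕ) : YoungDiagram where
  cells := {c ∈ Finset.range n ×ˢ Finset.range (row 0) | c.2 < row c.1}
  isLowerSet := by
    rintro ⟨i, j⟩ ⟨i', j'⟩ ⟨hi : i' ≤ i, hj : j' ≤ j⟩ hc
    have row_le : row i ≤ row i' := hrow hi
    simp only [Finset.mem_coe, Finset.mem_filter, Finset.mem_product, Finset.mem_range] at hc ⊢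
    omega

theorem rowLen_ofAntitone (row : ℕ → ℕ) (hrow : Antitone row) (n i : ℕ) :
    (ofAntitone row hrow n).rowLen i = if i < n then row i else 0 := by
  refine eq_of_forall_lt_iff fun j ↦ ?_
  have row_le : row i ≤ row 0 := hrow i.zero_le
  have mem_iff : (i, j) ∈ ofAntitone row hrow n ↔ (i < n ∧ j < row 0) ∧ j < row i := by
    rw [← mem_cells]
    simp only [ofAntitone, Finset.mem_filter, Finset.mem_product, Finset.mem_range]
  rw [← mem_iff_lt_rowLen, mem_iff]
  split_ifs <;> omega

/-- The partition with the single part `n`, empty for `n = 0`. -/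
def singleRow (n : ℕ) : YoungDiagram :=
  ofAntitone (fun _ ↦ n) antitone_const 1

theorem rowLen_singleRow_zero (n : ℕ) : (singleRow n).rowLen 0 = n :=
  rowLen_ofAntitone ..

theorem rowLen_singleRow_one (n : ℕ) : (singleRow n).rowLen 1 = 0 :=
  rowLen_ofAntitone ..

/-- The partition obtained by removing the first part. Among the partitions below `lam` in the
horizontal-strip relation it is the least for inclusion. -/
def tail (lam : YoungDiagram) : YoungDiagram :=
  ofAntitone (fun i ↦ lam.rowLen (i + 1)) (fun _ _ hij ↦ lam.rowLen_anti _ _ (by omega))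
    (lam.colLen 0)

theorem rowLen_tail (lam : YoungDiagram) (i : ℕ) : (tail lam).rowLen i = lam.rowLen (i + 1) :=
  (rowLen_ofAntitone ..).trans <| ite_eq_left_iff.mpr fun hi ↦
    (rowLen_eq_zero_of_le (by omega) (rowLen_colLen_zero lam)).symm

theorem tail_hsLE (lam : YoungDiagram) : (tail lam).hsLE lam := by
  simp only [hsLE_iff_rowLen_le, rowLen_tail]
  exact ⟨fun i ↦ lam.rowLen_anti _ _ i.le_succ, fun _ ↦ le_rfl⟩

theorem rowLen_succ_le_of_tail_hsLE (h : (tail lam).hsLE μ) (i : ℕ) :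
    μ.rowLen (i + 1) ≤ lam.rowLen (i + 1) :=
  rowLen_tail lam i ▸ (hsLE_iff_rowLen_le.mp h).2 i

theorem eq_bot_of_rowLen_zero_eq_zero (h : lam.rowLen 0 = 0) : lam = ⊥ :=
  ext_rowLen fun i ↦ by rw [rowLen_bot, rowLen_eq_zero_of_le i.zero_le h]

theorem eq_bot_of_tail_eq (h : tail lam = lam) : lam = ⊥ := by
  have rowLen_eq (i : ℕ) : lam.rowLen i = lam.rowLen 0 := by
    induction i with
    | zero => rfl
    | succ i ih => rw [← rowLen_tail, h, ih]
  exact eq_bot_of_rowLen_zero_eq_zero (rowLen_eq _ ▸ rowLen_colLen_zero lam)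

/-- The partition consisting of the first `k` parts of `lam`. -/
def takeRows (k : ℕ) (lam : YoungDiagram) : YoungDiagram :=
  ofAntitone lam.rowLen lam.rowLen_anti k

theorem rowLen_takeRows (k : ℕ) (lam : YoungDiagram) (i : ℕ) :
    (takeRows k lam).rowLen i = if i < k then lam.rowLen i else 0 :=
  rowLen_ofAntitone ..

theorem takeRows_hsLE (h : lam.rowLen (k + 1) = 0) : (takeRows k lam).hsLE lam := by
  simp only [hsLE_iff_rowLen_le, rowLen_takeRows]
  refine ⟨fun i ↦ by split_ifs <;> omega, fun i ↦ ?_⟩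
  split_ifs with hi
  · exact lam.rowLen_anti _ _ i.le_succ
  · exact (rowLen_eq_zero_of_le (by omega) h).le

theorem rowLen_le_of_takeRows_hsLE {i : ℕ} (hi : i < k) (h : (takeRows k lam).hsLE μ) :
    lam.rowLen i ≤ μ.rowLen i := by
  simpa only [rowLen_takeRows, if_pos hi] using (hsLE_iff_rowLen_le.mp h).1 i

theorem eq_of_forall_hsLE_iff (hk : 0 < k) (hlam : lam.rowLen (k + 1) = 0)
    (h : ∀ ν : YoungDiagram, ν.rowLen k = 0 → (ν.hsLE lam ↔ ν.hsLE μ)) : lam = μ := by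
  have tail_lam : (tail lam).hsLE μ :=
    (h _ (by rw [rowLen_tail, hlam])).mp (tail_hsLE lam)
  have hμ : μ.rowLen (k + 1) = 0 :=
    Nat.eq_zero_of_le_zero (hlam ▸ rowLen_succ_le_of_tail_hsLE tail_lam k)
  have tail_μ : (tail μ).hsLE lam :=
    (h _ (by rw [rowLen_tail, hμ])).mpr (tail_hsLE μ)
  have rowLen_takeRows_self (ν : YoungDiagram) : (takeRows k ν).rowLen k = 0 := by
    rw [rowLen_takeRows, if_neg (lt_irrefl k)]
  have take_lam : (takeRows k lam).hsLE μ :=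
    (h _ (rowLen_takeRows_self lam)).mp (takeRows_hsLE hlam)
  have take_μ : (takeRows k μ).hsLE lam :=
    (h _ (rowLen_takeRows_self μ)).mpr (takeRows_hsLE hμ)
  refine ext_rowLen fun i ↦ ?_
  cases i with
  | zero =>
    exact (rowLen_le_of_takeRows_hsLE hk take_lam).antisymm (rowLen_le_of_takeRows_hsLE hk take_μ)
  | succ i =>
    exact (rowLen_succ_le_of_tail_hsLE tail_μ i).antisymm (rowLen_succ_le_of_tail_hsLE tail_lam i)

theorem bot_hsLE_iff : hsLE ⊥ lam ↔ lam.rowLen 1 = 0 := by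
  simp only [hsLE_iff_rowLen_le, rowLen_bot, Nat.zero_le, implies_true, true_and, Nat.le_zero]
  exact ⟨fun h ↦ h 0, fun h i ↦ rowLen_eq_zero_of_le (by omega) h⟩

theorem hsLE_iff_rowLen_zero_le (hμ : μ.rowLen 1 = 0) (hlam : lam.rowLen 1 = 0) :
    μ.hsLE lam ↔ μ.rowLen 0 ≤ lam.rowLen 0 := by
  have rowLen_succ {ν : YoungDiagram} (hν : ν.rowLen 1 = 0) (i : ℕ) : ν.rowLen (i + 1) = 0 :=
    rowLen_eq_zero_of_le (by omega) hν
  rw [hsLE_iff_rowLen_le]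
  refine ⟨fun h ↦ h.1 0, fun h ↦ ⟨fun i ↦ ?_, fun i ↦ by simp only [rowLen_succ hlam, zero_le]⟩⟩
  cases i with
  | zero => exact h
  | succ i => simp only [rowLen_succ hμ, zero_le]

theorem eq_of_rowLen_zero_eq (hμ : μ.rowLen 1 = 0) (hlam : lam.rowLen 1 = 0)
    (h : μ.rowLen 0 = lam.rowLen 0) : μ = lam :=
  le_antisymm ((hsLE_iff_rowLen_zero_le hμ hlam).mpr h.le).1
    ((hsLE_iff_rowLen_zero_le hlam hμ).mpr h.ge).1

section Automorphism

variable (e : hsLE ≃r hsLE)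

theorem apply_bot : e ⊥ = ⊥ := by
  have below_bot : (e.symm (tail (e ⊥))).hsLE ⊥ := by
    rw [← e.map_rel_iff, e.apply_symm_apply]
    exact tail_hsLE _
  exact eq_bot_of_tail_eq (e.symm_apply_eq.mp (le_bot_iff.mp below_bot.1))

theorem rowLen_one_apply_eq_zero_iff : (e lam).rowLen 1 = 0 ↔ lam.rowLen 1 = 0 := by
  rw [← bot_hsLE_iff, ← bot_hsLE_iff, ← e.map_rel_iff (b := lam), apply_bot]

theorem rowLen_zero_le_apply (h : lam.rowLen 1 = 0) : lam.rowLen 0 ≤ (e lam).rowLen 0 := by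
  have strictMono : StrictMono fun n ↦ (e (singleRow n)).rowLen 0 := by
    have rowLen_one (n : ℕ) : (e (singleRow n)).rowLen 1 = 0 :=
      (rowLen_one_apply_eq_zero_iff e).mpr (rowLen_singleRow_one n)
    refine strictMono_of_le_iff_le fun m n ↦ ?_
    rw [← hsLE_iff_rowLen_zero_le (rowLen_one m) (rowLen_one n), e.map_rel_iff,
      hsLE_iff_rowLen_zero_le (rowLen_singleRow_one m) (rowLen_singleRow_one n),
      rowLen_singleRow_zero, rowLen_singleRow_zero]
  have eq_singleRow : singleRow (lam.rowLen 0) = lam :=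
    eq_of_rowLen_zero_eq (rowLen_singleRow_one _) h (rowLen_singleRow_zero _)
  simpa only [eq_singleRow] using strictMono.le_apply (x := lam.rowLen 0)

theorem apply_eq_self_of_rowLen_one_eq_zero (h : lam.rowLen 1 = 0) : e lam = lam := by
  have he : (e lam).rowLen 1 = 0 := (rowLen_one_apply_eq_zero_iff e).mpr h
  have apply_le : (e lam).rowLen 0 ≤ lam.rowLen 0 := by
    simpa only [e.symm_apply_apply] using rowLen_zero_le_apply e.symm he
  exact eq_of_rowLen_zero_eq he h (apply_le.antisymm (rowLen_zero_le_apply e h))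

theorem apply_eq_self (lam : YoungDiagram) : e lam = lam := by
  suffices fixed : ∀ k (ν : YoungDiagram), ν.rowLen (k + 1) = 0 → e ν = ν from
    fixed _ lam (rowLen_eq_zero_of_le (Nat.le_succ _) (rowLen_colLen_zero lam))
  intro k
  induction k with
  | zero => exact fun ν ↦ apply_eq_self_of_rowLen_one_eq_zero e
  | succ k ih =>
    intro ν hν
    refine (eq_of_forall_hsLE_iff k.succ_pos hν fun ρ hρ ↦ ?_).symm
    rw [← e.map_rel_iff, ih ρ hρ]

end Automorphism

end HorizontalStrip

/-- The set of partitions equipped with the horizontal-strip relation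
has no nontrivial automorphisms: any bijection of the set of partitions preserving and
reflecting the horizontal-strip relation is the identity. -/
theorem hstrip_relation_rigid (f : YoungDiagram → YoungDiagram)
    (hbij : Function.Bijective f)
    (hrel : ∀ μ lam : YoungDiagram, μ.hsLE lam ↔ (f μ).hsLE (f lam)) :
    f = id := by
  let e : YoungDiagram.hsLE ≃r YoungDiagram.hsLE :=
    ⟨Equiv.ofBijective f hbij, (hrel _ _).symm⟩
  exact funext (HorizontalStrip.apply_eq_self e)
end

section
/- Fix a partition λ. The set of partitions μ such that λ/μ is a vertical strip, partially ordered by containment, is order-isomorphic to the product of finite chains ∏_{i ≥ 1} {0, 1, …, m_i(λ)} equipped with the componentwise order (all but finitely many factors are one-element chains). -/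
/-!
Write `c_j(λ)` for the length of the `j`-th column of `λ`. Read off by columns, the condition that
`λ/μ` is a vertical strip says that `c_{j+1}(λ) ≤ c_j(μ) ≤ c_j(λ)` for every `j`. Conversely, any
sequence `d` with `c_{j+1}(λ) ≤ d_j ≤ c_j(λ)` is weakly decreasing, so it is the sequence of column
lengths of some `μ`: the columns of `μ` can be chosen independently of each other. Containment
compares column lengths one by one, and `c_j(λ) - c_{j+1}(λ) = m_j(λ)`.
-/

/-- The order isomorphism of dependent products induced by a family of order isomorphisms. -/
def orderIsoPiCongrRight {ι : Type*} {α β : ι → Type*} [∀ i, LE (α i)] [∀ i, LE (β i)]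
    (e : ∀ i, α i ≃o β i) : (∀ i, α i) ≃o (∀ i, β i) where
  toEquiv := Equiv.piCongrRight fun i => (e i).toEquiv
  map_rel_iff' := forall_congr' fun i => (e i).le_iff_le

/-- The interval `[a, b]` of natural numbers as the chain `{0, …, n}`, where `n = b - a` is given
by an equation free of truncated subtraction. -/
def natIccOrderIsoFin {a b n : ℕ} (h : a + n = b) : Set.Icc a b ≃o Fin (n + 1) where
  toFun x := ⟨x - a, by have := x.2.2; lia⟩
  invFun k := ⟨a + k, by simp, by lia⟩
  left_inv x := Subtype.ext (Nat.add_sub_cancel' x.2.1)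
  right_inv k := Fin.ext (Nat.add_sub_cancel_left _ _)
  map_rel_iff' {_ y} := tsub_le_tsub_iff_right y.2.1

section ColumnLengths

variable {μ ν : YoungDiagram}

theorem lt_colLen_iff_lt_rowLen {i j : ℕ} : i < μ.colLen j ↔ j < μ.rowLen i :=
  YoungDiagram.mem_iff_lt_colLen.symm.trans YoungDiagram.mem_iff_lt_rowLen

theorem colLen_le_iff_rowLen_le {i j : ℕ} : μ.colLen j ≤ i ↔ μ.rowLen i ≤ j :=
  le_iff_le_iff_lt_iff_lt.2 lt_colLen_iff_lt_rowLen

theorem colLen_rowLen_zero (μ : YoungDiagram) : μ.colLen (μ.rowLen 0) = 0 :=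
  Nat.le_zero.1 (colLen_le_iff_rowLen_le.2 le_rfl)

theorem le_iff_forall_colLen_le : μ ≤ ν ↔ ∀ j, μ.colLen j ≤ ν.colLen j := by
  simp only [← forall_lt_iff_le, ← YoungDiagram.mem_iff_lt_colLen]
  exact ⟨fun h j i hij => h hij, fun h ⟨i, j⟩ hij => h j hij⟩

theorem eq_of_forall_colLen_eq (h : ∀ j, μ.colLen j = ν.colLen j) : μ = ν :=
  le_antisymm (le_iff_forall_colLen_le.2 fun j => (h j).le)
    (le_iff_forall_colLen_le.2 fun j => (h j).ge)

theorem forall_rowLen_le_add_iff_forall_colLen_add_le (k : ℕ) :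
    (∀ i, ν.rowLen i ≤ μ.rowLen i + k) ↔ ∀ j, ν.colLen (j + k) ≤ μ.colLen j := by
  constructor
  · intro h j
    have hrow : μ.rowLen (μ.colLen j) ≤ j := colLen_le_iff_rowLen_le.1 le_rfl
    exact colLen_le_iff_rowLen_le.2 ((h _).trans (by gcongr))
  · intro h i
    have hcol : μ.colLen (μ.rowLen i) ≤ i := colLen_le_iff_rowLen_le.2 le_rfl
    exact colLen_le_iff_rowLen_le.1 ((h _).trans hcol)

theorem isVStrip_iff_forall_colLen_mem_Icc :
    ν.IsVStrip μ ↔ ∀ j, μ.colLen j ∈ Set.Icc (ν.colLen (j + 1)) (ν.colLen j) := by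
  simp only [Set.mem_Icc, forall_and, ← forall_rowLen_le_add_iff_forall_colLen_add_le,
    ← le_iff_forall_colLen_le]
  exact and_comm

theorem rowLen_eq_succ_iff_mem_Ico {i j : ℕ} :
    μ.rowLen i = j + 1 ↔ i ∈ Finset.Ico (μ.colLen (j + 1)) (μ.colLen j) := by
  rw [Finset.mem_Ico, colLen_le_iff_rowLen_le, lt_colLen_iff_lt_rowLen]
  lia

theorem colLen_succ_add_count_rowLens (μ : YoungDiagram) (j : ℕ) :
    μ.colLen (j + 1) + Multiset.count (j + 1) (μ.rowLens : Multiset ℕ) = μ.colLen j := by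
  have hrows : (Finset.range (μ.colLen 0)).filter (fun i => j + 1 = μ.rowLen i) =
      Finset.Ico (μ.colLen (j + 1)) (μ.colLen j) := by
    ext i
    have hcol : μ.colLen j ≤ μ.colLen 0 := μ.colLen_anti 0 j j.zero_le
    rw [Finset.mem_filter, eq_comm, rowLen_eq_succ_iff_mem_Ico, Finset.mem_range, Finset.mem_Ico]
    lia
  have hcount : Multiset.count (j + 1) (μ.rowLens : Multiset ℕ) =
      μ.colLen j - μ.colLen (j + 1) := by
    rw [← Nat.card_Ico, ← hrows]
    exact Multiset.count_map _ (Multiset.range (μ.colLen 0)) _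
  rw [hcount, Nat.add_sub_cancel' (μ.colLen_anti j (j + 1) j.le_succ)]

/-- The Young diagram with columns of lengths `d 0, …, d (n - 1)`, for a weakly decreasing sequence
`d`. If `d n = 0`, these are all the nonzero entries of `d`. -/
def youngDiagramOfColLens {d : ℕ → ℕ} (hd : Antitone d) (n : ℕ) : YoungDiagram where
  cells := (Finset.range (d 0) ×ˢ Finset.range n).filter fun c => c.1 < d c.2
  isLowerSet := by
    rintro ⟨i, j⟩ ⟨i', j'⟩ ⟨hi : i' ≤ i, hj : j' ≤ j⟩ hc
    simp only [Finset.coe_filter, Finset.mem_product, Finset.mem_range, Set.mem_ofPred_eq] at hc ⊢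
    have hcol : d j ≤ d j' := hd hj
    lia

theorem colLen_youngDiagramOfColLens {d : ℕ → ℕ} (hd : Antitone d) {n : ℕ} (hn : d n = 0) (j : ℕ) :
    (youngDiagramOfColLens hd n).colLen j = d j := by
  refine eq_of_forall_lt_iff fun i => ?_
  rw [← YoungDiagram.mem_iff_lt_colLen, ← YoungDiagram.mem_cells]
  simp only [youngDiagramOfColLens, Finset.mem_filter, Finset.mem_product, Finset.mem_range,
    and_iff_right_iff_imp]
  intro hi
  have hj : j < n := hd.reflect_lt (hn ▸ hi.pos)
  exact ⟨hi.trans_le (hd j.zero_le), hj⟩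

end ColumnLengths

section Interlacing

variable {lam : YoungDiagram} (f : (j : ℕ) → Set.Icc (lam.colLen (j + 1)) (lam.colLen j))

theorem antitone_of_interlacing_colLen : Antitone fun j => (f j : ℕ) :=
  antitone_nat_of_succ_le fun j => (f (j + 1)).2.2.trans (f j).2.1

theorem interlacing_colLen_rowLen_zero : (f (lam.rowLen 0) : ℕ) = 0 :=
  Nat.le_zero.1 ((f _).2.2.trans (colLen_rowLen_zero lam).le)

/-- The Young diagram `μ` whose column lengths are a given sequence interlacing those of `lam`; it
inverts the passage from a vertical strip `lam/μ` to the column lengths of `μ`. -/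
def youngDiagramOfInterlacing : YoungDiagram :=
  youngDiagramOfColLens (antitone_of_interlacing_colLen f) (lam.rowLen 0)

theorem colLen_youngDiagramOfInterlacing (j : ℕ) : (youngDiagramOfInterlacing f).colLen j = f j :=
  colLen_youngDiagramOfColLens _ (interlacing_colLen_rowLen_zero f) j

theorem isVStrip_youngDiagramOfInterlacing : lam.IsVStrip (youngDiagramOfInterlacing f) :=
  isVStrip_iff_forall_colLen_mem_Icc.2 fun j =>
    (colLen_youngDiagramOfInterlacing f j).symm ▸ (f j).2

end Interlacing

/-- A diagram `μ` with `lam/μ` a vertical strip, encoded by its column lengths: the `j`-th one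
ranges over an interval that does not depend on the other columns. -/
def vstripOrderIsoPiIcc (lam : YoungDiagram) :
    {μ : YoungDiagram // lam.IsVStrip μ} ≃o
      ((j : ℕ) → Set.Icc (lam.colLen (j + 1)) (lam.colLen j)) where
  toFun μ j := ⟨μ.1.colLen j, isVStrip_iff_forall_colLen_mem_Icc.1 μ.2 j⟩
  invFun f := ⟨youngDiagramOfInterlacing f, isVStrip_youngDiagramOfInterlacing f⟩
  left_inv _ := Subtype.ext (eq_of_forall_colLen_eq (colLen_youngDiagramOfInterlacing _))
  right_inv f := funext fun j => Subtype.ext (colLen_youngDiagramOfInterlacing f j)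
  map_rel_iff' := le_iff_forall_colLen_le.symm

/-- For a fixed partition λ, the set of partitions μ such that λ/μ is a
vertical strip, ordered by containment, is order-isomorphic to the product of chains
`∏_{i ≥ 1} {0, 1, …, m_i(λ)}` with the componentwise order.  Here `m_i(λ)`, the number of
parts of λ equal to i, is the multiplicity of i in the list of row lengths, and the index
`i : ℕ` of the product corresponds to the part size `i + 1`. -/
theorem vstrip_poset_iso_product_of_chains (lam : YoungDiagram) :
    Nonempty ({μ : YoungDiagram // lam.IsVStrip μ} ≃o
      ((i : ℕ) → Fin (Multiset.count (i + 1) (lam.rowLens : Multiset ℕ) + 1))) :=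
  ⟨(vstripOrderIsoPiIcc lam).trans <| orderIsoPiCongrRight fun j =>
    natIccOrderIsoFin (colLen_succ_add_count_rowLens lam j)⟩
end

section
/- Let N ≥ 1 and let ↓ denote the ℚ-linear map from ℚ[t_1,…,t_N] to ℚ[a_1,…,a_N] sending each monomial ∏_i t_i^{d_i} to ∏_i (a_i)_{d_i}, where (x)_d = x(x−1)⋯(x−d+1) is the falling factorial. Then for every polynomial p ∈ ℚ[t_1,…,t_N] and every partition μ, μ! times the coefficient of the monomial t^μ = ∏_i t_i^{m_i(μ)} in the formal power series p·exp(t_1 + t_2 + t_3 + ⋯) ∈ ℚ[[t_1, t_2, …]] equals (↓p)(m_1(μ), …, m_N(μ)), where μ! = ∏_i m_i(μ)!. -/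
/-- The multiplicity function of a partition (encoded as a Young diagram), as a monomial
exponent: the variable of index `i` (representing `t_{i+1}`) gets exponent `m_{i+1}(μ)`,
the number of parts of μ equal to `i+1`. -/
noncomputable def YoungDiagram.partMonomial (μ : YoungDiagram) : ℕ →₀ ℕ :=
  Finsupp.comapDomain Nat.succ (Multiset.toFinsupp (μ.rowLens : Multiset ℕ))
    (Nat.succ_injective.injOn)

/-- `μ! = ∏_i m_i(μ)!`, in terms of the multiplicity function. -/
noncomputable def partFactorial (d : ℕ →₀ ℕ) : ℚ :=
  ∏ i ∈ d.support, (Nat.factorial (d i) : ℚ)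

/-- The formal power series `exp(t_1 + t_2 + t_3 + ⋯)`: the coefficient of the monomial
with exponents e is `∏_i 1/(e_i)!`. -/
noncomputable def expTzero : MvPowerSeries ℕ ℚ :=
  fun e => ∏ i ∈ e.support, (1 / (Nat.factorial (e i) : ℚ))

/-- The umbral substitution `↓` sending `∏ tᵢ^{dᵢ}` to `∏ (aᵢ)_{dᵢ}`, with `(x)_d` the
falling factorial, extended ℚ-linearly; the target variable `aᵢ` is identified with the
source variable `tᵢ`. -/
noncomputable def downPoly {N : ℕ} (p : MvPolynomial (Fin N) ℚ) : MvPolynomial (Fin N) ℚ :=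
  ∑ d ∈ p.support, MvPolynomial.C (MvPolynomial.coeff d p) *
    ∏ i : Fin N, Polynomial.aeval (MvPolynomial.X i) (descPochhammer ℚ (d i))

/-!
Both sides are linear in `p`, so everything reduces to a monomial `t^d`.  Since the coefficient of
`t^e` in the exponential is `1 / e!`, the left side becomes `m! / (m - d)!` when `d ≤ m` and `0`
otherwise; in both cases this is the product of the falling factorials `(m_i)_{d_i}`.
-/

section

variable {σ R : Type*} [CommSemiring R]

theorem prod_factorial_eq_prod_factorial_tsub_mul_prod_descFactorial {d m : σ →₀ ℕ} (h : d ≤ m) :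
    (m.prod fun _ k => (k.factorial : R)) =
      ((m - d).prod fun _ k => (k.factorial : R)) *
        d.prod fun i k => ((m i).descFactorial k : R) := by
  rw [(m - d).prod_of_support_subset (Finsupp.support_mono tsub_le_self) _ (by simp),
    d.prod_of_support_subset (Finsupp.support_mono h) _ (by simp), Finsupp.prod,
    ← Finset.prod_mul_distrib]
  refine Finset.prod_congr rfl fun i _ => ?_
  rw [Finsupp.tsub_apply, ← Nat.cast_mul, Nat.factorial_mul_descFactorial (h i)]

theorem prod_descFactorial_eq_zero_of_not_le {d m : σ →₀ ℕ} (h : ¬d ≤ m) :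
    (d.prod fun i k => ((m i).descFactorial k : R)) = 0 := by
  obtain ⟨i, hi⟩ : ∃ i, m i < d i := by simpa [Finsupp.le_def] using h
  refine Finset.prod_eq_zero (i := i) (Finsupp.mem_support_iff.mpr (by omega)) ?_
  simp only [Nat.descFactorial_of_lt hi, Nat.cast_zero]

theorem coeff_coe_mul_eq_sum (p : MvPolynomial σ R) (φ : MvPowerSeries σ R) (m : σ →₀ ℕ) :
    MvPowerSeries.coeff m ((p : MvPowerSeries σ R) * φ) =
      ∑ d ∈ p.support, p.coeff d * MvPowerSeries.coeff m (MvPowerSeries.monomial d 1 * φ) := by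
  have coe_eq_sum : (p : MvPowerSeries σ R) =
      ∑ d ∈ p.support, MvPowerSeries.monomial d (p.coeff d) := by
    conv_lhs => rw [p.as_sum, ← MvPolynomial.coeToMvPowerSeries.ringHom_apply, map_sum]
    simp
  rw [coe_eq_sum, Finset.sum_mul, map_sum]
  refine Finset.sum_congr rfl fun d _ => ?_
  simp [MvPowerSeries.coeff_monomial_mul]

theorem sum_support_rename_of_injective {τ M : Type*} [AddCommMonoid M] {f : σ → τ}
    (hf : Function.Injective f) (p : MvPolynomial σ R) (g : (τ →₀ ℕ) → R → M) :
    ∑ e ∈ (MvPolynomial.rename f p).support, g e ((MvPolynomial.rename f p).coeff e) =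
      ∑ d ∈ p.support, g (d.mapDomain f) (p.coeff d) := by
  classical
  rw [MvPolynomial.support_rename_of_injective hf,
    Finset.sum_image (Finsupp.mapDomain_injective hf).injOn]
  simp only [MvPolynomial.coeff_rename_mapDomain f hf]

end

theorem partFactorial_ne_zero (m : ℕ →₀ ℕ) : partFactorial m ≠ 0 :=
  Finset.prod_ne_zero_iff.mpr fun i _ => Nat.cast_ne_zero.mpr (m i).factorial_ne_zero

theorem coeff_expTzero (m : ℕ →₀ ℕ) : MvPowerSeries.coeff m expTzero = (partFactorial m)⁻¹ := by
  simp [MvPowerSeries.coeff_apply, expTzero, partFactorial]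

theorem partFactorial_mul_coeff_monomial_mul_expTzero (d m : ℕ →₀ ℕ) :
    partFactorial m * MvPowerSeries.coeff m (MvPowerSeries.monomial d 1 * expTzero) =
      d.prod fun i k => ((m i).descFactorial k : ℚ) := by
  rw [MvPowerSeries.coeff_monomial_mul, one_mul]
  split_ifs with h
  · have factorial_eq : partFactorial m =
        partFactorial (m - d) * d.prod fun i k => ((m i).descFactorial k : ℚ) :=
      prod_factorial_eq_prod_factorial_tsub_mul_prod_descFactorial h
    rw [coeff_expTzero, factorial_eq, mul_comm, inv_mul_cancel_left₀ (partFactorial_ne_zero _)]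
  · rw [mul_zero, prod_descFactorial_eq_zero_of_not_le h]

theorem partFactorial_mul_coeff_coe_mul_expTzero (p : MvPolynomial ℕ ℚ) (m : ℕ →₀ ℕ) :
    partFactorial m * MvPowerSeries.coeff m ((p : MvPowerSeries ℕ ℚ) * expTzero) =
      ∑ d ∈ p.support, p.coeff d * d.prod fun i k => ((m i).descFactorial k : ℚ) := by
  rw [coeff_coe_mul_eq_sum, Finset.mul_sum]
  refine Finset.sum_congr rfl fun d _ => ?_
  rw [mul_left_comm, partFactorial_mul_coeff_monomial_mul_expTzero]

theorem eval_downPoly {N : ℕ} (p : MvPolynomial (Fin N) ℚ) (x : Fin N → ℚ) :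
    MvPolynomial.eval x (downPoly p) =
      ∑ d ∈ p.support, p.coeff d * d.prod fun i k => (descPochhammer ℚ k).eval (x i) := by
  have eval_aeval_X (i : Fin N) (q : Polynomial ℚ) :
      MvPolynomial.eval x (Polynomial.aeval (MvPolynomial.X i) q) = q.eval (x i) := by
    rw [← MvPolynomial.aeval_eq_eval, ← Polynomial.aeval_algHom_apply, MvPolynomial.aeval_X,
      Polynomial.coe_aeval_eq_eval]
  simp only [downPoly, map_sum, map_mul, map_prod, MvPolynomial.eval_C, eval_aeval_X]
  refine Finset.sum_congr rfl fun d _ => ?_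
  rw [d.prod_fintype _ (by simp)]

/-- For every polynomial p in the variables `t_1, …, t_N` and every
partition μ, μ! times the coefficient of `t^μ` in `p · exp(t_1 + t_2 + ⋯)` equals the
umbral substitution ↓p evaluated at `(m_1(μ), …, m_N(μ))`.  Variable `i : Fin N`
represents `t_{i+1}` (resp. `a_{i+1}`), and is identified with index `i : ℕ` of the power
series ring in countably many variables. -/
theorem umbral_substitution_coefficient (N : ℕ) (hN : 1 ≤ N)
    (p : MvPolynomial (Fin N) ℚ) (μ : YoungDiagram) :
    partFactorial μ.partMonomial *
        MvPowerSeries.coeff μ.partMonomial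
          ((MvPolynomial.rename (Fin.val) p : MvPowerSeries ℕ ℚ) * expTzero) =
      MvPolynomial.eval (fun i : Fin N => (μ.partMonomial i.val : ℚ)) (downPoly p) := by
  rw [partFactorial_mul_coeff_coe_mul_expTzero, eval_downPoly,
    sum_support_rename_of_injective Fin.val_injective p fun e c =>
      c * e.prod fun i k => ((μ.partMonomial i).descFactorial k : ℚ)]
  simp only [Finsupp.prod_mapDomain_index_inj Fin.val_injective,
    descPochhammer_eval_eq_descFactorial]
end

section
/- Let P_• be a bounded complex of FI-modules over ℂ in which every term is a finitely generated projective object of the category of FI-modules. Suppose that all homology of P_• is torsion, i.e. for every i there is an integer N_i such that H_i(P_•)(S) = 0 for every finite set S with |S| ≥ N_i. Then P_• is exact. -/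
open CategoryTheory

/-!
Let `Σ M` be the FI-module `S ↦ M (S ⊔ {*})` and let `D M` be the cokernel of the natural map
`M ⟶ Σ M`. A torsion FI-module on which this map is injective vanishes.

If `C` is a complex of FI-modules on which `M ⟶ Σ M` is injective, the long exact sequence of
`0 ⟶ C ⟶ Σ C ⟶ D C ⟶ 0` shows that torsion homology is inherited by `D C`, and that `H_j C` embeds
into `Σ (H_j C)` as soon as `H_{j+1} (D C) = 0`. So exactness of `C` in degree `j` follows from
exactness of `D C` in degree `j + 1`, and applying `D` repeatedly pushes the degree past the length
of the complex.

This can be iterated for retracts of free FI-modules: an injection `A ⟶ S ⊔ {*}` either misses `*`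
or is an injection `A ∖ {a} ⟶ S` extended by `a ↦ *`. Hence `Σ` of a free FI-module splits as the
module itself plus another free FI-module, which is its image under `D`.
-/

open Limits

universe u v

namespace FIObj

/-- The functor `S ↦ S ⊔ {*}`, with `Option.none` as the new point. -/
def addPoint : FIObj ⥤ FIObj where
  obj S := of (Option S.α)
  map f := ⟨Option.map f.1, Option.map_injective f.2⟩
  map_id _ := Subtype.ext Option.map_id
  map_comp f g := Subtype.ext (Option.map_comp_map f.1 g.1).symm

/-- The inclusions `S ⟶ S ⊔ {*}`. -/
def toAddPoint : 𝟭 FIObj ⟶ addPoint where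
  app S := ⟨some, Option.some_injective S.α⟩

theorem card_addPoint (S : FIObj) :
    Fintype.card (addPoint.obj S).α = Fintype.card S.α + 1 :=
  Fintype.card_option (α := S.α)

/-- The shift `Σ`: precomposition of a functor on FI with `S ↦ S ⊔ {*}`. -/
abbrev shift (𝓐 : Type u) [Category.{v} 𝓐] : (FIObj ⥤ 𝓐) ⥤ FIObj ⥤ 𝓐 :=
  (Functor.whiskeringLeft FIObj FIObj 𝓐).obj addPoint

/-- The natural map `M ⟶ Σ M` induced by the inclusions `S ⟶ S ⊔ {*}`. -/
def toShift (𝓐 : Type u) [Category.{v} 𝓐] : 𝟭 (FIObj ⥤ 𝓐) ⟶ shift 𝓐 where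
  app M :=
    { app S := M.map (toAddPoint.app S)
      naturality _ _ f := by
        simpa using congr(M.map $(toAddPoint.naturality f)) }

section Torsion

variable {𝓐 : Type u} [Category.{v} 𝓐]

/-- A torsion FI-object: it vanishes on all sufficiently large finite sets. -/
def IsTorsion (T : FIObj ⥤ 𝓐) : Prop :=
  ∃ N : ℕ, ∀ S : FIObj, N ≤ Fintype.card S.α → IsZero (T.obj S)

theorem IsTorsion.shift {T : FIObj ⥤ 𝓐} (hT : IsTorsion T) : IsTorsion ((shift 𝓐).obj T) := by
  obtain ⟨N, hN⟩ := hT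
  exact ⟨N, fun S hS => hN _ (by rw [card_addPoint]; omega)⟩

theorem IsTorsion.of_iso {T U : FIObj ⥤ 𝓐} (e : T ≅ U) (hT : IsTorsion T) : IsTorsion U := by
  obtain ⟨N, hN⟩ := hT
  exact ⟨N, fun S hS => (hN S hS).of_iso (e.app S).symm⟩

end Torsion

section Abelian

variable {𝓐 : Type u} [Category.{v} 𝓐] [Abelian 𝓐]

instance : (shift 𝓐).Additive where

variable (𝓐) in
/-- The derivative `D`: the cokernel of the natural map `M ⟶ Σ M`. -/
noncomputable def derivative : (FIObj ⥤ 𝓐) ⥤ FIObj ⥤ 𝓐 where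
  obj M := cokernel ((toShift 𝓐).app M)
  map φ := cokernel.map _ _ φ ((shift 𝓐).map φ) ((toShift 𝓐).naturality φ).symm
  map_comp φ ψ := by
    refine (cancel_epi (cokernel.π _)).1 ?_
    simp only [cokernel.map, Functor.map_comp, cokernel.π_desc, cokernel.π_desc_assoc,
      Category.assoc]

variable (𝓐) in
/-- The projection `Σ M ⟶ D M`. -/
noncomputable def toDerivative : shift 𝓐 ⟶ derivative 𝓐 where
  app M := cokernel.π ((toShift 𝓐).app M)
  naturality _ _ _ := (cokernel.π_desc _ _ _).symm

instance (M : FIObj ⥤ 𝓐) : Epi ((toDerivative 𝓐).app M) :=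
  inferInstanceAs (Epi (cokernel.π ((toShift 𝓐).app M)))

instance : (derivative 𝓐).Additive where
  map_add {M N φ ψ} := by
    refine (cancel_epi ((toDerivative 𝓐).app M)).1 ?_
    rw [Preadditive.comp_add, ← NatTrans.naturality, ← NatTrans.naturality, ← NatTrans.naturality,
      Functor.map_add, Preadditive.add_comp]

theorem IsTorsion.of_exact {E : ShortComplex (FIObj ⥤ 𝓐)} (hE : E.Exact)
    (h₁ : IsTorsion E.X₁) (h₃ : IsTorsion E.X₃) : IsTorsion E.X₂ := by
  obtain ⟨N₁, hN₁⟩ := h₁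
  obtain ⟨N₃, hN₃⟩ := h₃
  refine ⟨max N₁ N₃, fun S hS => (hE.map ((evaluation FIObj 𝓐).obj S)).isZero_of_both_zeros ?_ ?_⟩
  · exact (hN₁ S (le_of_max_le_left hS)).eq_zero_of_src _
  · exact (hN₃ S (le_of_max_le_right hS)).eq_zero_of_tgt _

theorem IsTorsion.isZero {T : FIObj ⥤ 𝓐} (hT : IsTorsion T) [Mono ((toShift 𝓐).app T)] :
    IsZero T := by
  obtain ⟨N, hN⟩ := hT
  have isZero_of_le (m : ℕ) : ∀ S : FIObj, N ≤ Fintype.card S.α + m → IsZero (T.obj S) := by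
    induction m with
    | zero => exact hN
    | succ m ih =>
      intro S hS
      have hzero : IsZero (T.obj (addPoint.obj S)) := ih _ (by rw [card_addPoint]; omega)
      exact hzero.of_mono (((toShift 𝓐).app T).app S)
  exact (Functor.isZero_iff T).2 fun S => isZero_of_le N S (by omega)

section Complex

variable {ι : Type*} {c : ComplexShape ι}

/-- Homology commutes with endofunctors of the category of FI-objects which preserve homology. -/
noncomputable def homologyMapIso (F : (FIObj ⥤ 𝓐) ⥤ FIObj ⥤ 𝓐) [F.Additive]
    [F.PreservesHomology] (C : HomologicalComplex (FIObj ⥤ 𝓐) c) (i : ι) :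
    ((F.mapHomologicalComplex c).obj C).homology i ≅ F.obj (C.homology i) :=
  (C.sc i).mapHomologyIso F

theorem toShift_app_homology (C : HomologicalComplex (FIObj ⥤ 𝓐) c) (i : ι) :
    (toShift 𝓐).app (C.homology i) =
      (homologyMapIso (𝟭 _) C i).inv ≫
        HomologicalComplex.homologyMap ((NatTrans.mapHomologicalComplex (toShift 𝓐) c).app C) i ≫
          (homologyMapIso (shift 𝓐) C i).hom :=
  NatTrans.app_homology (toShift 𝓐) (C.sc i)

/-- The sequence of complexes `C ⟶ Σ C ⟶ D C`. -/
noncomputable def derivativeShortComplex (C : HomologicalComplex (FIObj ⥤ 𝓐) c) :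
    ShortComplex (HomologicalComplex (FIObj ⥤ 𝓐) c) where
  f := (NatTrans.mapHomologicalComplex (toShift 𝓐) c).app C
  g := (NatTrans.mapHomologicalComplex (toDerivative 𝓐) c).app C
  zero := by
    ext i : 1
    exact cokernel.condition _

theorem derivativeShortComplex_shortExact {C : HomologicalComplex (FIObj ⥤ 𝓐) c}
    (hC : ∀ i, Mono ((toShift 𝓐).app (C.X i))) : (derivativeShortComplex C).ShortExact :=
  HomologicalComplex.shortExact_of_degreewise_shortExact _ fun i =>
    { exact := ShortComplex.exact_cokernel ((toShift 𝓐).app (C.X i))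
      mono_f := hC i
      epi_g := inferInstanceAs (Epi ((toDerivative 𝓐).app (C.X i))) }

theorem isTorsion_homology_derivative {C : HomologicalComplex (FIObj ⥤ 𝓐) c}
    (hC : ∀ k, Mono ((toShift 𝓐).app (C.X k))) {i j : ι} (hij : c.Rel i j)
    (hi : IsTorsion (C.homology i)) (hj : IsTorsion (C.homology j)) :
    IsTorsion ((((derivative 𝓐).mapHomologicalComplex c).obj C).homology i) :=
  .of_exact ((derivativeShortComplex_shortExact hC).homology_exact₃ i j hij)
    (hi.shift.of_iso (homologyMapIso (shift 𝓐) C i).symm)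
    (hj.of_iso (homologyMapIso (𝟭 _) C j).symm)

theorem exactAt_of_exactAt_derivative {C : HomologicalComplex (FIObj ⥤ 𝓐) c}
    (hC : ∀ k, Mono ((toShift 𝓐).app (C.X k))) {i j : ι} (hij : c.Rel i j)
    (hj : IsTorsion (C.homology j))
    (hD : (((derivative 𝓐).mapHomologicalComplex c).obj C).ExactAt i) : C.ExactAt j := by
  have : Mono (HomologicalComplex.homologyMap
      ((NatTrans.mapHomologicalComplex (toShift 𝓐) c).app C) j) :=
    ((derivativeShortComplex_shortExact hC).homology_exact₁ i j hij).mono_g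
      (hD.isZero_homology.eq_zero_of_src _)
  have : Mono ((toShift 𝓐).app (C.homology j)) := by
    rw [toShift_app_homology]
    infer_instance
  exact (C.exactAt_iff_isZero_homology j).2 hj.isZero

end Complex

theorem exactAt_of_isTorsion_homology (P : ObjectProperty (FIObj ⥤ 𝓐))
    (mono_toShift : ∀ M, P M → Mono ((toShift 𝓐).app M))
    (derivative_mem : ∀ M, P M → P ((derivative 𝓐).obj M))
    {b : ℕ} {C : ChainComplex (FIObj ⥤ 𝓐) ℕ} (hP : ∀ i, P (C.X i))
    (hb : ∀ i, b < i → IsZero (C.X i)) {j : ℕ} (hj : ∀ i, j ≤ i → IsTorsion (C.homology i)) :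
    C.ExactAt j := by
  suffices ∀ (m : ℕ) (C : ChainComplex (FIObj ⥤ 𝓐) ℕ) (j : ℕ), b < j + m → (∀ i, P (C.X i)) →
      (∀ i, b < i → IsZero (C.X i)) → (∀ i, j ≤ i → IsTorsion (C.homology i)) → C.ExactAt j from
    this (b + 1) C j (by omega) hP hb hj
  intro m
  induction m with
  | zero => exact fun C j hbj _ hb _ => ShortComplex.exact_of_isZero_X₂ _ (hb j hbj)
  | succ m ih =>
    intro C j hbj hP hb hj
    have hC (i : ℕ) : Mono ((toShift 𝓐).app (C.X i)) := mono_toShift _ (hP i)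
    refine exactAt_of_exactAt_derivative hC (i := j + 1) rfl (hj j le_rfl)
      (ih _ (j + 1) (by omega) (fun i => derivative_mem _ (hP i))
        (fun i hi => (derivative 𝓐).map_isZero (hb i hi)) fun i hi => ?_)
    obtain ⟨k, rfl⟩ := Nat.exists_eq_add_of_le' hi
    exact isTorsion_homology_derivative hC (j := k + j) rfl (hj _ (by omega)) (hj _ (by omega))

end Abelian

section DeletePoint

variable {A S T : FIObj}

/-- A bijection is an isomorphism of FI. -/
def isoOfEquiv (e : S.α ≃ T.α) : S ≅ T where
  hom := ⟨e, e.injective⟩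
  inv := ⟨e.symm, e.symm.injective⟩
  hom_inv_id := Subtype.ext e.symm_comp_self
  inv_hom_id := Subtype.ext e.self_comp_symm

theorem exists_comp_toAddPoint_eq {h : A ⟶ addPoint.obj S} (hh : ∀ x, h.1 x ≠ none) :
    ∃ g : A ⟶ S, g ≫ toAddPoint.app S = h := by
  choose g hg using fun x => Option.ne_none_iff_exists'.1 (hh x)
  exact ⟨⟨g, fun x y hxy => h.2 (by rw [hg, hg, hxy])⟩, Subtype.ext (funext fun x => (hg x).symm)⟩

theorem exists_addPoint_map_eq {h : addPoint.obj A ⟶ addPoint.obj S} (hh : h.1 none = none) :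
    ∃ g : A ⟶ S, addPoint.map g = h := by
  have ne_none (x : A.α) : h.1 (some x) ≠ none := fun hx =>
    Option.some_ne_none x (h.2 (hx.trans hh.symm))
  obtain ⟨g, hg⟩ := exists_comp_toAddPoint_eq (h := toAddPoint.app A ≫ h) ne_none
  refine ⟨g, Subtype.ext (funext fun x => ?_)⟩
  cases x with
  | none => exact hh.symm
  | some x => exact congrFun (congrArg Subtype.val hg) x

instance : addPoint.Faithful where
  map_injective hfg := Subtype.ext (Option.map_injective' (congrArg Subtype.val hfg))

/-- The set `A ∖ {a}`. -/
noncomputable def deletePoint (A : FIObj) (a : A.α) : FIObj :=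
  open Classical in of {x : A.α // x ≠ a}

/-- The bijection `A ≃ (A ∖ {a}) ⊔ {*}` sending `a` to `*`. -/
noncomputable def isoAddPointDeletePoint (a : A.α) : A ≅ addPoint.obj (deletePoint A a) :=
  open Classical in isoOfEquiv (Equiv.optionSubtypeNe a).symm

theorem isoAddPointDeletePoint_hom_eq_none_iff {a x : A.α} :
    (isoAddPointDeletePoint a).hom.1 x = none ↔ x = a := by
  classical
  exact Equiv.symm_apply_eq (Equiv.optionSubtypeNe a)

variable {a : A.α}

/-- The extension of an injection `A ∖ {a} ⟶ S` to an injection `A ⟶ S ⊔ {*}` by `a ↦ *`. -/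
noncomputable def extendByNone (g : deletePoint A a ⟶ S) : A ⟶ addPoint.obj S :=
  (isoAddPointDeletePoint a).hom ≫ addPoint.map g

theorem extendByNone_eq_none_iff (g : deletePoint A a ⟶ S) {x : A.α} :
    (extendByNone g).1 x = none ↔ x = a :=
  Option.map_eq_none_iff.trans isoAddPointDeletePoint_hom_eq_none_iff

theorem extendByNone_comp (g : deletePoint A a ⟶ S) (f : S ⟶ T) :
    extendByNone (g ≫ f) = extendByNone g ≫ addPoint.map f := by
  rw [extendByNone, extendByNone, addPoint.map_comp, Category.assoc]

theorem extendByNone_injective :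
    Function.Injective (extendByNone : (deletePoint A a ⟶ S) → (A ⟶ addPoint.obj S)) :=
  fun _ _ hgh => addPoint.map_injective ((cancel_epi _).1 hgh)

theorem exists_extendByNone_eq {h : A ⟶ addPoint.obj S} (ha : h.1 a = none) :
    ∃ g : deletePoint A a ⟶ S, extendByNone g = h := by
  have inv_none : (isoAddPointDeletePoint a).inv.1 none = a := by
    classical
    exact Equiv.optionSubtypeNe_none a
  obtain ⟨g, hg⟩ := exists_addPoint_map_eq (h := (isoAddPointDeletePoint a).inv ≫ h)
    ((congrArg h.1 inv_none).trans ha)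
  exact ⟨g, (Iso.eq_inv_comp _).1 hg⟩

end DeletePoint

section Injections

/-- The FI-set `S ↦ ∐ᵢ Inj(Aᵢ, S)`, a disjoint union of representables. -/
def injections {I : Type u} (A : I → FIObj) : FIObj ⥤ Type u where
  obj S := Σ i, (A i ⟶ S)
  map f := ↾(Sigma.map id fun _ g => g ≫ f)

variable {I : Type u} (A : I → FIObj)

/-- The family of all the sets `Aᵢ ∖ {a}` with `a ∈ Aᵢ`. -/
noncomputable abbrev deletedPoints (p : Σ i, (A i).α) : FIObj :=
  deletePoint (A p.1) p.2

/-- Extension by `a ↦ *`, as a map of FI-sets `∐ Inj(Aᵢ ∖ {a}, S) ⟶ ∐ Inj(Aᵢ, S ⊔ {*})`. -/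
noncomputable def extendInjections :
    injections (deletedPoints A) ⟶ (shift (Type u)).obj (injections A) where
  app S := ↾fun q => ⟨q.1.1, extendByNone q.2⟩
  naturality S T f := by
    ext q
    exact Sigma.ext rfl (heq_of_eq (extendByNone_comp q.2 f))

theorem range_toShift_injections (S : FIObj) :
    Set.range (((toShift (Type u)).app (injections A)).app S) = {q | ∀ x, q.2.1 x ≠ none} := by
  ext ⟨i, h⟩
  constructor
  · rintro ⟨⟨j, g⟩, hg⟩
    obtain ⟨rfl, hg⟩ := Sigma.mk.inj_iff.1 hg
    obtain rfl := eq_of_heq hg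
    exact fun x => Option.some_ne_none _
  · intro hh
    obtain ⟨g, hg⟩ := exists_comp_toAddPoint_eq hh
    exact ⟨⟨i, g⟩, congrArg (Sigma.mk i) hg⟩

theorem range_extendInjections (S : FIObj) :
    Set.range ((extendInjections A).app S) = {q | ∃ x, q.2.1 x = none} := by
  ext ⟨i, h⟩
  constructor
  · rintro ⟨⟨⟨j, a⟩, g⟩, hg⟩
    obtain ⟨rfl, hg⟩ := Sigma.mk.inj_iff.1 hg
    obtain rfl := eq_of_heq hg
    exact ⟨a, (extendByNone_eq_none_iff g).2 rfl⟩
  · rintro ⟨a, ha⟩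
    obtain ⟨g, hg⟩ := exists_extendByNone_eq ha
    exact ⟨⟨⟨i, a⟩, g⟩, congrArg (Sigma.mk i) hg⟩

theorem toShift_injections_injective (S : FIObj) :
    Function.Injective (((toShift (Type u)).app (injections A)).app S) := by
  rintro ⟨i, g⟩ ⟨j, h⟩ hgh
  obtain ⟨rfl, hgh⟩ := Sigma.mk.inj_iff.1 hgh
  replace hgh : some ∘ g.1 = some ∘ h.1 := congrArg Subtype.val (eq_of_heq hgh)
  exact congrArg (Sigma.mk i) (Subtype.ext ((Option.some_injective S.α).comp_left hgh))

theorem extendInjections_injective (S : FIObj) :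
    Function.Injective ((extendInjections A).app S) := by
  rintro ⟨⟨i, a⟩, g⟩ ⟨⟨j, b⟩, h⟩ hgh
  obtain ⟨rfl, hgh⟩ := Sigma.mk.inj_iff.1 hgh
  replace hgh : extendByNone g = extendByNone h := eq_of_heq hgh
  obtain rfl : a = b := (extendByNone_eq_none_iff h).1
    (hgh ▸ (extendByNone_eq_none_iff g).2 rfl)
  rw [extendByNone_injective hgh]

theorem isCompl_range_toShift_extendInjections (S : FIObj) :
    IsCompl (Set.range (((toShift (Type u)).app (injections A)).app S))
      (Set.range ((extendInjections A).app S)) := by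
  rw [range_toShift_injections, range_extendInjections, ← eq_compl_iff_isCompl]
  ext q
  exact not_exists.symm

/-- The decomposition `Inj(A, S ⊔ {*}) = Inj(A, S) ⊔ ∐ₐ Inj(A ∖ {a}, S)`, for a family `A`. -/
noncomputable def isColimitShiftInjections :
    IsColimit (BinaryCofan.mk ((toShift (Type u)).app (injections A)) (extendInjections A)) :=
  evaluationJointlyReflectsColimits _ fun S =>
    (isColimitMapCoconeBinaryCofanEquiv ((evaluation FIObj (Type u)).obj S) _ _).symm <|
      ((Types.binaryCofan_isColimit_iff _).2 ⟨toShift_injections_injective A S,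
        extendInjections_injective A S, isCompl_range_toShift_extendInjections A S⟩).some

end Injections

section FreeModule

variable (R : Type u) [Ring R] {I : Type u} (A : I → FIObj)

/-- The free `R`-module on the values of an FI-set. -/
noncomputable abbrev linearization : (FIObj ⥤ Type u) ⥤ FIObj ⥤ ModuleCat.{u} R :=
  (Functor.whiskeringRight FIObj (Type u) (ModuleCat.{u} R)).obj (ModuleCat.free R)

/-- The free FI-module `S ↦ ⨁ᵢ R[Inj(Aᵢ, S)]`. -/
noncomputable abbrev freeModule : FIObj ⥤ ModuleCat.{u} R :=
  (linearization R).obj (injections A)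

/-- The shift of a free FI-module is the direct sum of itself and another free FI-module. -/
noncomputable def isColimitShiftFreeModule :
    IsColimit (BinaryCofan.mk ((toShift (ModuleCat.{u} R)).app (freeModule R A))
      ((linearization R).map (extendInjections A))) :=
  have := (ModuleCat.adj R).isLeftAdjoint
  mapIsColimitOfPreservesOfIsColimit (X := injections A) (linearization R) _ _
    (isColimitShiftInjections A)

instance mono_toShift_freeModule : Mono ((toShift (ModuleCat.{u} R)).app (freeModule R A)) :=
  inferInstanceAs (Mono (BinaryBicone.ofColimitCocone (isColimitShiftFreeModule R A)).inl)

/-- The derivative of `⨁ᵢ R[Inj(Aᵢ, -)]` is the sum of the `R[Inj(Aᵢ ∖ {a}, -)]` over `a ∈ Aᵢ`. -/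
noncomputable def derivativeFreeModuleIso :
    (derivative (ModuleCat.{u} R)).obj (freeModule R A) ≅ freeModule R (deletedPoints A) :=
  (colimit.isColimit _).coconePointUniqueUpToIso
    (BinaryBicone.isColimitInlCokernelCofork
      (binaryBiconeIsBilimitOfColimitCoconeOfIsColimit
        (isColimitShiftFreeModule R A)).isColimit)

/-- Being a direct summand of a free FI-module, possibly of infinite rank. -/
def IsRetractOfFree : ObjectProperty (FIObj ⥤ ModuleCat.{u} R) := fun M =>
  ∃ (I : Type u) (A : I → FIObj), Nonempty (Retract M (freeModule R A))

variable {R}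

theorem IsRetractOfFree.mono_toShift {M : FIObj ⥤ ModuleCat.{u} R} (hM : IsRetractOfFree R M) :
    Mono ((toShift (ModuleCat.{u} R)).app M) := by
  obtain ⟨I, A, ⟨r⟩⟩ := hM
  have : Mono (r.i ≫ (toShift _).app (freeModule R A)) := mono_comp _ _
  exact mono_of_mono_fac ((toShift _).naturality r.i).symm

theorem IsRetractOfFree.derivative {M : FIObj ⥤ ModuleCat.{u} R} (hM : IsRetractOfFree R M) :
    IsRetractOfFree R ((derivative (ModuleCat.{u} R)).obj M) := by
  obtain ⟨I, A, ⟨r⟩⟩ := hM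
  exact ⟨_, deletedPoints A, ⟨(r.map _).trans (.ofIso (derivativeFreeModuleIso R A))⟩⟩

/-- The family of finite sets indexing the tautological free cover of `M`: one copy of `{1, …, n}`
for each element of `M_n`. -/
def elementSets (M : FIObj ⥤ ModuleCat.{u} R) (p : Σ n : ℕ, M.obj (of (Fin n))) : FIObj :=
  of (Fin p.1)

/-- The maps `Inj({1, …, n}, S) ⟶ M S` given by the Yoneda lemma, for all `x ∈ M_n` at once. -/
def evaluateElements (M : FIObj ⥤ ModuleCat.{u} R) :
    injections (elementSets M) ⟶ M ⋙ forget (ModuleCat.{u} R) where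
  app S := ↾fun q => M.map q.2 q.1.2
  naturality S T f := by
    ext q
    exact congr($(M.map_comp q.2 f) q.1.2)

theorem evaluateElements_surjective (M : FIObj ⥤ ModuleCat.{u} R) (S : FIObj) :
    Function.Surjective ((evaluateElements M).app S) := by
  intro x
  let e : of (Fin (Fintype.card S.α)) ≅ S := isoOfEquiv (Fintype.equivFin S.α).symm
  refine ⟨⟨⟨Fintype.card S.α, M.map e.inv x⟩, e.hom⟩, ?_⟩
  exact congr($((M.mapIso e).inv_hom_id) x)

/-- The tautological cover of `M` by a free FI-module. -/
noncomputable def freeCover (M : FIObj ⥤ ModuleCat.{u} R) : freeModule R (elementSets M) ⟶ M :=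
  (((ModuleCat.adj R).whiskerRight FIObj).homEquiv _ M).symm (evaluateElements M)

theorem freeCover_freeMk (M : FIObj ⥤ ModuleCat.{u} R) (S : FIObj)
    (q : (injections (elementSets M)).obj S) :
    (freeCover M).app S (ModuleCat.freeMk q) = (evaluateElements M).app S q :=
  congr(($(Equiv.apply_symm_apply (((ModuleCat.adj R).whiskerRight FIObj).homEquiv _ M)
    (evaluateElements M))).app S q)

instance epi_freeCover (M : FIObj ⥤ ModuleCat.{u} R) : Epi (freeCover M) := by
  suffices ∀ S, Epi ((freeCover M).app S) from NatTrans.epi_of_epi_app _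
  refine fun S => (ModuleCat.epi_iff_surjective _).2 fun x => ?_
  obtain ⟨q, rfl⟩ := evaluateElements_surjective M S x
  exact ⟨ModuleCat.freeMk q, freeCover_freeMk M S q⟩

theorem isRetractOfFree_of_projective (M : FIObj ⥤ ModuleCat.{u} R) [Projective M] :
    IsRetractOfFree R M :=
  ⟨_, elementSets M, ⟨{ i := Projective.factorThru (𝟙 M) (freeCover M), r := freeCover M }⟩⟩

end FreeModule

section Pointwise

variable {R : Type u} [Ring R]

theorem isZero_homology_obj_iff {ι : Type*} {c : ComplexShape ι}
    (K : HomologicalComplex (FIObj ⥤ ModuleCat.{u} R) c) {i j k : ι}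
    (hi : c.prev j = i) (hk : c.next j = k) (S : FIObj) :
    IsZero ((K.homology j).obj S) ↔
      LinearMap.range ((K.d i j).app S).hom = LinearMap.ker ((K.d j k).app S).hom := by
  let ev := (evaluation FIObj (ModuleCat.{u} R)).obj S
  calc IsZero ((K.homology j).obj S)
    _ ↔ IsZero (ev.obj (K.sc' i j k).homology) :=
      (ev.mapIso (ShortComplex.homologyMapIso (K.isoSc' i j k hi hk))).isZero_iff
    _ ↔ ((K.sc' i j k).map ev).Exact :=
      ((K.sc' i j k).mapHomologyIso ev).isZero_iff.symm.trans
        (ShortComplex.exact_iff_isZero_homology _).symm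
    _ ↔ _ := ShortComplex.moduleCat_exact_iff_range_eq_ker _

variable {C : ℕ → FIObj ⥤ ModuleCat.{u} R} {d : ∀ i, C (i + 1) ⟶ C i}
  (hdd : ∀ i, d (i + 1) ≫ d i = 0) (S : FIObj)

theorem isZero_homology_succ_obj_iff (k : ℕ) :
    IsZero (((ChainComplex.of C d hdd).homology (k + 1)).obj S) ↔
      LinearMap.ker ((d k).app S).hom = LinearMap.range ((d (k + 1)).app S).hom := by
  have d_eq (j : ℕ) : (ChainComplex.of C d hdd).d (j + 1) j = d j := ChainComplex.of_d C d j
  rw [isZero_homology_obj_iff _ (ChainComplex.prev ℕ (k + 1)) (ChainComplex.next_nat_succ k),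
    d_eq, d_eq, eq_comm]

theorem isZero_homology_zero_obj_iff :
    IsZero (((ChainComplex.of C d hdd).homology 0).obj S) ↔ Function.Surjective ((d 0).app S) := by
  have d_eq : (ChainComplex.of C d hdd).d (0 + 1) 0 = d 0 := ChainComplex.of_d C d 0
  have ker_eq : LinearMap.ker (((ChainComplex.of C d hdd).d 0 0).app S).hom = ⊤ := by
    rw [HomologicalComplex.shape _ 0 0 (by simp)]
    exact LinearMap.ker_zero
  rw [isZero_homology_obj_iff _ (ChainComplex.prev ℕ 0) ChainComplex.next_nat_zero, d_eq, ker_eq]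
  exact LinearMap.range_eq_top

end Pointwise

theorem isTorsion_homology_chainComplex {R : Type u} [Ring R]
    {C : ℕ → FIObj ⥤ ModuleCat.{u} R} {d : ∀ i, C (i + 1) ⟶ C i}
    (hdd : ∀ i, d (i + 1) ≫ d i = 0)
    (htors : ∀ k : ℕ, ∃ N : ℕ, ∀ S : FIObj, N ≤ Fintype.card S.α →
      (∀ x ∈ LinearMap.ker ((d k).app S).hom, x ∈ LinearMap.range ((d (k + 1)).app S).hom))
    (htors0 : ∃ N : ℕ, ∀ S : FIObj, N ≤ Fintype.card S.α →
      Function.Surjective ((d 0).app S)) (i : ℕ) :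
    IsTorsion ((ChainComplex.of C d hdd).homology i) := by
  cases i with
  | zero =>
    obtain ⟨N, hN⟩ := htors0
    exact ⟨N, fun S hS => (isZero_homology_zero_obj_iff hdd S).2 (hN S hS)⟩
  | succ k =>
    obtain ⟨N, hN⟩ := htors k
    refine ⟨N, fun S hS => (isZero_homology_succ_obj_iff hdd S k).2 (le_antisymm (hN S hS) ?_)⟩
    rw [LinearMap.range_le_ker_iff]
    exact congr((($(hdd k)).app S).hom)

end FIObj

open FIObj in
theorem bounded_projective_complex_torsion_homology_exact_general {R : Type u} [Ring R]
    (C : ℕ → FIObj ⥤ ModuleCat.{u} R) (d : ∀ i, C (i + 1) ⟶ C i)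
    (hdd : ∀ i, d (i + 1) ≫ d i = 0)
    (hbdd : ∃ b : ℕ, ∀ i, b < i → ∀ (S : FIObj) (x : (C i).obj S), x = 0)
    (hproj : ∀ i, Projective (C i))
    (htors : ∀ k : ℕ, ∃ N : ℕ, ∀ S : FIObj, N ≤ Fintype.card S.α →
      (∀ x ∈ LinearMap.ker ((d k).app S).hom, x ∈ LinearMap.range ((d (k + 1)).app S).hom))
    (htors0 : ∃ N : ℕ, ∀ S : FIObj, N ≤ Fintype.card S.α →
      Function.Surjective ((d 0).app S)) :
    (∀ (k : ℕ) (S : FIObj),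
        LinearMap.ker ((d k).app S).hom = LinearMap.range ((d (k + 1)).app S).hom) ∧
      (∀ S : FIObj, Function.Surjective ((d 0).app S)) := by
  obtain ⟨b, hb⟩ := hbdd
  have isZero_term (i : ℕ) (hi : b < i) : IsZero (C i) :=
    (Functor.isZero_iff _).2 fun S => ModuleCat.isZero_iff_subsingleton.2
      (subsingleton_of_forall_eq 0 (hb i hi S))
  have isZero_homology (j : ℕ) (S : FIObj) :
      IsZero (((ChainComplex.of C d hdd).homology j).obj S) :=
    (exactAt_of_isTorsion_homology (IsRetractOfFree R)
      (fun _ hM => hM.mono_toShift) (fun _ hM => hM.derivative)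
      (fun i => isRetractOfFree_of_projective (C i)) isZero_term
      fun i _ => isTorsion_homology_chainComplex hdd htors htors0 i).isZero_homology.obj S
  exact ⟨fun k S => (isZero_homology_succ_obj_iff hdd S k).1 (isZero_homology (k + 1) S),
    fun S => (isZero_homology_zero_obj_iff hdd S).1 (isZero_homology 0 S)⟩

/-- A bounded complex of finitely generated projective FI-modules whose
homology is torsion (vanishes on all sufficiently large finite sets) is exact.  The complex
is written `⋯ → C (i+1) --d i--> C i → ⋯ → C 1 --d 0--> C 0`, extended by zero to the right;
it is bounded above by `b`. -/
theorem bounded_projective_complex_torsion_homology_exact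
    (C : ℕ → FIMod) (d : ∀ i, C (i + 1) ⟶ C i)
    (hdd : ∀ i, d (i + 1) ≫ d i = 0)
    (hbdd : ∃ b : ℕ, ∀ i, b < i → ∀ (S : FIObj) (x : (C i).obj S), x = 0)
    (hfg : ∀ i, FIMod.FG (C i)) (hproj : ∀ i, Projective (C i))
    (htors : ∀ k : ℕ, ∃ N : ℕ, ∀ S : FIObj, N ≤ Fintype.card S.α →
      (∀ x ∈ LinearMap.ker ((d k).app S).hom, x ∈ LinearMap.range ((d (k + 1)).app S).hom))
    (htors0 : ∃ N : ℕ, ∀ S : FIObj, N ≤ Fintype.card S.α →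
      Function.Surjective ((d 0).app S)) :
    (∀ (k : ℕ) (S : FIObj),
        LinearMap.ker ((d k).app S).hom = LinearMap.range ((d (k + 1)).app S).hom) ∧
      (∀ S : FIObj, Function.Surjective ((d 0).app S)) :=
  bounded_projective_complex_torsion_homology_exact_general C d hdd hbdd hproj htors htors0
end
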